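/- Let Ω_0, Ω_1 ⊆ ℝ^d be bounded open sets with equal positive Lebesgue measure, and let ε > 0. Then there exists a countable family {(Ω^n_·, X^n, φ^n, p^n)}_{n∈ℕ} of smooth Euler droplet solutions whose space–time domains Q_n = ⋃_{t∈[0,1]} Ω^n_t × {t} are pairwise disjoint (an Euler spray), such that: (i) the sets Ω^n_0 are pairwise disjoint, ⋃_n Ω^n_0 ⊆ Ω_0, and the Lebesgue measure of Ω_0 ∖ ⋃_n Ω^n_0 is zero; (ii) the target Ω_1^ε := ⋃_n Ω^n_1 satisfies |Ω_1^ε| = |Ω_1| and there is a coupling π of 1_{Ω_1} dx and 1_{Ω_1^ε} dx with |x − y| < ε for π-a.e. (x,y) (so d_∞(1_{Ω_1}, 1_{Ω_1^ε}) < ε); (iii) the total action 𝒜^ε = Σ_n ∫_0^1 ∫_{Ω^n_t} |∇φ^n(x,t)|² dx dt satisfies 𝒜^ε ≤ d_W(1_{Ω_0} dx, 1_{Ω_1} dx)² + ε. -/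

import Mathlib

open Set MeasureTheory
open scoped ENNReal

/-- A smooth solution of the Euler droplet equations: bounded open fluid domains
`Ω t ⊆ ℝ^d` for `t ∈ [0,1]`, a velocity potential `φ` and pressure `p` smooth on an open
neighborhood of the closure of the space-time domain `Q = ⋃_{t∈[0,1]} Ω t × {t}`, and a
Lagrangian flow map `X`, such that `X(·,0) = id`, `∂ₜX = ∇ₓφ(X,t)`, `X(Ω 0,t) = Ω t`,
`Δₓφ = 0` on `Ω t`, the Bernoulli equation `∂ₜφ + ½|∇ₓφ|² + p = 0` holds on `Ω t`, and
`p = 0` on `∂(Ω t)`. -/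
structure EulerDroplet (d : ℕ) where
  Ω : ℝ → Set (EuclideanSpace ℝ (Fin d))
  X : EuclideanSpace ℝ (Fin d) → ℝ → EuclideanSpace ℝ (Fin d)
  φ : EuclideanSpace ℝ (Fin d) → ℝ → ℝ
  p : EuclideanSpace ℝ (Fin d) → ℝ → ℝ
  isOpen_Ω : ∀ t ∈ Icc (0:ℝ) 1, IsOpen (Ω t)
  isBounded_Ω : ∀ t ∈ Icc (0:ℝ) 1, Bornology.IsBounded (Ω t)
  smooth : ∃ U : Set (EuclideanSpace ℝ (Fin d) × ℝ), IsOpen U ∧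
    closure (⋃ t ∈ Icc (0:ℝ) 1, (Ω t) ×ˢ ({t} : Set ℝ)) ⊆ U ∧
    ContDiffOn ℝ (⊤ : ℕ∞) (fun q : EuclideanSpace ℝ (Fin d) × ℝ => φ q.1 q.2) U ∧
    ContDiffOn ℝ (⊤ : ℕ∞) (fun q : EuclideanSpace ℝ (Fin d) × ℝ => p q.1 q.2) U
  flow_init : ∀ z ∈ Ω 0, X z 0 = z
  flow_deriv : ∀ z ∈ Ω 0, ∀ t ∈ Icc (0:ℝ) 1,
    HasDerivAt (X z) (gradient (fun y => φ y t) (X z t)) t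
  flow_image : ∀ t ∈ Icc (0:ℝ) 1, (fun z => X z t) '' (Ω 0) = Ω t
  harmonic : ∀ t ∈ Icc (0:ℝ) 1, ∀ x ∈ Ω t,
    (∑ j, fderiv ℝ
        (fun y => fderiv ℝ (fun y' => φ y' t) y (EuclideanSpace.single j (1:ℝ))) x
        (EuclideanSpace.single j (1:ℝ))) = 0
  bernoulli : ∀ t ∈ Icc (0:ℝ) 1, ∀ x ∈ Ω t,
    deriv (fun s => φ x s) t + (1/2) * ‖gradient (fun y => φ y t) x‖ ^ 2 + p x t = 0
  pressure_bc : ∀ t ∈ Icc (0:ℝ) 1, ∀ x ∈ frontier (Ω t), p x t = 0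

/-- The space-time domain of an Euler droplet solution. -/
def EulerDroplet.Q {d : ℕ} (D : EulerDroplet d) : Set (EuclideanSpace ℝ (Fin d) × ℝ) :=
  ⋃ t ∈ Icc (0:ℝ) 1, (D.Ω t) ×ˢ ({t} : Set ℝ)

/-- The squared quadratic Wasserstein cost between two measures on `ℝ^d`: the infimum
over couplings of the integral of `|x − y|²`. -/
noncomputable def W2sq {d : ℕ}
    (μ ν : Measure (EuclideanSpace ℝ (Fin d))) : ℝ≥0∞ :=
  sInf { C | ∃ π : Measure (EuclideanSpace ℝ (Fin d) × EuclideanSpace ℝ (Fin d)),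
    π.map Prod.fst = μ ∧ π.map Prod.snd = ν ∧
    C = ∫⁻ q, ENNReal.ofReal (‖q.1 - q.2‖ ^ 2) ∂π }

/-! By Brenier's theorem the optimal transport from `Ω₀` to the target is the gradient of a convex
function `ψ`. At almost every point `ψ` has a second-order expansion (Aleksandrov), and since the
target has density at most one, its Hessian `A` there has determinant at least one.

The interpolation maps `x ↦ (1 - t + tκ) x + t ∇ψ x` are injective even as multivalued maps, so the
images of disjoint sets stay disjoint. Near a point with Hessian `A` such a map is close to an
affine one which stretches the axes of a small ellipsoid linearly in time, and whose volume factor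
is at least one. An ellipsoid whose semi-axes follow a geodesic of the constraint of constant
volume is an exact solution of the droplet equations. Its semi-axes are convex functions of time,
hence lie below their chords, so the ellipsoid can be kept inside the image of its initial domain,
while its velocity differs by little from `∇ψ x - x`.

A Vitali exhaustion fills `Ω₀` with the initial domains of such droplets up to a null set. The term
`tκ` makes room for the errors of all approximations. -/

namespace EulerSpray

open Filter Topology Metric Module
open scoped NNReal RealInnerProductSpace Pointwise ContDiff

/-! ### Subgradients -/

section Subgradient

variable {E : Type*} [NormedAddCommGroup E] [InnerProductSpace ℝ E]
  {ψ : E → ℝ} {x y x' y' : E}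

/-- `y` is a subgradient of `ψ` at `x`: the affine function of slope `y` that agrees with `ψ` at `x`
minorizes `ψ` everywhere. A finite convex function is encoded below as a function that has a
subgradient at every point. -/
def IsSubgradient (ψ : E → ℝ) (x y : E) : Prop := ∀ z, ψ x + ⟪y, z - x⟫ ≤ ψ z

lemma IsSubgradient.inner_sub_nonneg (h : IsSubgradient ψ x y) (h' : IsSubgradient ψ x' y') :
    0 ≤ ⟪x - x', y - y'⟫ := by
  have hx := h x'
  have hx' := h' x
  rw [← neg_sub x x', inner_neg_right] at hx
  rw [inner_sub_right, real_inner_comm, real_inner_comm y' (x - x')]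
  linarith

lemma IsSubgradient.eq_gradient [CompleteSpace E] (h : IsSubgradient ψ x y)
    (hd : DifferentiableAt ℝ ψ x) : y = gradient ψ x := by
  have hmin : IsLocalMin (fun z => ψ z - ⟪y, z⟫) x := by
    refine Eventually.of_forall fun z => ?_
    have hz := h z
    rw [inner_sub_right] at hz
    linarith
  have hzero := hmin.hasFDerivAt_eq_zero
    (hd.hasGradientAt.hasFDerivAt.sub (innerSL ℝ y).hasFDerivAt)
  refine ext_inner_right ℝ fun v => ?_
  have hv := DFunLike.congr_fun hzero v
  simp only [sub_apply, InnerProductSpace.toDual_apply_apply,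
    innerSL_apply_apply, zero_apply] at hv
  linarith

lemma convexOn_of_exists_isSubgradient (hψ : ∀ x, ∃ y, IsSubgradient ψ x y) :
    ConvexOn ℝ univ ψ := by
  refine ⟨convex_univ, fun a _ b _ s t hs ht hst => ?_⟩
  obtain ⟨y, hy⟩ := hψ (s • a + t • b)
  have ha := mul_le_mul_of_nonneg_left (hy a) hs
  have hb := mul_le_mul_of_nonneg_left (hy b) ht
  have hcancel : s * ⟪y, a - (s • a + t • b)⟫ + t * ⟪y, b - (s • a + t • b)⟫ = 0 := by
    rw [← inner_smul_right, ← inner_smul_right, ← inner_add_right,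
      show s • (a - (s • a + t • b)) + t • (b - (s • a + t • b)) =
        (s • a + t • b) - (s + t) • (s • a + t • b) by module,
      hst, one_smul, sub_self, inner_zero_right]
  simp only [smul_eq_mul]
  have hsum : (s + t) * ψ (s • a + t • b) = ψ (s • a + t • b) := by rw [hst, one_mul]
  linarith

lemma continuous_of_exists_isSubgradient [FiniteDimensional ℝ E]
    (hψ : ∀ x, ∃ y, IsSubgradient ψ x y) : Continuous ψ :=
  continuousOn_univ.mp ((convexOn_of_exists_isSubgradient hψ).continuousOn isOpen_univ)

end Subgradient

/-! ### Convex conjugates of functions on a compact set -/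

section Conjugate

variable {E : Type*} [NormedAddCommGroup E] [InnerProductSpace ℝ E]
  {K : Set E} [CompactSpace K]

/-- The Legendre transform, on all of `E`, of a continuous function on a compact set `K`. -/
noncomputable def conjugate (u : C(K, ℝ)) (x : E) : ℝ := ⨆ y : K, (⟪(y : E), x⟫ - u y)

lemma inner_sub_le_conjugate (u : C(K, ℝ)) (x : E) (y : K) : ⟪(y : E), x⟫ - u y ≤ conjugate u x :=
  le_ciSup (isCompact_range (f := fun y : K => ⟪(y : E), x⟫ - u y) (by fun_prop)).bddAbove y

lemma isSubgradient_conjugate {u : C(K, ℝ)} {x : E} {y : K}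
    (hy : conjugate u x = ⟪(y : E), x⟫ - u y) : IsSubgradient (conjugate u) x y := fun z => by
  have hz := inner_sub_le_conjugate u z y
  rw [hy, inner_sub_right]
  linarith

variable [Nonempty K]

lemma exists_conjugate_eq (u : C(K, ℝ)) (x : E) :
    ∃ y : K, conjugate u x = ⟪(y : E), x⟫ - u y := by
  obtain ⟨y, -, hy⟩ := isCompact_univ.exists_isMaxOn univ_nonempty
    (f := fun y : K => ⟪(y : E), x⟫ - u y) (by fun_prop)
  exact ⟨y, le_antisymm (ciSup_le fun z => hy (mem_univ z)) (inner_sub_le_conjugate u x y)⟩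

lemma exists_isSubgradient_conjugate (u : C(K, ℝ)) (x : E) :
    ∃ y, IsSubgradient (conjugate u) x y :=
  (exists_conjugate_eq u x).imp' (↑) fun _ => isSubgradient_conjugate

lemma lipschitzWith_conjugate {R : ℝ≥0} (hR : ∀ y ∈ K, ‖y‖ ≤ R) (u : C(K, ℝ)) :
    LipschitzWith R (conjugate u) := by
  refine LipschitzWith.of_le_add_mul R fun x z => ?_
  obtain ⟨y, hy⟩ := exists_conjugate_eq u x
  have hz := inner_sub_le_conjugate u z y
  have hxz : ⟪(y : E), x - z⟫ ≤ R * dist x z := by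
    rw [dist_eq_norm]
    exact (real_inner_le_norm _ _).trans (by gcongr; exact hR y y.2)
  rw [inner_sub_right] at hxz
  linarith

variable (K) in
lemma exists_lipschitzWith_conjugate : ∃ R : ℝ≥0, ∀ u : C(K, ℝ), LipschitzWith R (conjugate u) := by
  obtain ⟨R, hR⟩ := (isCompact_iff_compactSpace.mpr ‹CompactSpace K›).isBounded.exists_norm_le
  exact ⟨R.toNNReal, lipschitzWith_conjugate fun y hy => (hR y hy).trans (Real.le_coe_toNNReal R)⟩

lemma continuous_conjugate (u : C(K, ℝ)) : Continuous (conjugate u) :=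
  have ⟨_, hR⟩ := exists_lipschitzWith_conjugate K
  (hR u).continuous

lemma conjugate_le_conjugate_add_norm_sub (u v : C(K, ℝ)) (x : E) :
    conjugate u x ≤ conjugate v x + ‖u - v‖ := by
  obtain ⟨y, hy⟩ := exists_conjugate_eq u x
  have hv := inner_sub_le_conjugate v x y
  have huv := neg_le_of_abs_le ((u - v).norm_coe_le_norm y)
  rw [ContinuousMap.sub_apply] at huv
  linarith

lemma abs_conjugate_sub_conjugate_le (u v : C(K, ℝ)) (x : E) :
    |conjugate u x - conjugate v x| ≤ ‖u - v‖ := by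
  have huv := conjugate_le_conjugate_add_norm_sub u v x
  have hvu := conjugate_le_conjugate_add_norm_sub v u x
  rw [norm_sub_rev] at hvu
  exact abs_sub_le_iff.mpr ⟨by linarith, by linarith⟩

lemma conjugate_add_const (u : C(K, ℝ)) (c : ℝ) (x : E) :
    conjugate (u + ContinuousMap.const _ c) x = conjugate u x - c := by
  simp only [conjugate, sub_eq_add_neg _ c,
    ciSup_add (isCompact_range (f := fun y : K => ⟪(y : E), x⟫ - u y) (by fun_prop)).bddAbove]
  congr! 2 with y
  simp only [ContinuousMap.add_apply, ContinuousMap.const_apply]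
  ring

/-- The conjugate as a function on the compact set `K` itself, so that it can be conjugated
again. -/
noncomputable def restrictedConjugate (u : C(K, ℝ)) : C(K, ℝ) :=
  ⟨fun x => conjugate u x, (continuous_conjugate u).comp continuous_subtype_val⟩

lemma restrictedConjugate_apply (u : C(K, ℝ)) (x : K) :
    restrictedConjugate u x = conjugate u x := rfl

lemma conjugate_restrictedConjugate_le (u : C(K, ℝ)) (y : K) :
    conjugate (restrictedConjugate u) y ≤ u y := by
  obtain ⟨x, hx⟩ := exists_conjugate_eq (restrictedConjugate u) y
  have hy := inner_sub_le_conjugate u x y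
  rw [hx, restrictedConjugate_apply, real_inner_comm]
  linarith

lemma isSubgradient_gradient_conjugate [CompleteSpace E] {u : C(K, ℝ)} {x : E}
    (hd : DifferentiableAt ℝ (conjugate u) x) :
    IsSubgradient (conjugate u) x (gradient (conjugate u) x) := by
  obtain ⟨y, hy⟩ := exists_isSubgradient_conjugate u x
  exact hy.eq_gradient hd ▸ hy

lemma inner_le_conjugate_add_conjugate_restrictedConjugate (u : C(K, ℝ)) (x : K) (y : E) :
    ⟪(x : E), y⟫ ≤ conjugate u x + conjugate (restrictedConjugate u) y := by
  have hy := inner_sub_le_conjugate (restrictedConjugate u) y x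
  rw [restrictedConjugate_apply] at hy
  linarith

lemma IsSubgradient.conjugate_add_conjugate_restrictedConjugate {u : C(K, ℝ)} {x : K} {y : E}
    (h : IsSubgradient (conjugate u) x y) :
    conjugate u x + conjugate (restrictedConjugate u) y = ⟪(x : E), y⟫ := by
  refine le_antisymm ?_ (inner_le_conjugate_add_conjugate_restrictedConjugate u x y)
  obtain ⟨z, hz⟩ := exists_conjugate_eq (restrictedConjugate u) y
  have hxz := h z
  rw [inner_sub_right, real_inner_comm, real_inner_comm (x : E)] at hxz
  rw [hz, restrictedConjugate_apply]
  linarith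

end Conjugate

/-! ### Existence of a Kantorovich potential -/

section KantorovichPotential

lemma isCompact_setOf_lipschitzWith {α : Type*} [PseudoMetricSpace α] [CompactSpace α] (o : α)
    (L : ℝ≥0) : IsCompact {u : C(α, ℝ) | u o = 0 ∧ LipschitzWith L u} := by
  let e := ContinuousMap.isometryEquivBoundedOfCompact α ℝ
  let A : Set (BoundedContinuousFunction α ℝ) := {u | u o = 0 ∧ LipschitzWith L u}
  have hA : IsCompact A := by
    refine BoundedContinuousFunction.arzela_ascoli₂ (closedBall 0 (L * diam (univ : Set α)))
      (isCompact_closedBall _ _) A ?_ ?_ ?_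
    · simp only [A, ofPred_and, lipschitzWith_iff_dist_le_mul, ofPred_forall]
      exact (isClosed_eq (by fun_prop) continuous_const).inter
        (isClosed_iInter fun x => isClosed_iInter fun y =>
          isClosed_le (by fun_prop) continuous_const)
    · rintro f x ⟨hfo, hf⟩
      rw [mem_closedBall, ← hfo]
      refine (hf.dist_le_mul x o).trans ?_
      gcongr
      exact dist_le_diam_of_mem isCompact_univ.isBounded (mem_univ x) (mem_univ o)
    · exact (LipschitzWith.uniformEquicontinuous (fun f : A => (f.1 : α → ℝ)) L
        fun f => f.2.2).equicontinuous
  have himage : {u : C(α, ℝ) | u o = 0 ∧ LipschitzWith L u} = e ⁻¹' A := rfl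
  rw [himage]
  exact e.toHomeomorph.isCompact_preimage.mpr hA

lemma integrable_of_continuous_of_compl_null {X F : Type*} [TopologicalSpace X] [T2Space X]
    [MeasurableSpace X] [BorelSpace X] [NormedAddCommGroup F] [SecondCountableTopologyEither X F]
    {μ : Measure X} [IsFiniteMeasure μ] {K : Set X} (hK : IsCompact K) (hμ : μ Kᶜ = 0) {f : X → F}
    (hf : Continuous f) : Integrable f μ := by
  rw [← Measure.restrict_eq_self_of_ae_mem (s := K) (μ := μ) (by rwa [ae_iff])]
  exact hf.continuousOn.integrableOn_compact hK

lemma continuous_integral_of_dist_le {X α : Type*} [PseudoMetricSpace X] [MeasurableSpace α]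
    {μ : Measure α} [IsFiniteMeasure μ] {Φ : X → α → ℝ} (hint : ∀ u, Integrable (Φ u) μ)
    (hdist : ∀ u v a, dist (Φ u a) (Φ v a) ≤ dist u v) : Continuous fun u => ∫ a, Φ u a ∂μ := by
  refine (LipschitzWith.of_dist_le_mul (K := (μ.real univ).toNNReal) fun u v => ?_).continuous
  rw [dist_eq_norm, ← integral_sub (hint u) (hint v), Real.coe_toNNReal _ measureReal_nonneg,
    mul_comm]
  exact norm_integral_le_of_norm_le_const (Eventually.of_forall fun a =>
    (dist_eq_norm _ _).symm.trans_le (hdist u v a))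

variable {E : Type*} [NormedAddCommGroup E] [InnerProductSpace ℝ E] [MeasurableSpace E]
  [BorelSpace E]
  {K : Set E} [CompactSpace K] {μ : Measure E} {ν : Measure K}

/-- The Kantorovich dual functional for the cost `-⟪x, y⟫`, one of the two potentials having been
eliminated by conjugation. -/
noncomputable def kantorovichDual (μ : Measure E) (ν : Measure K) (u : C(K, ℝ)) : ℝ :=
  ∫ x, conjugate u x ∂μ + ∫ y, u y ∂ν

variable [IsFiniteMeasure ν]

omit [InnerProductSpace ℝ E] in
lemma integrable_continuousMap (u : C(K, ℝ)) : Integrable u ν :=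
  integrable_of_continuous_of_compl_null isCompact_univ (by simp) u.continuous

variable [Nonempty K] [IsFiniteMeasure μ]

lemma integrable_conjugate (hμ : μ Kᶜ = 0) (u : C(K, ℝ)) : Integrable (conjugate u) μ :=
  integrable_of_continuous_of_compl_null (isCompact_iff_compactSpace.mpr ‹_›) hμ
    (continuous_conjugate u)

lemma kantorovichDual_add_const (hμ : μ Kᶜ = 0) (hmass : μ univ = ν univ) (u : C(K, ℝ)) (c : ℝ) :
    kantorovichDual μ ν (u + ContinuousMap.const _ c) = kantorovichDual μ ν u := by
  simp only [kantorovichDual, conjugate_add_const, ContinuousMap.add_apply,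
    ContinuousMap.const_apply]
  rw [integral_sub (integrable_conjugate hμ u) (integrable_const _),
    integral_add (integrable_continuousMap u) (integrable_const _)]
  simp only [integral_const, Measure.real, hmass]
  ring

lemma continuous_kantorovichDual (hμ : μ Kᶜ = 0) : Continuous (kantorovichDual μ ν) := by
  refine Continuous.add ?_ ?_
  · exact continuous_integral_of_dist_le (integrable_conjugate hμ) fun u v x => by
      simpa only [dist_eq_norm, Real.norm_eq_abs] using abs_conjugate_sub_conjugate_le u v x
  · exact continuous_integral_of_dist_le integrable_continuousMap fun u v y =>
      ContinuousMap.dist_apply_le_dist y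

lemma exists_forall_kantorovichDual_le (hμ : μ Kᶜ = 0) (hmass : μ univ = ν univ) :
    ∃ u : C(K, ℝ), ∀ v, kantorovichDual μ ν u ≤ kantorovichDual μ ν v := by
  obtain ⟨R, hR⟩ := exists_lipschitzWith_conjugate K
  let o : K := Classical.arbitrary K
  obtain ⟨u, -, hu⟩ := (isCompact_setOf_lipschitzWith o R).exists_isMinOn
    ⟨0, rfl, LipschitzWith.const' (0 : ℝ)⟩ (continuous_kantorovichDual (ν := ν) hμ).continuousOn
  refine ⟨u, fun v => ?_⟩
  -- Conjugating twice does not increase the functional and produces an `R`-Lipschitz potential,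
  -- which adding a constant then normalizes to vanish at `o`.
  set w := restrictedConjugate (restrictedConjugate v)
  have hw : LipschitzWith R (w + ContinuousMap.const K (-w o)) := by
    refine LipschitzWith.of_dist_le_mul fun x y => ?_
    simp only [ContinuousMap.add_apply, ContinuousMap.const_apply, dist_add_right]
    exact (hR (restrictedConjugate v)).dist_le_mul x y
  calc kantorovichDual μ ν u ≤ kantorovichDual μ ν (w + ContinuousMap.const K (-w o)) :=
        hu ⟨by simp, hw⟩
    _ = kantorovichDual μ ν w := kantorovichDual_add_const hμ hmass w _
    _ ≤ kantorovichDual μ ν v := by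
      refine add_le_add
        (integral_mono_ae (integrable_conjugate hμ w) (integrable_conjugate hμ v) ?_)
        (integral_mono (integrable_continuousMap w) (integrable_continuousMap v)
          (conjugate_restrictedConjugate_le v))
      have hK : ∀ᵐ x ∂μ, x ∈ K := by rwa [ae_iff]
      filter_upwards [hK] with x hx
      exact conjugate_restrictedConjugate_le (restrictedConjugate v) ⟨x, hx⟩

end KantorovichPotential

/-! ### Brenier's theorem -/

section Brenier

lemma tendsto_of_tendsto_comp_of_unique {X Y ι : Type*} [TopologicalSpace X] [CompactSpace X]
    [TopologicalSpace Y] [T2Space Y] {l : Filter ι} {f : X → Y} (hf : Continuous f) {a : X}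
    (ha : ∀ x, f x = f a → x = a) {g : ι → X} (hg : Tendsto (f ∘ g) l (𝓝 (f a))) :
    Tendsto g l (𝓝 a) := by
  refine tendsto_nhds_of_unique_mapClusterPt fun x hx => ha x ?_
  have hcluster : ClusterPt (f x) (𝓝 (f a)) :=
    (hx.continuousAt_comp hf.continuousAt).clusterPt.mono hg
  exact eq_of_nhds_neBot hcluster

/-- Complementary slackness: a transport map along which a pair of dual potentials is tight is
optimal. -/
lemma lintegral_cost_le_of_dual_eq {X Y : Type*} [MeasurableSpace X] [MeasurableSpace Y]
    {μ : Measure X} {T : X → Y} {c : X → Y → ℝ} {f : X → ℝ} {g : Y → ℝ} (hT : Measurable T)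
    (hf : Integrable f μ) (hg : Integrable g (μ.map T)) (hc : ∀ x y, 0 ≤ c x y)
    (hle : ∀ᵐ x ∂μ, ∀ y, f x + g y ≤ c x y) (heq : ∀ᵐ x ∂μ, f x + g (T x) = c x (T x))
    {π : Measure (X × Y)} (hfst : π.map Prod.fst = μ) (hsnd : π.map Prod.snd = μ.map T) :
    ∫⁻ x, ENNReal.ofReal (c x (T x)) ∂μ ≤ ∫⁻ q, ENNReal.ofReal (c q.1 q.2) ∂π := by
  have hgT : Integrable (fun x => g (T x)) μ := hg.comp_measurable hT
  have hf' : Integrable (fun q => f q.1) π := (hfst ▸ hf).comp_measurable measurable_fst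
  have hg' : Integrable (fun q => g q.2) π := (hsnd ▸ hg).comp_measurable measurable_snd
  have hsum : ∫ x, (f x + g (T x)) ∂μ = ∫ q, (f q.1 + g q.2) ∂π := by
    rw [integral_add hf hgT, integral_add hf' hg',
      ← integral_map hT.aemeasurable hg.aestronglyMeasurable, ← hsnd, ← hfst,
      integral_map measurable_fst.aemeasurable (hfst ▸ hf).aestronglyMeasurable,
      integral_map measurable_snd.aemeasurable (hsnd ▸ hg).aestronglyMeasurable]
  calc ∫⁻ x, ENNReal.ofReal (c x (T x)) ∂μ = ENNReal.ofReal (∫ x, c x (T x) ∂μ) :=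
        (ofReal_integral_eq_lintegral_ofReal ((hf.add hgT).congr heq)
          (Eventually.of_forall fun x => hc x (T x))).symm
    _ = ENNReal.ofReal (∫ q, (f q.1 + g q.2) ∂π) := by rw [← integral_congr_ae heq, hsum]
    _ ≤ ∫⁻ q, ENNReal.ofReal (f q.1 + g q.2) ∂π := by
        rw [integral_eq_lintegral_pos_part_sub_lintegral_neg_part
          (f := fun q : X × Y => f q.1 + g q.2) (hf'.add hg')]
        exact (ENNReal.ofReal_le_ofReal (sub_le_self _ ENNReal.toReal_nonneg)).trans
          ENNReal.ofReal_toReal_le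
    _ ≤ ∫⁻ q, ENNReal.ofReal (c q.1 q.2) ∂π := by
        refine lintegral_mono_ae ?_
        filter_upwards [ae_of_ae_map measurable_fst.aemeasurable (hfst ▸ hle)] with q hq
        exact ENNReal.ofReal_le_ofReal (hq q.2)

variable {E : Type*} [NormedAddCommGroup E] [InnerProductSpace ℝ E]
  {K : Set E} [CompactSpace K] [Nonempty K]

lemma norm_conjugate_quotient_le (u h : C(K, ℝ)) {s : ℝ} (hs : 0 < s) (x : E) :
    ‖s⁻¹ * (conjugate (u + s • h) x - conjugate u x)‖ ≤ ‖h‖ := by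
  have hle := abs_conjugate_sub_conjugate_le (u + s • h) u x
  rw [add_sub_cancel_left, norm_smul, Real.norm_of_nonneg hs.le] at hle
  rw [norm_mul, norm_inv, Real.norm_of_nonneg hs.le, Real.norm_eq_abs]
  exact (inv_mul_le_iff₀ hs).mpr hle

/-- The envelope theorem: at a point with a unique maximizer, only the explicit dependence of
`⟪y, x⟫ - (u + s h)(y)` on `s` contributes to the derivative of the supremum. -/
lemma tendsto_conjugate_quotient (u h : C(K, ℝ)) {x : E} {y : K}
    (hy : conjugate u x = ⟪(y : E), x⟫ - u y)
    (huniq : ∀ z : K, conjugate u x = ⟪(z : E), x⟫ - u z → z = y) :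
    Tendsto (fun s : ℝ => s⁻¹ * (conjugate (u + s • h) x - conjugate u x)) (𝓝[>] 0)
      (𝓝 (-h y)) := by
  choose m hm using fun s : ℝ => exists_conjugate_eq (u + s • h) x
  simp only [ContinuousMap.add_apply, ContinuousMap.smul_apply, smul_eq_mul] at hm
  have hlower (s : ℝ) : conjugate u x - s * h y ≤ conjugate (u + s • h) x := by
    have hle := inner_sub_le_conjugate (u + s • h) x y
    simp only [ContinuousMap.add_apply, ContinuousMap.smul_apply, smul_eq_mul] at hle
    linarith
  have hupper (s : ℝ) : conjugate (u + s • h) x ≤ conjugate u x - s * h (m s) := by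
    have hle := inner_sub_le_conjugate u x (m s)
    rw [hm s]
    linarith
  have hconj : Tendsto (fun s : ℝ => conjugate (u + s • h) x) (𝓝[>] 0) (𝓝 (conjugate u x)) := by
    refine tendsto_iff_dist_tendsto_zero.mpr (squeeze_zero (fun _ => dist_nonneg) (fun s =>
      (abs_conjugate_sub_conjugate_le (u + s • h) u x).trans_eq (congrArg norm
        (add_sub_cancel_left u (s • h)))) ?_)
    exact (Continuous.tendsto' (by fun_prop) 0 0 (by simp)).mono_left nhdsWithin_le_nhds
  have hprod : Tendsto (fun s : ℝ => s * h (m s)) (𝓝[>] 0) (𝓝 0) :=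
    (tendsto_id.mono_left nhdsWithin_le_nhds).zero_mul_isBoundedUnder_le
      ⟨‖h‖, eventually_map.mpr (Eventually.of_forall fun s => h.norm_coe_le_norm (m s))⟩
  have hmax : Tendsto m (𝓝[>] 0) (𝓝 y) := by
    refine tendsto_of_tendsto_comp_of_unique (f := fun z : K => ⟪(z : E), x⟫ - u z)
      (by fun_prop) (fun z hz => huniq z (hy.trans hz.symm)) ?_
    have hadd := hconj.add hprod
    rw [add_zero, hy] at hadd
    refine hadd.congr fun s => ?_
    rw [hm s, Function.comp_apply]
    ring
  refine tendsto_of_tendsto_of_tendsto_of_le_of_le' tendsto_const_nhds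
    ((h.continuous.tendsto y).comp hmax).neg ?_ ?_
  · filter_upwards [self_mem_nhdsWithin] with s hs
    rw [← div_eq_inv_mul, le_div_iff₀ hs]
    linarith [hlower s]
  · filter_upwards [self_mem_nhdsWithin] with s hs
    rw [← div_eq_inv_mul, div_le_iff₀ hs, Function.comp_apply]
    linarith [hupper s]

lemma tendsto_conjugate_quotient_gradient [CompleteSpace E] (u : C(K, ℝ)) (h : E → ℝ)
    (hh : Continuous h) {x : E} (hd : DifferentiableAt ℝ (conjugate u) x) :
    Tendsto (fun s : ℝ => s⁻¹ * (conjugate (u + s • ⟨fun y : K => h y, by fun_prop⟩) x -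
      conjugate u x)) (𝓝[>] 0) (𝓝 (-h (gradient (conjugate u) x))) := by
  obtain ⟨y, hy⟩ := exists_conjugate_eq u x
  have hgrad {z : K} (hz : conjugate u x = ⟪(z : E), x⟫ - u z) :
      (z : E) = gradient (conjugate u) x := (isSubgradient_conjugate hz).eq_gradient hd
  rw [← hgrad hy]
  exact tendsto_conjugate_quotient u _ hy fun z hz =>
    Subtype.ext ((hgrad hz).trans (hgrad hy).symm)

variable [MeasurableSpace E] [BorelSpace E]

lemma measurable_gradient [CompleteSpace E] (f : E → ℝ) : Measurable (gradient f) :=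
  (InnerProductSpace.toDual ℝ E).symm.continuous.measurable.comp (measurable_fderiv ℝ f)

section FirstVariation

variable [CompleteSpace E] {μ : Measure E} {ν : Measure K} [IsFiniteMeasure μ] [IsFiniteMeasure ν]
  {u : C(K, ℝ)}

lemma integral_comp_gradient_conjugate_le (hμ : μ Kᶜ = 0)
    (hu : ∀ v, kantorovichDual μ ν u ≤ kantorovichDual μ ν v)
    (hd : ∀ᵐ x ∂μ, DifferentiableAt ℝ (conjugate u) x) (h : BoundedContinuousFunction E ℝ) :
    ∫ x, h (gradient (conjugate u) x) ∂μ ≤ ∫ y : K, h y ∂ν := by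
  let k : C(K, ℝ) := ⟨fun y => h y, by fun_prop⟩
  have hlim : Tendsto (fun s : ℝ => ∫ x, s⁻¹ * (conjugate (u + s • k) x - conjugate u x) ∂μ)
      (𝓝[>] 0) (𝓝 (∫ x, -h (gradient (conjugate u) x) ∂μ)) := by
    refine tendsto_integral_filter_of_dominated_convergence (fun _ => ‖k‖) ?_ ?_
      (integrable_const _) ?_
    · refine Eventually.of_forall fun s => ?_
      exact (((integrable_conjugate hμ _).sub (integrable_conjugate hμ u)).const_mul
        s⁻¹).aestronglyMeasurable
    · filter_upwards [self_mem_nhdsWithin] with s hs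
      exact Eventually.of_forall (norm_conjugate_quotient_le u k hs)
    · filter_upwards [hd] with x hx
      exact tendsto_conjugate_quotient_gradient u h h.continuous hx
  have hge : ∀ᶠ s : ℝ in 𝓝[>] 0,
      -∫ y, k y ∂ν ≤ ∫ x, s⁻¹ * (conjugate (u + s • k) x - conjugate u x) ∂μ := by
    filter_upwards [self_mem_nhdsWithin] with s hs
    have hmin := hu (u + s • k)
    simp only [kantorovichDual, ContinuousMap.add_apply, ContinuousMap.smul_apply,
      smul_eq_mul] at hmin
    rw [integral_add (integrable_continuousMap u) ((integrable_continuousMap k).const_mul s),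
      integral_const_mul] at hmin
    rw [integral_const_mul, integral_sub (integrable_conjugate hμ _) (integrable_conjugate hμ u),
      ← div_eq_inv_mul, le_div_iff₀ hs]
    linarith
  have hineq := ge_of_tendsto hlim hge
  rw [integral_neg] at hineq
  exact neg_le_neg_iff.mp hineq

lemma map_gradient_conjugate (hμ : μ Kᶜ = 0)
    (hu : ∀ v, kantorovichDual μ ν u ≤ kantorovichDual μ ν v)
    (hd : ∀ᵐ x ∂μ, DifferentiableAt ℝ (conjugate u) x) :
    μ.map (gradient (conjugate u)) = ν.map (↑) := by
  refine ext_of_forall_integral_eq_of_IsFiniteMeasure fun f => ?_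
  rw [integral_map (measurable_gradient _).aemeasurable f.continuous.aestronglyMeasurable,
    integral_map measurable_subtype_coe.aemeasurable f.continuous.aestronglyMeasurable]
  refine le_antisymm (integral_comp_gradient_conjugate_le hμ hu hd f) ?_
  have hneg := integral_comp_gradient_conjugate_le hμ hu hd (-f)
  simp only [BoundedContinuousFunction.coe_neg, Pi.neg_apply, integral_neg] at hneg
  exact neg_le_neg_iff.mp hneg

end FirstVariation

lemma lintegral_norm_sub_gradient_conjugate_sq_le [CompleteSpace E] {μ : Measure E}
    [IsFiniteMeasure μ] (hμ : μ Kᶜ = 0) {u : C(K, ℝ)}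
    (hν : (μ.map (gradient (conjugate u))) Kᶜ = 0)
    (hd : ∀ᵐ x ∂μ, DifferentiableAt ℝ (conjugate u) x) {π : Measure (E × E)}
    (hfst : π.map Prod.fst = μ) (hsnd : π.map Prod.snd = μ.map (gradient (conjugate u))) :
    ∫⁻ x, ENNReal.ofReal (‖x - gradient (conjugate u) x‖ ^ 2) ∂μ ≤
      ∫⁻ q, ENNReal.ofReal (‖q.1 - q.2‖ ^ 2) ∂π := by
  have hK : IsCompact K := isCompact_iff_compactSpace.mpr ‹_›
  have hμK : ∀ᵐ x ∂μ, x ∈ K := by rwa [ae_iff]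
  have hconj := continuous_conjugate u
  have hconj' := continuous_conjugate (restrictedConjugate u)
  refine lintegral_cost_le_of_dual_eq (c := fun x y => ‖x - y‖ ^ 2)
    (f := fun x => ‖x‖ ^ 2 - 2 * conjugate u x)
    (g := fun y => ‖y‖ ^ 2 - 2 * conjugate (restrictedConjugate u) y) (measurable_gradient _)
    (integrable_of_continuous_of_compl_null hK hμ (by fun_prop))
    (integrable_of_continuous_of_compl_null hK hν (by fun_prop))
    (fun x y => by positivity) ?_ ?_ hfst hsnd
  · filter_upwards [hμK] with x hx y
    have hle := inner_le_conjugate_add_conjugate_restrictedConjugate u ⟨x, hx⟩ y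
    rw [norm_sub_sq_real]
    linarith
  · filter_upwards [hμK, hd] with x hx hdx
    have heq := IsSubgradient.conjugate_add_conjugate_restrictedConjugate (x := ⟨x, hx⟩)
      (isSubgradient_gradient_conjugate hdx)
    rw [norm_sub_sq_real]
    linarith

theorem exists_brenier_potential [FiniteDimensional ℝ E] {μ ν : Measure E} [IsFiniteMeasure μ]
    [IsFiniteMeasure ν] (hμ : μ Kᶜ = 0) (hν : ν Kᶜ = 0) (hmass : μ univ = ν univ)
    (hac : μ ≪ volume) :
    ∃ ψ : E → ℝ, (∀ x, ∃ y, IsSubgradient ψ x y) ∧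
      (∀ᵐ x, IsSubgradient ψ x (gradient ψ x)) ∧ μ.map (gradient ψ) = ν ∧
      ∀ π : Measure (E × E), π.map Prod.fst = μ → π.map Prod.snd = ν →
        ∫⁻ x, ENNReal.ofReal (‖x - gradient ψ x‖ ^ 2) ∂μ ≤
          ∫⁻ q, ENNReal.ofReal (‖q.1 - q.2‖ ^ 2) ∂π := by
  have hK : IsCompact K := isCompact_iff_compactSpace.mpr ‹_›
  let νK : Measure K := ν.comap (↑)
  have hνK : νK.map (↑) = ν := by
    rw [map_comap_subtype_coe hK.measurableSet]
    exact Measure.restrict_eq_self_of_ae_mem (by rwa [ae_iff])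
  have hmassK : νK univ = ν univ := by
    rw [← hνK, Measure.map_apply measurable_subtype_coe MeasurableSet.univ, preimage_univ]
  have hfin : IsFiniteMeasure νK := ⟨hmassK ▸ measure_lt_top ν univ⟩
  obtain ⟨u, hu⟩ := exists_forall_kantorovichDual_le (ν := νK) hμ (hmass.trans hmassK.symm)
  obtain ⟨R, hR⟩ := exists_lipschitzWith_conjugate K
  have hd : ∀ᵐ x, DifferentiableAt ℝ (conjugate u) x := (hR u).ae_differentiableAt
  have hmap := (map_gradient_conjugate hμ hu (hac.ae_le hd)).trans hνK
  refine ⟨conjugate u, exists_isSubgradient_conjugate u,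
    hd.mono fun x hx => isSubgradient_gradient_conjugate hx, hmap, fun π hfst hsnd => ?_⟩
  exact lintegral_norm_sub_gradient_conjugate_sq_le hμ (hmap ▸ hν) (hac.ae_le hd) hfst
    (hsnd.trans hmap.symm)

end Brenier

/-! ### The resolvent of the subdifferential -/

section Resolvent

variable {E : Type*} [NormedAddCommGroup E] [InnerProductSpace ℝ E] {ψ : E → ℝ} {c t : ℝ}

lemma IsSubgradient.mul_norm_sub_sq_le_inner (ht : 0 ≤ t) {x y x' y' : E}
    (h : IsSubgradient ψ x y) (h' : IsSubgradient ψ x' y') :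
    c * ‖x - x'‖ ^ 2 ≤ ⟪(c • x + t • y) - (c • x' + t • y'), x - x'⟫ := by
  rw [show (c • x + t • y) - (c • x' + t • y') = c • (x - x') + t • (y - y') by module,
    inner_add_left, real_inner_smul_left, real_inner_smul_left, real_inner_self_eq_norm_sq,
    real_inner_comm]
  linarith [mul_nonneg ht (h.inner_sub_nonneg h')]

lemma IsSubgradient.mul_norm_sub_le (ht : 0 ≤ t) {x y x' y' : E}
    (h : IsSubgradient ψ x y) (h' : IsSubgradient ψ x' y') :
    c * ‖x - x'‖ ≤ ‖(c • x + t • y) - (c • x' + t • y')‖ := by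
  have hinner := h.mul_norm_sub_sq_le_inner (c := c) ht h'
  have hcs := real_inner_le_norm ((c • x + t • y) - (c • x' + t • y')) (x - x')
  rcases (norm_nonneg (x - x')).eq_or_lt with h0 | h0
  · rw [← h0, mul_zero]
    exact norm_nonneg _
  · refine le_of_mul_le_mul_right ?_ h0
    linarith [sq ‖x - x'‖]

lemma IsSubgradient.eq_of_smul_add_eq (hc : 0 < c) (ht : 0 ≤ t) {x y x' y' : E}
    (h : IsSubgradient ψ x y) (h' : IsSubgradient ψ x' y')
    (heq : c • x + t • y = c • x' + t • y') : x = x' := by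
  have hle := h.mul_norm_sub_le (c := c) ht h'
  rw [heq, sub_self, norm_zero] at hle
  exact sub_eq_zero.mp (norm_le_zero_iff.mp (nonpos_of_mul_nonpos_right hle hc))

lemma exists_forall_prox_functional_le [FiniteDimensional ℝ E]
    (hψ : ∀ x, ∃ y, IsSubgradient ψ x y) (hc : 0 < c) (ht : 0 ≤ t) (z : E) :
    ∃ x, ∀ x', c / 2 * ‖x‖ ^ 2 + t * ψ x - ⟪z, x⟫ ≤ c / 2 * ‖x'‖ ^ 2 + t * ψ x' - ⟪z, x'⟫ := by
  have hψc := continuous_of_exists_isSubgradient hψ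
  obtain ⟨y, hy⟩ := hψ 0
  refine Continuous.exists_forall_le' (by fun_prop) 0 ?_
  filter_upwards [tendsto_norm_cocompact_atTop.eventually_ge_atTop
    (2 / c * (t * ‖y‖ + ‖z‖))] with x hx
  have hsub := hy x
  rw [sub_zero] at hsub
  have hyx := neg_le_of_abs_le (abs_real_inner_le_norm y x)
  have hzx := real_inner_le_norm z x
  have hlin : t * ‖y‖ + ‖z‖ ≤ c / 2 * ‖x‖ := by
    rw [div_mul_eq_mul_div, div_le_iff₀ hc] at hx
    linarith
  have hquad := mul_le_mul_of_nonneg_right hlin (norm_nonneg x)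
  have htψ := mul_le_mul_of_nonneg_left (add_le_add hsub hyx) ht
  rw [norm_zero, inner_zero_right]
  linarith [sq ‖x‖]

lemma isSubgradient_of_forall_prox_functional_le (hψ : ConvexOn ℝ univ ψ) (ht : 0 < t) {x z : E}
    (hx : ∀ x', c / 2 * ‖x‖ ^ 2 + t * ψ x - ⟪z, x⟫ ≤ c / 2 * ‖x'‖ ^ 2 + t * ψ x' - ⟪z, x'⟫) :
    IsSubgradient ψ x (t⁻¹ • (z - c • x)) := by
  intro x'
  have hsegment : ∀ s ∈ Ioc (0 : ℝ) 1,
      ⟪z - c • x, x' - x⟫ ≤ t * (ψ x' - ψ x) + s * (c / 2 * ‖x' - x‖ ^ 2) := by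
    rintro s ⟨hs, hs1⟩
    have hmin := hx (x + s • (x' - x))
    have hconv := hψ.2 (mem_univ x) (mem_univ x') (sub_nonneg.mpr hs1) hs.le (sub_add_cancel 1 s)
    rw [show (1 - s) • x + s • x' = x + s • (x' - x) by module, smul_eq_mul, smul_eq_mul] at hconv
    rw [norm_add_sq_real, inner_add_right, real_inner_smul_right, real_inner_smul_right,
      norm_smul, mul_pow, Real.norm_eq_abs, sq_abs] at hmin
    rw [inner_sub_left, real_inner_smul_left]
    have htψ := mul_le_mul_of_nonneg_left hconv ht.le
    refine le_of_mul_le_mul_left ?_ hs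
    linarith
  have hlim : Tendsto (fun s : ℝ => t * (ψ x' - ψ x) + s * (c / 2 * ‖x' - x‖ ^ 2)) (𝓝[>] 0)
      (𝓝 (t * (ψ x' - ψ x) + 0 * (c / 2 * ‖x' - x‖ ^ 2))) :=
    (Continuous.tendsto (by fun_prop) 0).mono_left nhdsWithin_le_nhds
  have hle := ge_of_tendsto hlim (eventually_of_mem (Ioc_mem_nhdsGT one_pos) hsegment)
  rw [zero_mul, add_zero, ← inv_mul_le_iff₀ ht] at hle
  rw [real_inner_smul_left]
  linarith

theorem exists_isSubgradient_smul_add_smul_eq [FiniteDimensional ℝ E]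
    (hψ : ∀ x, ∃ y, IsSubgradient ψ x y) (hc : 0 < c) (ht : 0 ≤ t) (z : E) :
    ∃ x y, IsSubgradient ψ x y ∧ c • x + t • y = z := by
  rcases ht.eq_or_lt with rfl | ht
  · obtain ⟨y, hy⟩ := hψ (c⁻¹ • z)
    exact ⟨_, y, hy, by rw [zero_smul, add_zero, smul_inv_smul₀ hc.ne']⟩
  · obtain ⟨x, hx⟩ := exists_forall_prox_functional_le hψ hc ht.le z
    refine ⟨x, _, isSubgradient_of_forall_prox_functional_le
      (convexOn_of_exists_isSubgradient hψ) ht hx, ?_⟩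
    rw [smul_inv_smul₀ ht.ne', add_sub_cancel]

variable [FiniteDimensional ℝ E] (hψ : ∀ x, ∃ y, IsSubgradient ψ x y)

include hψ in
lemma exists_isSubgradient_sub (w : E) : ∃ x, IsSubgradient ψ x (w - x) := by
  obtain ⟨x, y, hxy, hw⟩ := exists_isSubgradient_smul_add_smul_eq hψ one_pos zero_le_one w
  rw [one_smul, one_smul] at hw
  exact ⟨x, by rwa [← hw, add_sub_cancel_left]⟩

/-- The resolvent `(1 + ∂ψ)⁻¹` of the subdifferential of a finite convex function. -/
noncomputable def resolvent (w : E) : E := (exists_isSubgradient_sub hψ w).choose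

lemma isSubgradient_resolvent (w : E) : IsSubgradient ψ (resolvent hψ w) (w - resolvent hψ w) :=
  (exists_isSubgradient_sub hψ w).choose_spec

lemma resolvent_add {x y : E} (h : IsSubgradient ψ x y) : resolvent hψ (x + y) = x :=
  (isSubgradient_resolvent hψ (x + y)).eq_of_smul_add_eq one_pos zero_le_one h (by module)

lemma norm_resolvent_sub_sq_le_inner (w w' : E) :
    ‖resolvent hψ w - resolvent hψ w'‖ ^ 2 ≤ ⟪w - w', resolvent hψ w - resolvent hψ w'⟫ := by
  simpa using (isSubgradient_resolvent hψ w).mul_norm_sub_sq_le_inner (c := 1) zero_le_one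
    (isSubgradient_resolvent hψ w')

lemma lipschitzWith_resolvent : LipschitzWith 1 (resolvent hψ) := by
  refine LipschitzWith.mk_one fun w w' => ?_
  rw [dist_eq_norm, dist_eq_norm]
  simpa using (isSubgradient_resolvent hψ w).mul_norm_sub_le (c := 1) zero_le_one
    (isSubgradient_resolvent hψ w')

/-- The potential of the resolvent: the Legendre dual of the Moreau envelope of `ψ`. -/
noncomputable def resolventPotential (w : E) : ℝ :=
  ⟪resolvent hψ w, w⟫ - 1 / 2 * ‖resolvent hψ w‖ ^ 2 - ψ (resolvent hψ w)

lemma isSubgradient_resolventPotential (w : E) :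
    IsSubgradient (resolventPotential hψ) w (resolvent hψ w) := by
  intro w'
  have hsub := isSubgradient_resolvent hψ w' (resolvent hψ w)
  have hsq := sq_nonneg ‖resolvent hψ w - resolvent hψ w'‖
  rw [norm_sub_sq_real] at hsq
  rw [inner_sub_right, inner_sub_left, inner_sub_left, real_inner_self_eq_norm_sq,
    real_inner_comm (resolvent hψ w), real_inner_comm (resolvent hψ w') w',
    real_inner_comm (resolvent hψ w) (resolvent hψ w')] at hsub
  simp only [resolventPotential, inner_sub_right]
  linarith

-- Squeeze between the subgradient inequalities at `w` and at `w + h`.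
lemma hasFDerivAt_resolventPotential (w : E) :
    HasFDerivAt (resolventPotential hψ) (innerSL ℝ (resolvent hψ w)) w := by
  rw [hasFDerivAt_iff_isLittleO_nhds_zero, Asymptotics.isLittleO_iff]
  intro c hc
  filter_upwards [ball_mem_nhds (0 : E) hc] with h hh
  rw [mem_ball_zero_iff] at hh
  have hlower := isSubgradient_resolventPotential hψ w (w + h)
  have hupper := isSubgradient_resolventPotential hψ (w + h) w
  have hlip := (lipschitzWith_resolvent hψ).dist_le_mul (w + h) w
  rw [dist_eq_norm, dist_eq_norm, NNReal.coe_one, one_mul, add_sub_cancel_left] at hlip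
  rw [add_sub_cancel_left] at hlower
  rw [sub_add_cancel_left, inner_neg_right] at hupper
  have hdiff : ⟪resolvent hψ (w + h), h⟫ - ⟪resolvent hψ w, h⟫ ≤ c * ‖h‖ := by
    rw [← inner_sub_left]
    exact (real_inner_le_norm _ _).trans (by gcongr; exact hlip.trans hh.le)
  rw [innerSL_apply_apply, Real.norm_eq_abs, abs_le]
  exact ⟨by linarith [mul_nonneg hc.le (norm_nonneg h)], by linarith⟩

end Resolvent

/-! ### Second-order expansions of convex functions -/

section InverseExpansion

variable {E : Type*} [NormedAddCommGroup E] [InnerProductSpace ℝ E] {X : E → E} {M : E →L[ℝ] E}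
  {w₀ : E} {c : ℝ}

lemma eventually_half_mul_norm_sub_sq_le_inner (hX : HasFDerivAt X M w₀) (hc : 0 < c)
    (hM : ∀ h, c * ‖h‖ ^ 2 ≤ ⟪h, M h⟫) :
    ∀ᶠ w in 𝓝 w₀, c / 2 * ‖w - w₀‖ ^ 2 ≤ ⟪w - w₀, X w - X w₀⟫ := by
  filter_upwards [hX.isLittleO.def (half_pos hc)] with w hw
  have herror : ‖w - w₀‖ * ‖X w - X w₀ - M (w - w₀)‖ ≤ c / 2 * ‖w - w₀‖ ^ 2 := by
    rw [sq, mul_left_comm]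
    gcongr
  have hcs := neg_le_of_abs_le (abs_real_inner_le_norm (w - w₀) (X w - X w₀ - M (w - w₀)))
  rw [inner_sub_right] at hcs
  linarith [hM (w - w₀)]

/-- A monotone map that is strongly monotone at `w₀` to first order has a continuous inverse there.
Points far from `w₀` are compared with the point of a small sphere on the same ray. -/
lemma comap_nhds_le_of_monotone (hmono : ∀ w w', 0 ≤ ⟪w - w', X w - X w'⟫)
    (hX : HasFDerivAt X M w₀) (hc : 0 < c) (hM : ∀ h, c * ‖h‖ ^ 2 ≤ ⟪h, M h⟫) :
    comap X (𝓝 (X w₀)) ≤ 𝓝 w₀ := by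
  obtain ⟨ρ, hρ, hball⟩ :=
    Metric.eventually_nhds_iff.mp (eventually_half_mul_norm_sub_sq_le_inner hX hc hM)
  refine ((nhds_basis_ball.comap X).le_basis_iff nhds_basis_ball).mpr fun r hr => ?_
  obtain ⟨s, hs, hsr⟩ := exists_between (lt_min hρ hr)
  obtain ⟨hsρ, hsr⟩ := lt_min_iff.mp hsr
  refine ⟨c / 2 * s, by positivity, fun w hw => ?_⟩
  rw [mem_preimage, mem_ball_iff_norm] at hw
  rw [mem_ball_iff_norm]
  by_contra! hfar
  have hsw : s < ‖w - w₀‖ := hsr.trans_le hfar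
  have hw₀ : 0 < ‖w - w₀‖ := hs.trans hsw
  set a := s / ‖w - w₀‖ with ha
  have ha0 : 0 < a := by positivity
  have hnear := hball (y := w₀ + a • (w - w₀)) <| by
    rwa [dist_eq_norm, add_sub_cancel_left, norm_smul, Real.norm_of_nonneg ha0.le, ha,
      div_mul_cancel₀ _ hw₀.ne']
  have hray := hmono w (w₀ + a • (w - w₀))
  rw [show w - (w₀ + a • (w - w₀)) = (1 - a) • (w - w₀) by module, real_inner_smul_left,
    mul_nonneg_iff_of_pos_left (sub_pos.mpr ((div_lt_one hw₀).mpr hsw))] at hray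
  rw [add_sub_cancel_left, norm_smul, Real.norm_of_nonneg ha0.le, real_inner_smul_left, mul_pow,
    sq a, mul_assoc, mul_left_comm, mul_le_mul_iff_of_pos_left ha0, ha] at hnear
  have hlower : c / 2 * s * ‖w - w₀‖ ≤ ⟪w - w₀, X w - X w₀⟫ := by
    rw [← sub_add_sub_cancel (X w) (X (w₀ + a • (w - w₀))) (X w₀), inner_add_right]
    calc c / 2 * s * ‖w - w₀‖ = c / 2 * (s / ‖w - w₀‖ * ‖w - w₀‖ ^ 2) := by field_simp
      _ ≤ _ := by linarith
  have hupper := real_inner_le_norm (w - w₀) (X w - X w₀)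
  rw [mul_comm] at hupper
  exact hw.not_ge (le_of_mul_le_mul_right (hlower.trans hupper) hw₀)

lemma isLittleO_symm_sub {M : E ≃L[ℝ] E} (hX : HasFDerivAt X (M : E →L[ℝ] E) w₀)
    (hcomap : comap X (𝓝 (X w₀)) ≤ 𝓝 w₀) :
    (fun w => w - w₀ - M.symm (X w - X w₀)) =o[comap X (𝓝 (X w₀))] fun w => X w - X w₀ := by
  have hbigO : (fun w => w - w₀) =O[𝓝 w₀] fun w => X w - X w₀ :=
    (hX.isTheta_sub M.toHomeomorph.isInducing).isBigO_symm
  have hlittle := ((M.symm : E →L[ℝ] E).isBigO_comp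
    (fun w => X w - X w₀ - M (w - w₀)) (𝓝 w₀)).trans_isLittleO hX.isLittleO
  refine ((hlittle.trans_isBigO hbigO).neg_left.congr_left fun w => ?_).mono hcomap
  simp only [ContinuousLinearEquiv.coe_coe, map_sub M.symm (X w - X w₀),
    M.symm_apply_apply, neg_sub]

end InverseExpansion

section Aleksandrov

variable {E : Type*} [NormedAddCommGroup E] [InnerProductSpace ℝ E] {ψ : E → ℝ} {x y : E}

/-- The linear map `A` is the Hessian of the convex function `ψ` at `x`, in the sense of a
first-order expansion around `y` of its set-valued subdifferential. -/
def HasHessianAt (ψ : E → ℝ) (A : E →L[ℝ] E) (x y : E) : Prop :=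
  ∀ η > 0, ∀ᶠ x' in 𝓝 x, ∀ y', IsSubgradient ψ x' y' →
    ‖y' - y - A (x' - x)‖ ≤ η * ‖x' - x‖

variable [FiniteDimensional ℝ E] (hψ : ∀ x, ∃ y, IsSubgradient ψ x y)
  {w : E} {M : E →L[ℝ] E}

include hψ in
lemma isSymmetric_of_hasFDerivAt_resolvent (hM : HasFDerivAt (resolvent hψ) M w) :
    (M : E →ₗ[ℝ] E).IsSymmetric := fun u v => by
  have hsecond : HasFDerivAt (fun w => innerSL ℝ (resolvent hψ w)) ((innerSL ℝ).comp M) w :=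
    (innerSL ℝ (E := E)).hasFDerivAt.comp w hM
  have hsymm := second_derivative_symmetric (hasFDerivAt_resolventPotential hψ) hsecond u v
  simp only [ContinuousLinearMap.comp_apply, innerSL_apply_apply] at hsymm
  rw [ContinuousLinearMap.coe_coe, hsymm, real_inner_comm]

include hψ in
lemma norm_sq_le_inner_of_hasFDerivAt_resolvent (hM : HasFDerivAt (resolvent hψ) M w) (h : E) :
    ‖M h‖ ^ 2 ≤ ⟪h, M h⟫ := by
  have hslope := (hM.hasLineDerivAt h).tendsto_slope_zero_right
  refine le_of_tendsto_of_tendsto (hslope.norm.pow 2) (tendsto_const_nhds.inner hslope) ?_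
  filter_upwards [self_mem_nhdsWithin] with s hs
  have hs : 0 < s := hs
  have hfirm := norm_resolvent_sub_sq_le_inner hψ (w + s • h) w
  rw [add_sub_cancel_left, real_inner_smul_left] at hfirm
  rw [norm_smul, mul_pow, inner_smul_right, norm_inv, Real.norm_of_nonneg hs.le]
  calc s⁻¹ ^ 2 * ‖resolvent hψ (w + s • h) - resolvent hψ w‖ ^ 2
      ≤ s⁻¹ ^ 2 * (s * ⟪h, resolvent hψ (w + s • h) - resolvent hψ w⟫) := by gcongr
    _ = _ := by field_simp

include hψ in
lemma isPositive_symm_sub_id {M : E ≃L[ℝ] E}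
    (hM : HasFDerivAt (resolvent hψ) (M : E →L[ℝ] E) w) :
    ((M.symm : E →L[ℝ] E) - ContinuousLinearMap.id ℝ E).IsPositive := by
  refine (ContinuousLinearMap.isPositive_iff _).mpr ⟨fun u v => ?_, fun u => ?_⟩
  · have hsymm := isSymmetric_of_hasFDerivAt_resolvent hψ hM (M.symm u) (M.symm v)
    simp only [ContinuousLinearMap.coe_coe, ContinuousLinearEquiv.coe_coe,
      M.apply_symm_apply] at hsymm
    simp [inner_sub_left, inner_sub_right, hsymm]
  · have hpos := norm_sq_le_inner_of_hasFDerivAt_resolvent hψ hM (M.symm u)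
    simp only [ContinuousLinearEquiv.coe_coe, M.apply_symm_apply] at hpos
    simp [inner_sub_left, hpos]

include hψ in
lemma comap_resolvent_nhds_le {M : E ≃L[ℝ] E}
    (hM : HasFDerivAt (resolvent hψ) (M : E →L[ℝ] E) w) :
    comap (resolvent hψ) (𝓝 (resolvent hψ w)) ≤ 𝓝 w := by
  set C := ‖(M.symm : E →L[ℝ] E)‖ + 1
  refine comap_nhds_le_of_monotone (c := (C ^ 2)⁻¹)
    (fun v v' => (sq_nonneg _).trans (norm_resolvent_sub_sq_le_inner hψ v v')) hM
    (by positivity) fun h => ?_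
  refine le_trans ?_ (norm_sq_le_inner_of_hasFDerivAt_resolvent hψ hM h)
  have hh : ‖h‖ ≤ C * ‖M h‖ := by
    have hle := (M.symm : E →L[ℝ] E).le_opNorm (M h)
    rw [ContinuousLinearEquiv.coe_coe, M.symm_apply_apply] at hle
    exact hle.trans (by gcongr; exact (lt_add_one _).le)
  rw [inv_mul_le_iff₀ (by positivity), ContinuousLinearEquiv.coe_coe, ← mul_pow]
  gcongr

lemma hasHessianAt_of_hasFDerivAt_resolvent {M : E ≃L[ℝ] E}
    (hM : HasFDerivAt (resolvent hψ) (M : E →L[ℝ] E) w) :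
    HasHessianAt ψ ((M.symm : E →L[ℝ] E) - ContinuousLinearMap.id ℝ E)
      (resolvent hψ w) (w - resolvent hψ w) := by
  intro η hη
  have hinv := isLittleO_symm_sub hM (comap_resolvent_nhds_le hψ hM)
  filter_upwards [eventually_comap.mp (hinv.def hη)] with x' hx' y' hxy'
  have hbound := hx' (x' + y') (resolvent_add hψ hxy')
  rw [resolvent_add hψ hxy'] at hbound
  convert hbound using 2
  simp only [sub_apply, ContinuousLinearEquiv.coe_coe, ContinuousLinearMap.id_apply]
  abel

variable [MeasurableSpace E] [BorelSpace E] (μ : Measure E) [μ.IsAddHaarMeasure]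

lemma measure_image_eq_zero_of_lipschitzWith {E : Type*} [NormedAddCommGroup E] [NormedSpace ℝ E]
    [FiniteDimensional ℝ E] [MeasurableSpace E] [BorelSpace E] (μ : Measure E)
    [μ.IsAddHaarMeasure] {C : ℝ≥0} {f : E → E} (hf : LipschitzWith C f) {s : Set E}
    (hs : μ s = 0) : μ (f '' s) = 0 := by
  have hac := Measure.absolutelyContinuous_isAddHaarMeasure
    (Measure.hausdorffMeasure (finrank ℝ E)) μ
  have hac' := Measure.absolutelyContinuous_isAddHaarMeasure μ
    (Measure.hausdorffMeasure (finrank ℝ E))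
  refine hac' (nonpos_iff_eq_zero.mp ?_)
  calc Measure.hausdorffMeasure (finrank ℝ E) (f '' s)
      ≤ (C : ℝ≥0∞) ^ (finrank ℝ E : ℝ) * Measure.hausdorffMeasure (finrank ℝ E) s :=
        hf.hausdorffMeasure_image_le (Nat.cast_nonneg _) s
    _ = 0 := by rw [hac hs, mul_zero]

include hψ in
/-- Aleksandrov's theorem. The resolvent is onto, differentiable outside a null set, and its
critical values are null by Sard's lemma. -/
theorem ae_exists_hasHessianAt :
    ∀ᵐ x ∂μ, ∃ (y : E) (A : E →L[ℝ] E), IsSubgradient ψ x y ∧ A.IsPositive ∧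
      HasHessianAt ψ A x y := by
  have hnondiff := measure_image_eq_zero_of_lipschitzWith μ (lipschitzWith_resolvent hψ)
    (ae_iff.mp ((lipschitzWith_resolvent hψ).ae_differentiableAt (μ := μ)))
  have hcritical := addHaar_image_eq_zero_of_det_fderivWithin_eq_zero μ
    (s := {w | DifferentiableAt ℝ (resolvent hψ) w ∧ (fderiv ℝ (resolvent hψ) w).det = 0})
    (fun w hw => hw.1.hasFDerivAt.hasFDerivWithinAt) fun w hw => hw.2
  filter_upwards [measure_eq_zero_iff_ae_notMem.mp hnondiff,
    measure_eq_zero_iff_ae_notMem.mp hcritical] with x hx hx'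
  obtain ⟨y, hy⟩ := hψ x
  have hxy : resolvent hψ (x + y) = x := resolvent_add hψ hy
  have hdiff : DifferentiableAt ℝ (resolvent hψ) (x + y) := by
    by_contra h
    exact hx ⟨_, h, hxy⟩
  have hdet : (fderiv ℝ (resolvent hψ) (x + y)).det ≠ 0 := fun h => hx' ⟨_, ⟨hdiff, h⟩, hxy⟩
  have hderiv := hdiff.hasFDerivAt
  rw [← ContinuousLinearMap.coe_toContinuousLinearEquivOfDetNeZero _ hdet] at hderiv
  have hhess := hasHessianAt_of_hasFDerivAt_resolvent hψ hderiv
  rw [hxy, add_sub_cancel_left] at hhess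
  exact ⟨y, _, hy, isPositive_symm_sub_id hψ hderiv, hhess⟩

end Aleksandrov

/-! ### The Jacobian of a map that does not concentrate volume -/

section Jacobian

variable {E : Type*} [NormedAddCommGroup E] [NormedSpace ℝ E] [FiniteDimensional ℝ E]
  [MeasurableSpace E] [BorelSpace E] {μ : Measure E} [μ.IsAddHaarMeasure]
  {s : Set E} {T : E → E} {A : E →L[ℝ] E} {x y : E}

lemma measure_unitBall_le_cthickening_image {η r : ℝ} (hT : AEMeasurable T (μ.restrict s))
    (hmap : (μ.restrict s).map T ≤ μ) (hr : 0 < r) (hrs : ball x r ⊆ s)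
    (hA : ∀ᵐ x' ∂μ, x' ∈ ball x r → ‖T x' - y - A (x' - x)‖ ≤ η * ‖x' - x‖) (hη : 0 < η) :
    μ (ball (0 : E) 1) ≤ μ (cthickening η (A '' closedBall 0 1)) := by
  set Z := y +ᵥ r • cthickening η (A '' closedBall 0 1)
  have hZ : IsClosed Z := ((isClosed_cthickening).smul_of_ne_zero hr.ne').vadd y
  have hmaps : ∀ᵐ x' ∂μ.restrict s, x' ∈ ball x r → x' ∈ T ⁻¹' Z := by
    filter_upwards [ae_restrict_of_ae hA] with x' hx' hball
    have hdist := (mem_ball_iff_norm.mp hball).le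
    rw [mem_preimage, Set.mem_vadd_set_iff_neg_vadd_mem, mem_smul_set_iff_inv_smul_mem₀ hr.ne',
      vadd_eq_add, neg_add_eq_sub]
    refine mem_cthickening_of_dist_le _ (A (r⁻¹ • (x' - x))) _ _ ⟨_, ?_, rfl⟩ ?_
    · rwa [mem_closedBall_zero_iff, norm_smul, norm_inv, Real.norm_of_nonneg hr.le,
        inv_mul_le_iff₀ hr, mul_one]
    · rw [dist_eq_norm, map_smul, ← smul_sub, norm_smul, norm_inv, Real.norm_of_nonneg hr.le,
        inv_mul_le_iff₀ hr, mul_comm]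
      exact (hx' hball).trans (by gcongr)
  have hle : μ (ball x r) ≤ μ Z := by
    calc μ (ball x r) = μ.restrict s (ball x r) := by
          rw [Measure.restrict_apply measurableSet_ball, inter_eq_left.mpr hrs]
      _ ≤ μ.restrict s (T ⁻¹' Z) := measure_mono_ae hmaps
      _ = (μ.restrict s).map T Z := (Measure.map_apply_of_aemeasurable hT hZ.measurableSet).symm
      _ ≤ μ Z := hmap Z
  rw [Measure.addHaar_ball_of_pos _ _ hr, measure_vadd, Measure.addHaar_smul,
    abs_of_nonneg (by positivity)] at hle
  exact (ENNReal.mul_le_mul_iff_right (by simpa using by positivity) ENNReal.ofReal_ne_top).mp hle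

theorem one_le_abs_det_of_map_le (hs : s ∈ 𝓝 x) (hT : AEMeasurable T (μ.restrict s))
    (hmap : (μ.restrict s).map T ≤ μ)
    (hA : ∀ η > 0, ∃ r > 0, ∀ᵐ x' ∂μ, x' ∈ ball x r → ‖T x' - y - A (x' - x)‖ ≤ η * ‖x' - x‖) :
    1 ≤ |A.det| := by
  have hthick : ∀ η > 0, μ (ball (0 : E) 1) ≤ μ (cthickening η (A '' closedBall 0 1)) := by
    intro η hη
    obtain ⟨r, hr, hAr⟩ := hA η hη
    obtain ⟨r', hr', hrs⟩ := Metric.mem_nhds_iff.mp hs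
    refine measure_unitBall_le_cthickening_image (y := y) hT hmap (lt_min hr hr')
      ((ball_subset_ball (min_le_right _ _)).trans hrs) ?_ hη
    exact hAr.mono fun x' h hx' => h (ball_subset_ball (min_le_left _ _) hx')
  have hlim : Tendsto (fun η => μ (cthickening η (A '' closedBall 0 1))) (𝓝[>] 0)
      (𝓝 (μ (A '' closedBall 0 1))) :=
    (tendsto_measure_cthickening_of_isCompact
      ((isCompact_closedBall 0 1).image A.continuous)).mono_left nhdsWithin_le_nhds
  have hle := ge_of_tendsto hlim (eventually_of_mem self_mem_nhdsWithin hthick)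
  rw [Measure.addHaar_image_continuousLinearMap,
    Measure.addHaar_unitClosedBall_eq_addHaar_unitBall] at hle
  change 1 ≤ |LinearMap.det (A : E →ₗ[ℝ] E)|
  rw [← ENNReal.one_le_ofReal]
  refine (ENNReal.mul_le_mul_iff_left (measure_ball_pos μ (0 : E) one_pos).ne'
    measure_ball_lt_top.ne).mp ?_
  rwa [one_mul]

end Jacobian

section ExpansiveHessian

variable {E : Type*} [NormedAddCommGroup E] [InnerProductSpace ℝ E] [FiniteDimensional ℝ E]

/-- The convex function `ψ` has a Hessian of determinant at least one at `x`, so that its gradient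
does not concentrate volume near `x`. -/
def HasExpansiveHessianAt (ψ : E → ℝ) (x : E) : Prop :=
  ∃ (y : E) (A : E →L[ℝ] E), IsSubgradient ψ x y ∧ A.IsPositive ∧ 1 ≤ A.det ∧ HasHessianAt ψ A x y

theorem det_nonneg_of_isPositive {A : E →L[ℝ] E} (hpos : A.IsPositive) : 0 ≤ A.det := by
  have hsymm := hpos.isSymmetric
  have hprod : A.det = ∏ j, hsymm.eigenvalues rfl j := by
    simpa using hsymm.det_eq_prod_eigenvalues rfl
  rw [hprod]
  exact Finset.prod_nonneg fun j _ =>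
    LinearMap.IsPositive.nonneg_eigenvalues
      (ContinuousLinearMap.IsPositive.toLinearMap A hpos) rfl j

theorem ae_hasExpansiveHessianAt [MeasurableSpace E] [BorelSpace E] {μ : Measure E}
    [μ.IsAddHaarMeasure] {ψ : E → ℝ} (hψ : ∀ x, ∃ y, IsSubgradient ψ x y) {s : Set E}
    (hs : IsOpen s) {T : E → E} (hT : AEMeasurable T (μ.restrict s))
    (hTψ : ∀ᵐ x ∂μ, IsSubgradient ψ x (T x)) (hmap : (μ.restrict s).map T ≤ μ) :
    ∀ᵐ x ∂μ, x ∈ s → HasExpansiveHessianAt ψ x := by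
  filter_upwards [ae_exists_hasHessianAt hψ μ] with x ⟨y, A, hy, hpos, hhess⟩ hx
  have hdet : 1 ≤ |A.det| := by
    refine one_le_abs_det_of_map_le (y := y) (hs.mem_nhds hx) hT hmap fun η hη => ?_
    obtain ⟨r, hr, hball⟩ := Metric.eventually_nhds_iff_ball.mp (hhess η hη)
    exact ⟨r, hr, hTψ.mono fun x' hx' hxr => hball x' hxr _ hx'⟩
  refine ⟨y, A, hy, hpos, ?_, hhess⟩
  rwa [abs_of_nonneg (det_nonneg_of_isPositive hpos)] at hdet

end ExpansiveHessian

/-! ### Solutions of second-order systems near a straight line -/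

section NearLine

variable {E : Type*} [NormedAddCommGroup E] [NormedSpace ℝ E]

open ODE in
theorem exists_hasDerivWithinAt_mem_closedBall [CompleteSpace E] {f : ℝ → E → E} {tmin tmax : ℝ}
    {t₀ : Icc tmin tmax} {x₀ : E} {a L K : ℝ≥0} (hf : IsPicardLindelof f t₀ x₀ a 0 L K) :
    ∃ q : ℝ → E, q t₀ = x₀ ∧
      (∀ t ∈ Icc tmin tmax, HasDerivWithinAt q (f t (q t)) (Icc tmin tmax) t) ∧
      ∀ t, q t ∈ closedBall x₀ a := by
  obtain ⟨q, hq⟩ := FunSpace.exists_isFixedPt_next hf (mem_closedBall_self (x := x₀) le_rfl)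
  have hmem (t : ℝ) : q.compProj t ∈ closedBall x₀ a := q.compProj_mem_closedBall hf.mul_max_le
  refine ⟨q.compProj, by rw [FunSpace.compProj_val, ← hq, FunSpace.next_apply₀], ?_, hmem⟩
  intro t ht
  refine (hasDerivWithinAt_picard_Icc t₀.2 hf.continuousOn_uncurry
    q.continuous_compProj.continuousOn (fun t _ => hmem t) x₀ ht).congr_of_mem (fun s hs => ?_) ht
  nth_rw 1 [← hq]
  rw [FunSpace.compProj_of_mem hs, FunSpace.next_apply]

theorem exists_tube_subset {U : Set E} (hU : IsOpen U) {x₀ v₀ : E}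
    (hline : ∀ t ∈ Icc (0 : ℝ) 1, x₀ + t • v₀ ∈ U) {ε : ℝ} (hε : 0 < ε) :
    ∃ τ > 0, τ ≤ ε ∧ ∀ t ∈ Icc (-τ) (1 + τ), ∀ q ∈ closedBall (0 : E) τ, x₀ + t • v₀ + q ∈ U := by
  let g : ℝ × E → E := fun p => x₀ + p.1 • v₀ + p.2
  have hg : IsOpen (g ⁻¹' U) := hU.preimage (by fun_prop)
  have hsub : Icc (0 : ℝ) 1 ×ˢ {(0 : E)} ⊆ g ⁻¹' U := by
    rintro ⟨t, q⟩ ⟨ht, rfl⟩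
    simpa [g] using hline t ht
  obtain ⟨ρ, hρ, hρU⟩ :=
    (isCompact_Icc.prod isCompact_singleton).exists_cthickening_subset_open hg hsub
  refine ⟨min ρ ε, lt_min hρ hε, min_le_right _ _, fun t ht q hq => ?_⟩
  refine hρU (a := (t, q)) (mem_cthickening_of_dist_le _ (max 0 (min 1 t), 0) _ _ ?_ ?_)
  · simp
  · have hρε := min_le_left ρ ε
    refine max_le ?_ ((mem_closedBall.mp hq).trans hρε)
    rw [Real.dist_eq, abs_le]
    grind

/-- The vector field of the system `x' = v`, `v' = F (x, v)` in the coordinates `q` given by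
`x = x₀ + t • v₀ + q.1` and `v = v₀ + (1 / 2) • q.2` around a straight line. The factor `1 / 2`
makes the first component at most `τ / 2` on the ball of radius `τ`, so that a solution cannot
leave this ball in time at most two. -/
noncomputable def lineField (F : E × E → E) (x₀ v₀ : E) (t : ℝ) (q : E × E) : E × E :=
  ((1 / 2 : ℝ) • q.2, (2 : ℝ) • F (x₀ + t • v₀ + q.1, v₀ + (1 / 2 : ℝ) • q.2))

theorem isPicardLindelof_lineField [FiniteDimensional ℝ E] {F : E × E → E} {x₀ v₀ : E} {τ : ℝ≥0}
    (hτ : τ ≤ 1 / 2) (h₀ : (0 : ℝ) ∈ Icc (-τ : ℝ) (1 + τ))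
    (hF : ContDiffOn ℝ 1 (Function.uncurry (lineField F x₀ v₀))
      (Icc (-τ : ℝ) (1 + τ) ×ˢ closedBall (0 : E × E) τ))
    (hbound : ∀ t ∈ Icc (-τ : ℝ) (1 + τ), ∀ q ∈ closedBall (0 : E × E) τ,
      ‖F (x₀ + t • v₀ + q.1, v₀ + (1 / 2 : ℝ) • q.2)‖ ≤ τ / 4) :
    ∃ K, IsPicardLindelof (lineField F x₀ v₀) ⟨0, h₀⟩ (0 : E × E) τ 0 (τ / 2) K := by
  obtain ⟨K, hK⟩ := hF.exists_lipschitzOnWith one_ne_zero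
    ((convex_Icc _ _).prod (convex_closedBall _ _)) (isCompact_Icc.prod (isCompact_closedBall _ _))
  refine ⟨K, fun t ht => LipschitzOnWith.of_dist_le_mul fun q hq q' hq' => ?_, fun q hq => ?_,
    fun t ht q hq => ?_, ?_⟩
  · simpa [Function.uncurry, Prod.dist_eq] using hK.dist_le_mul (t, q) ⟨ht, hq⟩ (t, q') ⟨ht, hq'⟩
  · exact hF.continuousOn.comp (f := fun t => (t, q)) (by fun_prop) fun t ht => ⟨ht, hq⟩
  · have hq₂ : ‖q.2‖ ≤ τ := (norm_snd_le q).trans (mem_closedBall_zero_iff.mp hq)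
    rw [norm_prod_le_iff, lineField, norm_smul, norm_smul]
    norm_num
    exact ⟨by linarith, by linarith [hbound t ht q hq]⟩
  · have hτ' : (τ : ℝ) ≤ 1 / 2 := hτ
    have : max (1 + (τ : ℝ) - 0) (0 - -τ) ≤ 2 :=
      max_le (by linarith only [hτ']) (by linarith only [hτ'])
    push_cast
    nlinarith [τ.2]

theorem exists_solution_near_line [FiniteDimensional ℝ E] {F : E × E → E} {x₀ v₀ : E} {τ : ℝ}
    (hτ : 0 < τ) (hτ₂ : τ ≤ 1 / 2) {U : Set E} (hF : ContDiffOn ℝ ∞ F (U ×ˢ univ))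
    (htube : ∀ t ∈ Icc (-τ) (1 + τ), ∀ q ∈ closedBall (0 : E) τ, x₀ + t • v₀ + q ∈ U)
    (hbound : ∀ t ∈ Icc (-τ) (1 + τ), ∀ q ∈ closedBall (0 : E × E) τ,
      ‖F (x₀ + t • v₀ + q.1, v₀ + (1 / 2 : ℝ) • q.2)‖ ≤ τ / 4) :
    ∃ x v : ℝ → E, x 0 = x₀ ∧ v 0 = v₀ ∧ ContDiffOn ℝ ∞ x (Ioo (-τ) (1 + τ)) ∧
      ContDiffOn ℝ ∞ v (Ioo (-τ) (1 + τ)) ∧ ∀ t ∈ Ioo (-τ) (1 + τ), x t ∈ U ∧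
        ‖x t - (x₀ + t • v₀)‖ ≤ τ ∧ HasDerivAt x (v t) t ∧ HasDerivAt v (F (x t, v t)) t := by
  have hfst {q : E × E} (hq : q ∈ closedBall 0 τ) : q.1 ∈ closedBall 0 τ :=
    mem_closedBall_zero_iff.mpr ((norm_fst_le q).trans (mem_closedBall_zero_iff.mp hq))
  have hfield : ContDiffOn ℝ ∞ (Function.uncurry (lineField F x₀ v₀))
      (Icc (-τ) (1 + τ) ×ˢ closedBall (0 : E × E) τ) := by
    refine ContDiffOn.prodMk (by fun_prop) (contDiffOn_const.smul (hF.comp ?_ ?_))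
    · exact ContDiff.contDiffOn (by fun_prop)
    · exact fun p hp => ⟨htube _ hp.1 _ (hfst hp.2), mem_univ _⟩
  lift τ to ℝ≥0 using hτ.le
  have h₀ : (0 : ℝ) ∈ Icc (-τ : ℝ) (1 + τ) := ⟨by linarith, by linarith⟩
  obtain ⟨K, hK⟩ := isPicardLindelof_lineField (by exact_mod_cast hτ₂) h₀
    (hfield.of_le (by norm_num)) hbound
  obtain ⟨q, hq₀, hq, hqτ⟩ := exists_hasDerivWithinAt_mem_closedBall hK
  have hsmooth : ContDiffOn ℝ ∞ q (Ioo (-τ : ℝ) (1 + τ)) :=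
    (ODE.contDiffOn_enat_Icc_of_hasDerivWithinAt hfield hq fun t _ => hqτ t).mono
      Ioo_subset_Icc_self
  refine ⟨fun t => x₀ + t • v₀ + (q t).1, fun t => v₀ + (1 / 2 : ℝ) • (q t).2, by simp [hq₀],
    by simp [hq₀], ?_, ?_, fun t ht => ?_⟩
  · exact ContDiffOn.add (ContDiff.contDiffOn (by fun_prop)) hsmooth.fst
  · exact contDiffOn_const.add (contDiffOn_const.smul hsmooth.snd)
  have hqt := (hq t (Ioo_subset_Icc_self ht)).hasDerivAt (Icc_mem_nhds ht.1 ht.2)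
  refine ⟨htube t (Ioo_subset_Icc_self ht) _ (hfst (hqτ t)), ?_, ?_, ?_⟩
  · simpa using hfst (hqτ t)
  · have hline : HasDerivAt (fun t : ℝ => x₀ + t • v₀) v₀ t := by
      simpa using ((hasDerivAt_id t).smul_const v₀).const_add x₀
    exact hline.add hqt.fst
  · have hforce : HasDerivAt (fun t => (q t).2)
        ((2 : ℝ) • F (x₀ + t • v₀ + (q t).1, v₀ + (1 / 2 : ℝ) • (q t).2)) t := hqt.snd
    have hv := (hforce.const_smul (1 / 2 : ℝ)).const_add v₀
    rwa [smul_smul, one_div_mul_cancel two_ne_zero, one_smul] at hv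

theorem exists_forall_eventually_solution_near_line [FiniteDimensional ℝ E] {U : Set E}
    (hU : IsOpen U) {F : ℝ → E × E → E}
    (hF : ContDiffOn ℝ ∞ (Function.uncurry F) (univ ×ˢ U ×ˢ univ))
    (hF₀ : ∀ x ∈ U, ∀ v, F 0 (x, v) = 0)
    {x₀ v₀ : E} (hline : ∀ t ∈ Icc (0 : ℝ) 1, x₀ + t • v₀ ∈ U) {ε : ℝ} (hε : 0 < ε) :
    ∃ τ > 0, ∀ᶠ δ in 𝓝 (0 : ℝ), ∃ x v : ℝ → E, x 0 = x₀ ∧ v 0 = v₀ ∧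
      ContDiffOn ℝ ∞ x (Ioo (-τ) (1 + τ)) ∧ ContDiffOn ℝ ∞ v (Ioo (-τ) (1 + τ)) ∧
      ∀ t ∈ Ioo (-τ) (1 + τ), x t ∈ U ∧ ‖x t - (x₀ + t • v₀)‖ ≤ ε ∧ HasDerivAt x (v t) t ∧
        HasDerivAt v (F δ (x t, v t)) t := by
  obtain ⟨τ, hτ, hτε, htube⟩ := exists_tube_subset hU hline (lt_min hε one_half_pos)
  obtain ⟨hτε, hτ₂⟩ := le_min_iff.mp hτε
  have hsmall : ∀ᶠ δ in 𝓝 (0 : ℝ), ∀ p ∈ Icc (-τ) (1 + τ) ×ˢ closedBall (0 : E × E) τ,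
      ‖F δ (x₀ + p.1 • v₀ + p.2.1, v₀ + (1 / 2 : ℝ) • p.2.2)‖ < τ / 4 := by
    refine (isCompact_Icc.prod (isCompact_closedBall _ _)).eventually_forall_of_forall_eventually ?_
    rintro ⟨t, q⟩ ⟨ht, hq⟩
    have hx : x₀ + t • v₀ + q.1 ∈ U := htube t ht q.1
      (mem_closedBall_zero_iff.mpr ((norm_fst_le q).trans (mem_closedBall_zero_iff.mp hq)))
    have hcont : ContinuousAt (Function.uncurry F) (0, x₀ + t • v₀ + q.1, v₀ + (1 / 2 : ℝ) • q.2) :=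
      hF.continuousOn.continuousAt
        ((isOpen_univ.prod (hU.prod isOpen_univ)).mem_nhds ⟨mem_univ _, hx, mem_univ _⟩)
    have hcomp := hcont.norm.comp (x := ((0 : ℝ), t, q)) (f := fun p : ℝ × ℝ × E × E =>
      (p.1, x₀ + p.2.1 • v₀ + p.2.2.1, v₀ + (1 / 2 : ℝ) • p.2.2.2)) (by fun_prop)
    refine hcomp.eventually_lt continuousAt_const ?_
    simpa [Function.uncurry, hF₀ _ hx] using hτ
  refine ⟨τ, hτ, hsmall.mono fun δ hδ => ?_⟩
  have hFδ : ContDiffOn ℝ ∞ (F δ) (U ×ˢ univ) :=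
    hF.comp (f := fun p => (δ, p)) (by fun_prop) fun p hp => ⟨mem_univ _, hp⟩
  obtain ⟨x, v, hx₀, hv₀, hx, hv, h⟩ :=
    exists_solution_near_line hτ hτ₂ hFδ htube fun t ht q hq => (hδ (t, q) ⟨ht, hq⟩).le
  exact ⟨x, v, hx₀, hv₀, hx, hv, fun t ht =>
    ⟨(h t ht).1, (h t ht).2.1.trans hτε, (h t ht).2.2⟩⟩

end NearLine

/-! ### Ellipsoids of constant volume with geodesic semi-axes -/

section EllipsoidPath

variable {ι : Type*} [Fintype ι]

/-- The Lagrange multiplier `β` in the geodesic equation `a_j'' = β / a_j` on the hypersurface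
`∏ a_j = δ`, expressed through all semi-axes `α` but one, and their velocities `v`. -/
noncomputable def multiplier (δ : ℝ) (q : (ι → ℝ) × (ι → ℝ)) : ℝ :=
  δ ^ 2 * ((∑ i, q.2 i / q.1 i) ^ 2 + ∑ i, (q.2 i / q.1 i) ^ 2) /
    ((∏ i, q.1 i) ^ 2 + δ ^ 2 * ∑ i, (q.1 i ^ 2)⁻¹)

theorem multiplier_denom_pos (δ : ℝ) {α : ι → ℝ} (hα : ∀ i, 0 < α i) :
    0 < (∏ i, α i) ^ 2 + δ ^ 2 * ∑ i, (α i ^ 2)⁻¹ := by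
  have : 0 < ∏ i, α i := Finset.prod_pos fun i _ => hα i
  positivity

theorem multiplier_nonneg (δ : ℝ) {α : ι → ℝ} (hα : ∀ i, 0 < α i) (v : ι → ℝ) :
    0 ≤ multiplier δ (α, v) :=
  div_nonneg (by positivity) (multiplier_denom_pos δ hα).le

theorem contDiffOn_multiplier {n : WithTop ℕ∞} :
    ContDiffOn ℝ n (Function.uncurry (multiplier (ι := ι)))
      (univ ×ˢ {α | ∀ i, 0 < α i} ×ˢ univ) := by
  rintro ⟨δ, α, v⟩ ⟨-, hα, -⟩
  have hne (i : ι) : α i ≠ 0 := (hα i).ne'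
  have hden := (multiplier_denom_pos δ hα).ne'
  unfold multiplier Function.uncurry
  refine ContDiffAt.contDiffWithinAt (ContDiffAt.div ?_ ?_ hden)
  · refine contDiffAt_fst.pow 2 |>.mul (ContDiffAt.add (ContDiffAt.pow ?_ 2) ?_)
    all_goals
      refine ContDiffAt.sum fun i _ => ?_
      fun_prop (disch := exact hne i)
  · refine ContDiffAt.add (ContDiffAt.pow (contDiffAt_prod fun i _ => by fun_prop) 2)
      (contDiffAt_fst.pow 2 |>.mul (ContDiffAt.sum fun i _ => ?_))
    exact ContDiffAt.inv (by fun_prop) (pow_ne_zero 2 (hne i))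

theorem hasDerivAt_prod_of_ne_zero {α : ℝ → ι → ℝ} {v : ι → ℝ} {t : ℝ} (hα : HasDerivAt α v t)
    (hne : ∀ i, α t i ≠ 0) :
    HasDerivAt (fun s => ∏ i, α s i) ((∏ i, α t i) * ∑ i, v i / α t i) t := by
  classical
  refine (HasDerivAt.fun_finsetProd (u := Finset.univ)
    fun i _ => hasDerivAt_pi.mp hα i).congr_deriv ?_
  rw [Finset.mul_sum]
  refine Finset.sum_congr rfl fun i hi => ?_
  rw [← Finset.mul_prod_erase Finset.univ (α t) hi, smul_eq_mul]
  have := hne i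
  field_simp

theorem hasDerivAt_sum_div {α v : ℝ → ι → ℝ} {β t : ℝ} (hα : HasDerivAt α (v t) t)
    (hv : HasDerivAt v (fun i => β / α t i) t) (hne : ∀ i, α t i ≠ 0) :
    HasDerivAt (fun s => ∑ i, v s i / α s i)
      (β * ∑ i, (α t i ^ 2)⁻¹ - ∑ i, (v t i / α t i) ^ 2) t := by
  refine (HasDerivAt.fun_sum fun i _ =>
    (hasDerivAt_pi.mp hv i).fun_div (hasDerivAt_pi.mp hα i) (hne i)).congr_deriv ?_
  rw [Finset.mul_sum, ← Finset.sum_sub_distrib]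
  refine Finset.sum_congr rfl fun i _ => ?_
  have := hne i
  field_simp

theorem hasDerivAt_div_prod (δ : ℝ) {α : ℝ → ι → ℝ} {v : ι → ℝ} {t : ℝ} (hα : HasDerivAt α v t)
    (hne : ∀ i, α t i ≠ 0) :
    HasDerivAt (fun s => δ / ∏ i, α s i) (-(δ / ∏ i, α t i) * ∑ i, v i / α t i) t := by
  have hprod : ∏ i, α t i ≠ 0 := Finset.prod_ne_zero_iff.mpr fun i _ => hne i
  refine ((hasDerivAt_const t δ).fun_div (hasDerivAt_prod_of_ne_zero hα hne) hprod).congr_deriv ?_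
  field_simp
  ring

theorem hasDerivAt_velocity_div_prod (δ : ℝ) {α v : ℝ → ι → ℝ} {t : ℝ} (hpos : ∀ i, 0 < α t i)
    (hα : HasDerivAt α (v t) t)
    (hv : HasDerivAt v (fun i => multiplier δ (α t, v t) / α t i) t) :
    HasDerivAt (fun s => -(δ / ∏ i, α s i) * ∑ i, v s i / α s i)
      (multiplier δ (α t, v t) / (δ / ∏ i, α t i)) t := by
  have hne (i : ι) : α t i ≠ 0 := (hpos i).ne'
  have hprod : ∏ i, α t i ≠ 0 := Finset.prod_ne_zero_iff.mpr fun i _ => hne i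
  refine ((hasDerivAt_div_prod δ hα hne).fun_neg.fun_mul
    (hasDerivAt_sum_div hα hv hne)).congr_deriv ?_
  have hmult : multiplier δ (α t, v t) * ((∏ i, α t i) ^ 2 + δ ^ 2 * ∑ i, (α t i ^ 2)⁻¹) =
      δ ^ 2 * ((∑ i, v t i / α t i) ^ 2 + ∑ i, (v t i / α t i) ^ 2) :=
    div_mul_cancel₀ _ (multiplier_denom_pos δ hpos).ne'
  rcases eq_or_ne δ 0 with rfl | hδ
  · simp [multiplier]
  generalize ∏ i, α t i = P, ∑ i, v t i / α t i = S, ∑ i, (v t i / α t i) ^ 2 = Q,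
    ∑ i, (α t i ^ 2)⁻¹ = I at hprod hmult ⊢
  field_simp
  linear_combination -hmult

end EllipsoidPath

section EllipsoidPath

theorem Ioo_mem_of_mem_Icc {τ : ℝ} (hτ : 0 < τ) {t : ℝ} (ht : t ∈ Icc (0 : ℝ) 1) :
    t ∈ Ioo (-τ) (1 + τ) :=
  ⟨by linarith [ht.1], by linarith [ht.2]⟩

/-- A path of semi-axes `a` following the geodesic equation `a_j'' = β / a_j` on a hypersurface
`∏ a_j = const`, with velocity `a'` and Lagrange multiplier `β`. These are the semi-axes of the
ellipsoidal solutions of the droplet equations. -/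
structure EllipsoidPath (ι : Type*) [Fintype ι] where
  τ : ℝ
  a : ℝ → ι → ℝ
  a' : ℝ → ι → ℝ
  β : ℝ → ℝ
  τ_pos : 0 < τ
  contDiffOn_a : ContDiffOn ℝ ∞ a (Ioo (-τ) (1 + τ))
  contDiffOn_a' : ContDiffOn ℝ ∞ a' (Ioo (-τ) (1 + τ))
  contDiffOn_β : ContDiffOn ℝ ∞ β (Ioo (-τ) (1 + τ))
  a_pos : ∀ t ∈ Ioo (-τ) (1 + τ), ∀ j, 0 < a t j
  β_nonneg : ∀ t ∈ Ioo (-τ) (1 + τ), 0 ≤ β t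
  hasDerivAt_a : ∀ t ∈ Ioo (-τ) (1 + τ), HasDerivAt a (a' t) t
  hasDerivAt_a' : ∀ t ∈ Ioo (-τ) (1 + τ), HasDerivAt a' (fun j => β t / a t j) t
  prod_eq : ∀ t ∈ Ioo (-τ) (1 + τ), ∏ j, a t j = ∏ j, a 0 j

namespace EllipsoidPath

variable {ι : Type*} [Fintype ι] (P : EllipsoidPath ι)

/-- The logarithmic derivative of the semi-axes, i.e. the eigenvalues of the velocity gradient of
the affine flow that carries one ellipsoid to the next. -/
noncomputable def rate (t : ℝ) (j : ι) : ℝ :=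
  P.a' t j / P.a t j

theorem sum_rate_eq_zero {t : ℝ} (ht : t ∈ Ioo (-P.τ) (1 + P.τ)) : ∑ j, P.rate t j = 0 := by
  have hne (j : ι) : P.a t j ≠ 0 := (P.a_pos t ht j).ne'
  have hconst : HasDerivAt (fun s => ∏ j, P.a s j) 0 t :=
    (hasDerivAt_const t (∏ j, P.a 0 j)).congr_of_eventuallyEq
      (eventually_of_mem (isOpen_Ioo.mem_nhds ht) P.prod_eq)
  have h := (hasDerivAt_prod_of_ne_zero (P.hasDerivAt_a t ht) hne).unique hconst
  exact (mul_eq_zero.mp h).resolve_left (Finset.prod_ne_zero_iff.mpr fun j _ => hne j)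

theorem hasDerivAt_rate {t : ℝ} (ht : t ∈ Ioo (-P.τ) (1 + P.τ)) (j : ι) :
    HasDerivAt (fun s => P.rate s j) (P.β t / P.a t j ^ 2 - P.rate t j ^ 2) t := by
  have hne : P.a t j ≠ 0 := (P.a_pos t ht j).ne'
  refine ((hasDerivAt_pi.mp (P.hasDerivAt_a' t ht) j).fun_div
    (hasDerivAt_pi.mp (P.hasDerivAt_a t ht) j) hne).congr_deriv ?_
  rw [rate]
  field_simp

theorem contDiffOn_rate (j : ι) :
    ContDiffOn ℝ ∞ (fun t => P.rate t j) (Ioo (-P.τ) (1 + P.τ)) :=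
  (contDiffOn_pi.mp P.contDiffOn_a' j).div (contDiffOn_pi.mp P.contDiffOn_a j)
    fun t ht => (P.a_pos t ht j).ne'

/-- The primitive of the multiplier `β`; it supplies the function of time alone by which the
potential must be shifted for Bernoulli's equation to hold. -/
noncomputable def impulse (t : ℝ) : ℝ :=
  ∫ s in (0 : ℝ)..t, P.β s

theorem hasDerivAt_impulse {t : ℝ} (ht : t ∈ Ioo (-P.τ) (1 + P.τ)) :
    HasDerivAt P.impulse (P.β t) t := by
  have hβ := P.contDiffOn_β.continuousOn
  have hsub : uIcc 0 t ⊆ Ioo (-P.τ) (1 + P.τ) :=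
    ordConnected_Ioo.uIcc_subset
      (Ioo_mem_of_mem_Icc P.τ_pos (left_mem_Icc.mpr zero_le_one)) ht
  exact intervalIntegral.integral_hasDerivAt_right (hβ.mono hsub).intervalIntegrable
    (hβ.stronglyMeasurableAtFilter isOpen_Ioo t ht) (hβ.continuousAt (isOpen_Ioo.mem_nhds ht))

theorem contDiffOn_impulse : ContDiffOn ℝ ∞ P.impulse (Ioo (-P.τ) (1 + P.τ)) :=
  (contDiffOn_infty_iff_deriv_of_isOpen isOpen_Ioo).mpr
    ⟨fun _ ht => (P.hasDerivAt_impulse ht).differentiableAt.differentiableWithinAt,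
      P.contDiffOn_β.congr fun _ ht => (P.hasDerivAt_impulse ht).deriv⟩

/-- The path of homothetic ellipsoids. -/
noncomputable def scale {ρ : ℝ} (hρ : 0 < ρ) : EllipsoidPath ι where
  τ := P.τ
  a t j := ρ * P.a t j
  a' t j := ρ * P.a' t j
  β t := ρ ^ 2 * P.β t
  τ_pos := P.τ_pos
  contDiffOn_a := P.contDiffOn_a.const_smul ρ
  contDiffOn_a' := P.contDiffOn_a'.const_smul ρ
  contDiffOn_β := contDiffOn_const.mul P.contDiffOn_β
  a_pos t ht j := mul_pos hρ (P.a_pos t ht j)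
  β_nonneg t ht := mul_nonneg (sq_nonneg ρ) (P.β_nonneg t ht)
  hasDerivAt_a t ht := (P.hasDerivAt_a t ht).const_smul ρ
  hasDerivAt_a' t ht := ((P.hasDerivAt_a' t ht).const_smul ρ).congr_deriv <| by
    ext j
    rw [Pi.smul_apply, smul_eq_mul, sq]
    field_simp
  prod_eq t ht := by simp only [Finset.prod_mul_distrib, P.prod_eq t ht]

theorem convexOn_a (j : ι) : ConvexOn ℝ (Ioo (-P.τ) (1 + P.τ)) fun t => P.a t j := by
  have ha (t : ℝ) (ht : t ∈ Ioo (-P.τ) (1 + P.τ)) := hasDerivAt_pi.mp (P.hasDerivAt_a t ht) j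
  refine convexOn_of_hasDerivWithinAt2_nonneg (convex_Ioo _ _)
    (fun t ht => (ha t ht).continuousAt.continuousWithinAt) (f' := fun t => P.a' t j)
    (f'' := fun t => P.β t / P.a t j) ?_ ?_ ?_ <;>
  rw [interior_Ioo]
  · exact fun t ht => (ha t ht).hasDerivWithinAt
  · exact fun t ht => (hasDerivAt_pi.mp (P.hasDerivAt_a' t ht) j).hasDerivWithinAt
  · exact fun t ht => div_nonneg (P.β_nonneg t ht) (P.a_pos t ht j).le

theorem a_le_lineMap {t : ℝ} (ht : t ∈ Icc (0 : ℝ) 1) (j : ι) :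
    P.a t j ≤ (1 - t) * P.a 0 j + t * P.a 1 j := by
  simpa using (P.convexOn_a j).2 (Ioo_mem_of_mem_Icc P.τ_pos (left_mem_Icc.mpr zero_le_one))
    (Ioo_mem_of_mem_Icc P.τ_pos (right_mem_Icc.mpr zero_le_one)) (sub_nonneg.mpr ht.2) ht.1
    (sub_add_cancel 1 t)

theorem a_add_a'_le (j : ι) : P.a 0 j + P.a' 0 j ≤ P.a 1 j := by
  have h₀ := Ioo_mem_of_mem_Icc P.τ_pos (left_mem_Icc.mpr zero_le_one)
  have hslope := (P.convexOn_a j).le_slope_of_hasDerivAt h₀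
    (Ioo_mem_of_mem_Icc P.τ_pos (right_mem_Icc.mpr zero_le_one)) one_pos
    (hasDerivAt_pi.mp (P.hasDerivAt_a 0 h₀) j)
  rw [slope_def_field] at hslope
  linarith

/-- The constant path of the zero-dimensional ellipsoid. -/
noncomputable def ofIsEmpty [IsEmpty ι] : EllipsoidPath ι where
  τ := 1
  a := 0
  a' := 0
  β := 0
  τ_pos := one_pos
  contDiffOn_a := contDiffOn_const
  contDiffOn_a' := contDiffOn_const
  contDiffOn_β := contDiffOn_const
  a_pos _ _ j := isEmptyElim j
  β_nonneg _ _ := le_rfl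
  hasDerivAt_a _ _ := hasDerivAt_pi.mpr fun j => isEmptyElim j
  hasDerivAt_a' _ _ := hasDerivAt_pi.mpr fun j => isEmptyElim j
  prod_eq _ _ := rfl

/-- The path of semi-axes `(δ / ∏ i, α i, α)`, where `α` solves the geodesic equation of the
hypersurface of semi-axes with product `δ` in the chart omitting the first one. -/
noncomputable def ofTail {n : ℕ} {δ τ : ℝ} (hδ : 0 < δ) (hτ : 0 < τ) {α v : ℝ → Fin n → ℝ}
    (hα : ContDiffOn ℝ ∞ α (Ioo (-τ) (1 + τ))) (hv : ContDiffOn ℝ ∞ v (Ioo (-τ) (1 + τ)))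
    (hpos : ∀ t ∈ Ioo (-τ) (1 + τ), ∀ i, 0 < α t i)
    (hα' : ∀ t ∈ Ioo (-τ) (1 + τ), HasDerivAt α (v t) t)
    (hv' : ∀ t ∈ Ioo (-τ) (1 + τ),
      HasDerivAt v (fun i => multiplier δ (α t, v t) / α t i) t) :
    EllipsoidPath (Fin (n + 1)) where
  τ := τ
  a t := Fin.cons (δ / ∏ i, α t i) (α t)
  a' t := Fin.cons (-(δ / ∏ i, α t i) * ∑ i, v t i / α t i) (v t)
  β t := multiplier δ (α t, v t)
  τ_pos := hτ
  contDiffOn_a := by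
    have hprod : ContDiffOn ℝ ∞ (fun t => ∏ i, α t i) (Ioo (-τ) (1 + τ)) :=
      contDiffOn_prod fun i _ => contDiffOn_pi.mp hα i
    exact contDiffOn_pi.mpr <| Fin.cases
      (contDiffOn_const.div hprod fun t ht => (Finset.prod_pos fun i _ => hpos t ht i).ne')
      (contDiffOn_pi.mp hα)
  contDiffOn_a' := by
    have hprod : ContDiffOn ℝ ∞ (fun t => ∏ i, α t i) (Ioo (-τ) (1 + τ)) :=
      contDiffOn_prod fun i _ => contDiffOn_pi.mp hα i
    have hsum : ContDiffOn ℝ ∞ (fun t => ∑ i, v t i / α t i) (Ioo (-τ) (1 + τ)) :=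
      ContDiffOn.sum fun i _ =>
        (contDiffOn_pi.mp hv i).div (contDiffOn_pi.mp hα i) fun t ht => (hpos t ht i).ne'
    exact contDiffOn_pi.mpr <| Fin.cases
      ((contDiffOn_const.div hprod fun t ht =>
        (Finset.prod_pos fun i _ => hpos t ht i).ne').neg.mul hsum)
      (contDiffOn_pi.mp hv)
  contDiffOn_β := contDiffOn_multiplier.comp (contDiffOn_const.prodMk (hα.prodMk hv))
    fun t ht => ⟨mem_univ δ, hpos t ht, mem_univ _⟩
  a_pos t ht := Fin.cases (div_pos hδ (Finset.prod_pos fun i _ => hpos t ht i)) (hpos t ht)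
  β_nonneg t ht := multiplier_nonneg δ (hpos t ht) (v t)
  hasDerivAt_a t ht := hasDerivAt_pi.mpr <| Fin.cases
    (hasDerivAt_div_prod δ (hα' t ht) fun i => (hpos t ht i).ne') (hasDerivAt_pi.mp (hα' t ht))
  hasDerivAt_a' t ht := hasDerivAt_pi.mpr <| Fin.cases
    (hasDerivAt_velocity_div_prod δ (hpos t ht) (hα' t ht) (hv' t ht))
    (hasDerivAt_pi.mp (hv' t ht))
  prod_eq t ht := by
    have hcons {s : ℝ} (hs : s ∈ Ioo (-τ) (1 + τ)) :
        ∏ j, (Fin.cons (δ / ∏ i, α s i) (α s) : Fin (n + 1) → ℝ) j = δ := by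
      rw [Fin.prod_cons, div_mul_cancel₀ _ (Finset.prod_pos fun i _ => hpos s hs i).ne']
    rw [hcons ht, hcons (Ioo_mem_of_mem_Icc hτ (left_mem_Icc.mpr zero_le_one))]

end EllipsoidPath

theorem exists_multiplier_solution {ι : Type*} [Fintype ι] {l : ι → ℝ} (hl : ∀ i, 0 < l i) {ε : ℝ}
    (hε : 0 < ε) :
    ∃ δ > 0, ∃ τ > 0, ∃ α v : ℝ → ι → ℝ, α 0 = 1 ∧ v 0 = l - 1 ∧
      ContDiffOn ℝ ∞ α (Ioo (-τ) (1 + τ)) ∧ ContDiffOn ℝ ∞ v (Ioo (-τ) (1 + τ)) ∧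
      ∀ t ∈ Ioo (-τ) (1 + τ), (∀ i, 0 < α t i) ∧ ‖α t - (1 + t • (l - 1))‖ ≤ ε ∧
        HasDerivAt α (v t) t ∧ HasDerivAt v (fun i => multiplier δ (α t, v t) / α t i) t := by
  have hopen : IsOpen {α : ι → ℝ | ∀ i, 0 < α i} := by
    simp only [ofPred_forall]
    exact isOpen_iInter_of_finite fun i => isOpen_lt continuous_const (continuous_apply i)
  have hline : ∀ t ∈ Icc (0 : ℝ) 1, (1 : ι → ℝ) + t • (l - 1) ∈ {α : ι → ℝ | ∀ i, 0 < α i} := by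
    intro t ht i
    have := hl i
    simp only [Pi.add_apply, Pi.one_apply, Pi.smul_apply, Pi.sub_apply, smul_eq_mul]
    rcases ht.2.eq_or_lt with rfl | ht₁
    · linarith
    · nlinarith [ht.1]
  obtain ⟨τ, hτ, hδ⟩ := exists_forall_eventually_solution_near_line hopen
    (F := fun δ q i => multiplier δ q / q.1 i)
    (contDiffOn_pi.mpr fun i => contDiffOn_multiplier.div
      (ContDiff.contDiffOn (by fun_prop)) fun q hq => (hq.2.1 i).ne')
    (fun α _ v => by ext i; simp [multiplier]) hline hε
  obtain ⟨δ, ⟨α, v, h⟩, hδ⟩ :=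
    ((hδ.filter_mono nhdsWithin_le_nhds).and (self_mem_nhdsWithin (s := Ioi 0))).exists
  exact ⟨δ, hδ, τ, hτ, α, v, h⟩

theorem exists_ellipsoidPath {d : ℕ} {l : Fin d → ℝ} (hl : ∀ j, 0 < l j) (hprod : 1 ≤ ∏ j, l j)
    {ε : ℝ} (hε : 0 < ε) :
    ∃ P : EllipsoidPath (Fin d), ∀ t ∈ Icc (0 : ℝ) 1, ∀ j,
      P.a t j ≤ P.a 0 j * (1 - t + t * (l j + ε)) := by
  rcases d with _ | n
  · exact ⟨.ofIsEmpty, fun t _ j => j.elim0⟩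
  obtain ⟨δ, hδ, τ, hτ, α, v, hα₀, hv₀, hα, hv, h⟩ :=
    exists_multiplier_solution (fun i : Fin n => hl i.succ) hε
  let P := EllipsoidPath.ofTail hδ hτ hα hv (fun t ht => (h t ht).1) (fun t ht => (h t ht).2.2.1)
    fun t ht => (h t ht).2.2.2
  suffices hend : ∀ j, P.a 1 j ≤ P.a 0 j * (l j + ε) from
    ⟨P, fun t ht j => (P.a_le_lineMap ht j).trans
      (by linarith [mul_le_mul_of_nonneg_left (hend j) ht.1])⟩
  have h₁ := Ioo_mem_of_mem_Icc hτ (right_mem_Icc.mpr zero_le_one)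
  refine Fin.cases ?_ fun i => ?_
  · have hlow : ∏ i : Fin n, l i.succ ≤ ∏ i, α 1 i := by
      refine Finset.prod_le_prod (fun i _ => (hl _).le) fun i _ => ?_
      have := P.a_add_a'_le i.succ
      simpa [P, EllipsoidPath.ofTail, hα₀, hv₀] using this
    have hα₁ : 0 < ∏ i, α 1 i := Finset.prod_pos fun i _ => (h 1 h₁).1 i
    suffices δ / ∏ i, α 1 i ≤ δ * (l 0 + ε) by simpa [P, EllipsoidPath.ofTail, hα₀]
    rw [div_le_iff₀ hα₁, mul_assoc]
    refine le_mul_of_one_le_right hδ.le ?_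
    calc 1 ≤ l 0 * ∏ i : Fin n, l i.succ := by rwa [← Fin.prod_univ_succ]
      _ ≤ (l 0 + ε) * ∏ i, α 1 i :=
        mul_le_mul (by linarith) hlow (Finset.prod_nonneg fun i _ => (hl _).le) (by linarith [hl 0])
  · have hnear := (abs_le.mp ((norm_le_pi_norm _ i).trans (h 1 h₁).2.1)).2
    simp only [Pi.sub_apply, Pi.add_apply, Pi.one_apply, one_smul] at hnear
    suffices α 1 i ≤ l i.succ + ε by simpa [P, EllipsoidPath.ofTail, hα₀]
    linarith

end EllipsoidPath

/-! ### Moving ellipsoids as Euler droplets -/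

section Diagonal

variable {ι E : Type*} [Fintype ι] [NormedAddCommGroup E] [InnerProductSpace ℝ E]

/-- The operator that is diagonal in the orthonormal basis `b`, with eigenvalues `w`. -/
noncomputable def diagonal (b : OrthonormalBasis ι ℝ E) (w : ι → ℝ) : E →L[ℝ] E :=
  ∑ j, w j • (innerSL ℝ (b j)).smulRight (b j)

variable (b : OrthonormalBasis ι ℝ E)

theorem diagonal_apply (w : ι → ℝ) (x : E) : diagonal b w x = ∑ j, (w j * ⟪b j, x⟫) • b j := by
  simp only [diagonal, sum_apply, smul_apply, ContinuousLinearMap.smulRight_apply,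
    innerSL_apply_apply, smul_smul]

theorem inner_diagonal (w : ι → ℝ) (j : ι) (x : E) : ⟪b j, diagonal b w x⟫ = w j * ⟪b j, x⟫ := by
  classical
  simp only [diagonal_apply, inner_sum, inner_smul_right, OrthonormalBasis.inner_eq_ite, mul_ite,
    mul_one, mul_zero, Finset.sum_ite_eq, Finset.mem_univ, if_true]

theorem eq_of_inner_eq {x y : E} (h : ∀ j, ⟪b j, x⟫ = ⟪b j, y⟫) : x = y :=
  b.repr.injective (PiLp.ext fun j => by simpa only [b.repr_apply_apply] using h j)

theorem diagonal_diagonal (w w' : ι → ℝ) (x : E) :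
    diagonal b w (diagonal b w' x) = diagonal b (w * w') x :=
  eq_of_inner_eq b fun j => by simp only [inner_diagonal, Pi.mul_apply, mul_assoc]

theorem diagonal_one (x : E) : diagonal b 1 x = x :=
  eq_of_inner_eq b fun j => by simp only [inner_diagonal, Pi.one_apply, one_mul]

theorem norm_diagonal_sq (w : ι → ℝ) (x : E) :
    ‖diagonal b w x‖ ^ 2 = ∑ j, (w j * ⟪b j, x⟫) ^ 2 := by
  rw [← b.sum_sq_norm_inner_right]
  simp only [inner_diagonal, Real.norm_eq_abs, sq_abs]

theorem norm_diagonal_le {w : ι → ℝ} {r : ℝ} (hr : 0 ≤ r) (hw : ∀ j, |w j| ≤ r) (x : E) :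
    ‖diagonal b w x‖ ≤ r * ‖x‖ := by
  refine le_of_sq_le_sq ?_ (mul_nonneg hr (norm_nonneg x))
  rw [norm_diagonal_sq, mul_pow, ← b.sum_sq_norm_inner_right, Finset.mul_sum]
  simp only [mul_pow, Real.norm_eq_abs, sq_abs]
  gcongr ∑ j, ?_ * _ with j
  exact sq_le_sq' (neg_le_of_abs_le (hw j)) (le_of_abs_le (hw j))

theorem det_diagonal (w : ι → ℝ) : (diagonal b w).det = ∏ j, w j := by
  classical
  have htoLin : (diagonal b w : E →ₗ[ℝ] E) =
      Matrix.toLin b.toBasis b.toBasis (Matrix.diagonal w) := by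
    ext x
    simp [diagonal_apply, Matrix.toLin_apply, Matrix.mulVec_diagonal, b.repr_apply_apply]
  rw [ContinuousLinearMap.det, htoLin, LinearMap.det_toLin, Matrix.det_diagonal]

theorem exists_eq_diagonal_of_isPositive [FiniteDimensional ℝ E] {n : ℕ} (hn : finrank ℝ E = n)
    {A : E →L[ℝ] E} (hpos : A.IsPositive) (hdet : 1 ≤ A.det) :
    ∃ (b : OrthonormalBasis (Fin n) ℝ E) (l : Fin n → ℝ),
      (∀ j, 0 < l j) ∧ 1 ≤ ∏ j, l j ∧ A = diagonal b l := by
  have hsymm := hpos.isSymmetric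
  set b := hsymm.eigenvectorBasis hn
  set l := hsymm.eigenvalues hn
  have hA : A = diagonal b l := by
    refine ContinuousLinearMap.ext fun h => eq_of_inner_eq b fun j => ?_
    have hadj := hsymm (b j) h
    rw [hsymm.apply_eigenvectorBasis hn j, real_inner_smul_left] at hadj
    rw [inner_diagonal]
    exact hadj.symm
  have hprod : A.det = ∏ j, l j := by rw [hA, det_diagonal]
  rw [hprod] at hdet
  refine ⟨b, l, fun j => ?_, hdet, hA⟩
  refine (hpos.toLinearMap.nonneg_eigenvalues hn j).lt_of_ne fun hzero => ?_
  rw [Finset.prod_eq_zero (Finset.mem_univ j) hzero.symm] at hdet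
  exact one_pos.not_ge hdet

end Diagonal

section MovingEllipsoid

/-- An ellipsoid with axes in the fixed directions of `basis`, centered at `base + t • velocity`
and with the semi-axes of `path` at time `t`: the fluid domain of an explicit solution of the
droplet equations. -/
structure MovingEllipsoid (ι E : Type*) [Fintype ι] [NormedAddCommGroup E]
    [InnerProductSpace ℝ E] where
  basis : OrthonormalBasis ι ℝ E
  path : EllipsoidPath ι
  base : E
  velocity : E

namespace MovingEllipsoid

variable {ι E : Type*} [Fintype ι] [NormedAddCommGroup E] [InnerProductSpace ℝ E]
variable (K : MovingEllipsoid ι E)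

/-- The interval of times around `[0,1]` on which the ellipsoid evolves smoothly. -/
def times : Set ℝ :=
  Ioo (-K.path.τ) (1 + K.path.τ)

theorem mem_times {t : ℝ} (ht : t ∈ Icc (0 : ℝ) 1) : t ∈ K.times :=
  Ioo_mem_of_mem_Icc K.path.τ_pos ht

theorem a_pos {t : ℝ} (ht : t ∈ Icc (0 : ℝ) 1) (j : ι) : 0 < K.path.a t j :=
  K.path.a_pos t (K.mem_times ht) j

theorem a_zero_pos (j : ι) : 0 < K.path.a 0 j :=
  K.a_pos (left_mem_Icc.mpr zero_le_one) j

/-- The center at time `t`. -/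
def center (t : ℝ) : E :=
  K.base + t • K.velocity

/-- The `j`-th coordinate of `x` in the frame moving with the ellipsoid. -/
noncomputable def coord (j : ι) (x : E) (t : ℝ) : ℝ :=
  ⟪K.basis j, x - K.center t⟫

/-- The position of `x` relative to the ellipsoid, which is mapped to the unit ball. -/
noncomputable def normalized (t : ℝ) (x : E) : E :=
  diagonal K.basis (K.path.a t)⁻¹ (x - K.center t)

/-- The open solid ellipsoid at time `t`. -/
def domain (t : ℝ) : Set E :=
  {x | ‖K.normalized t x‖ < 1}

/-- The affine flow, which scales the `j`-th axis by `a t j / a 0 j`. -/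
noncomputable def flow (z : E) (t : ℝ) : E :=
  K.center t + diagonal K.basis (K.path.a t / K.path.a 0) (z - K.base)

/-- The Eulerian velocity field of `flow`. -/
noncomputable def velocityField (x : E) (t : ℝ) : E :=
  K.velocity + diagonal K.basis (K.path.rate t) (x - K.center t)

/-- The velocity potential. -/
noncomputable def potential (x : E) (t : ℝ) : ℝ :=
  ⟪K.velocity, x - K.center t⟫ + 1 / 2 * ‖K.velocity‖ ^ 2 * t
    + 1 / 2 * ∑ j, K.path.rate t j * K.coord j x t ^ 2 - 1 / 2 * K.path.impulse t

/-- The pressure. -/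
noncomputable def pressure (x : E) (t : ℝ) : ℝ :=
  1 / 2 * K.path.β t * (1 - ‖K.normalized t x‖ ^ 2)

theorem center_zero : K.center 0 = K.base := by
  simp only [center, zero_smul, add_zero]

theorem continuous_normalized (t : ℝ) : Continuous (K.normalized t) := by
  unfold normalized
  fun_prop

theorem isOpen_domain (t : ℝ) : IsOpen (K.domain t) :=
  isOpen_lt (K.continuous_normalized t).norm continuous_const

theorem diagonal_normalized (w : ι → ℝ) (t : ℝ) (x : E) :
    diagonal K.basis w (K.normalized t x) = diagonal K.basis (w / K.path.a t) (x - K.center t) := by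
  rw [normalized, diagonal_diagonal, div_eq_mul_inv]

theorem diagonal_div_self {t : ℝ} (ht : t ∈ Icc (0 : ℝ) 1) (x : E) :
    diagonal K.basis (K.path.a t / K.path.a t) x = x := by
  have hone : K.path.a t / K.path.a t = 1 := funext fun j => div_self (K.a_pos ht j).ne'
  rw [hone, diagonal_one]

theorem center_add_diagonal_normalized {t : ℝ} (ht : t ∈ Icc (0 : ℝ) 1) (x : E) :
    K.center t + diagonal K.basis (K.path.a t) (K.normalized t x) = x := by
  rw [diagonal_normalized, K.diagonal_div_self ht, add_sub_cancel]

theorem normalized_center_add_diagonal {t : ℝ} (ht : t ∈ Icc (0 : ℝ) 1) (u : E) :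
    K.normalized t (K.center t + diagonal K.basis (K.path.a t) u) = u := by
  rw [normalized, add_sub_cancel_left, diagonal_diagonal, mul_comm, ← div_eq_mul_inv,
    K.diagonal_div_self ht]

theorem domain_eq_image {t : ℝ} (ht : t ∈ Icc (0 : ℝ) 1) :
    K.domain t = (fun u => K.center t + diagonal K.basis (K.path.a t) u) '' ball 0 1 := by
  ext x
  refine ⟨fun hx => ⟨K.normalized t x, mem_ball_zero_iff.mpr hx,
    K.center_add_diagonal_normalized ht x⟩, ?_⟩
  rintro ⟨u, hu, rfl⟩
  rw [domain, mem_ofPred_eq, K.normalized_center_add_diagonal ht]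
  exact mem_ball_zero_iff.mp hu

theorem flow_eq (z : E) (t : ℝ) :
    K.flow z t = K.center t + diagonal K.basis (K.path.a t) (K.normalized 0 z) := by
  rw [flow, diagonal_normalized, center_zero]

theorem flow_zero (z : E) : K.flow z 0 = z := by
  rw [flow_eq, K.center_add_diagonal_normalized (left_mem_Icc.mpr zero_le_one)]

theorem image_flow_domain {t : ℝ} (ht : t ∈ Icc (0 : ℝ) 1) :
    (fun z => K.flow z t) '' K.domain 0 = K.domain t := by
  have h₀ := left_mem_Icc.mpr (zero_le_one' ℝ)
  rw [K.domain_eq_image ht, K.domain_eq_image h₀, image_image]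
  simp only [flow_eq, K.normalized_center_add_diagonal h₀]

theorem norm_sub_center_le {t r : ℝ} (ht : t ∈ Icc (0 : ℝ) 1) (hr : 0 ≤ r)
    (har : ∀ j, K.path.a t j ≤ r) (x : E) : ‖x - K.center t‖ ≤ r * ‖K.normalized t x‖ := by
  rw [sub_eq_of_eq_add' (K.center_add_diagonal_normalized ht x).symm]
  exact norm_diagonal_le _ hr (fun j => (abs_of_pos (K.a_pos ht j)).trans_le (har j)) _

theorem domain_subset_closedBall {t r : ℝ} (ht : t ∈ Icc (0 : ℝ) 1) (hr : 0 ≤ r)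
    (har : ∀ j, K.path.a t j ≤ r) : K.domain t ⊆ closedBall (K.center t) r := fun x hx =>
  mem_closedBall_iff_norm.mpr <|
    (K.norm_sub_center_le ht hr har x).trans (mul_le_of_le_one_right hr hx.le)

theorem isBounded_domain {t : ℝ} (ht : t ∈ Icc (0 : ℝ) 1) : Bornology.IsBounded (K.domain t) :=
  isBounded_closedBall.subset <| K.domain_subset_closedBall ht (norm_nonneg (K.path.a t))
    fun j => (le_abs_self _).trans (norm_le_pi_norm (K.path.a t) j)

theorem hasDerivAt_center (t : ℝ) : HasDerivAt K.center K.velocity t :=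
  (((hasDerivAt_id t).smul_const K.velocity).const_add K.base).congr_deriv (one_smul ℝ _)

theorem hasDerivAt_inner_sub_center (w x : E) (t : ℝ) :
    HasDerivAt (fun s => ⟪w, x - K.center s⟫) (-⟪w, K.velocity⟫) t :=
  ((innerSL ℝ w).hasFDerivAt.comp_hasDerivAt t
    ((K.hasDerivAt_center t).const_sub x)).congr_deriv (by simp)

theorem hasFDerivAt_inner_sub_center (w x : E) (t : ℝ) :
    HasFDerivAt (fun y => ⟪w, y - K.center t⟫) (innerSL ℝ w) x := by
  have hcomp := (innerSL ℝ w).hasFDerivAt.comp x ((hasFDerivAt_id x).sub_const (K.center t))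
  exact hcomp

theorem hasDerivAt_flow (z : E) {t : ℝ} (ht : t ∈ Icc (0 : ℝ) 1) :
    HasDerivAt (K.flow z) (K.velocityField (K.flow z t) t) t := by
  have ha (j : ι) := hasDerivAt_pi.mp (K.path.hasDerivAt_a t (K.mem_times ht)) j
  have hrate : K.path.rate t * K.path.a t = K.path.a' t :=
    funext fun j => div_mul_cancel₀ _ (K.a_pos ht j).ne'
  have hflow : K.flow z = fun s => K.center s +
      ∑ j, (K.path.a s j * ⟪K.basis j, K.normalized 0 z⟫) • K.basis j :=
    funext fun s => by rw [flow_eq, diagonal_apply]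
  rw [velocityField, flow_eq, add_sub_cancel_left, diagonal_diagonal, hrate, hflow,
    diagonal_apply]
  exact (K.hasDerivAt_center t).add (HasDerivAt.fun_sum fun j _ =>
    ((ha j).mul_const _).smul_const (K.basis j))

theorem hasFDerivAt_potential (x : E) (t : ℝ) :
    HasFDerivAt (fun y => K.potential y t) (innerSL ℝ (K.velocityField x t)) x := by
  have hsum : HasFDerivAt (fun y => ∑ j, K.path.rate t j * K.coord j y t ^ 2)
      (∑ j, K.path.rate t j • ((2 * K.coord j x t) • innerSL ℝ (K.basis j))) x :=
    HasFDerivAt.fun_sum fun j _ =>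
      (((K.hasFDerivAt_inner_sub_center (K.basis j) x t).pow 2).const_mul
        (K.path.rate t j)).congr_fderiv (by rw [coord, pow_one, nsmul_eq_mul, Nat.cast_ofNat])
  refine ((((K.hasFDerivAt_inner_sub_center K.velocity x t).add_const
    (1 / 2 * ‖K.velocity‖ ^ 2 * t)).add (hsum.const_mul (1 / 2))).sub_const _).congr_fderiv ?_
  rw [velocityField, diagonal_apply, map_add, map_sum, Finset.smul_sum]
  congr! 2 with j
  rw [map_smul, smul_smul, smul_smul, coord]
  congr 1
  ring

theorem gradient_potential [CompleteSpace E] (x : E) (t : ℝ) :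
    gradient (fun y => K.potential y t) x = K.velocityField x t :=
  HasGradientAt.gradient (hasGradientAt_iff_hasFDerivAt.mpr (K.hasFDerivAt_potential x t))

theorem fderiv_fderiv_potential (x w : E) (t : ℝ) :
    fderiv ℝ (fun y => fderiv ℝ (fun y' => K.potential y' t) y w) x w =
      ∑ j, K.path.rate t j * ⟪K.basis j, w⟫ ^ 2 := by
  have hfst (y : E) : fderiv ℝ (fun y' => K.potential y' t) y w =
      ⟪K.velocity, w⟫ + ∑ j, K.path.rate t j * K.coord j y t * ⟪K.basis j, w⟫ := by
    simp only [(K.hasFDerivAt_potential y t).fderiv, innerSL_apply_apply, velocityField,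
      diagonal_apply, inner_add_left, sum_inner, real_inner_smul_left, coord]
  have hsnd : HasFDerivAt
      (fun y => ⟪K.velocity, w⟫ + ∑ j, K.path.rate t j * K.coord j y t * ⟪K.basis j, w⟫)
      (∑ j, ⟪K.basis j, w⟫ • (K.path.rate t j • innerSL ℝ (K.basis j))) x :=
    (HasFDerivAt.fun_sum fun j _ =>
      ((K.hasFDerivAt_inner_sub_center (K.basis j) x t).const_mul _).mul_const _).const_add _
  simp only [hfst, hsnd.fderiv, sum_apply, smul_apply, innerSL_apply_apply, smul_eq_mul]
  exact Finset.sum_congr rfl fun j _ => by ring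

theorem laplacian_potential {κ : Type*} [Fintype κ] (f : OrthonormalBasis κ ℝ E) (x : E) {t : ℝ}
    (ht : t ∈ Icc (0 : ℝ) 1) :
    ∑ k, fderiv ℝ (fun y => fderiv ℝ (fun y' => K.potential y' t) y (f k)) x (f k) = 0 := by
  have hnorm (j : ι) : ∑ k, ⟪K.basis j, f k⟫ ^ 2 = 1 := by
    simpa using f.sum_sq_norm_inner_left (K.basis j)
  simp only [fderiv_fderiv_potential]
  rw [Finset.sum_comm]
  simp only [← Finset.mul_sum, hnorm, mul_one]
  exact K.path.sum_rate_eq_zero (K.mem_times ht)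

theorem norm_velocityField_sq (x : E) (t : ℝ) :
    ‖K.velocityField x t‖ ^ 2 =
      ‖K.velocity‖ ^ 2 + 2 * ∑ j, K.path.rate t j * K.coord j x t * ⟪K.basis j, K.velocity⟫
        + ∑ j, (K.path.rate t j * K.coord j x t) ^ 2 := by
  rw [velocityField, norm_add_sq_real, norm_diagonal_sq, diagonal_apply, inner_sum]
  simp only [inner_smul_right, real_inner_comm K.velocity, coord]

theorem norm_normalized_sq (t : ℝ) (x : E) :
    ‖K.normalized t x‖ ^ 2 = ∑ j, (K.coord j x t / K.path.a t j) ^ 2 := by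
  rw [normalized, norm_diagonal_sq]
  simp only [Pi.inv_apply, inv_mul_eq_div, coord]

theorem hasDerivAt_potential (x : E) {t : ℝ} (ht : t ∈ Icc (0 : ℝ) 1) :
    HasDerivAt (K.potential x)
      (-(1 / 2) * ‖K.velocityField x t‖ ^ 2 - K.pressure x t) t := by
  have hsum : HasDerivAt (fun s => ∑ j, K.path.rate s j * K.coord j x s ^ 2)
      (∑ j, (K.path.β t * (K.coord j x t / K.path.a t j) ^ 2
        - (K.path.rate t j * K.coord j x t) ^ 2
        - 2 * (K.path.rate t j * K.coord j x t * ⟪K.basis j, K.velocity⟫))) t :=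
    HasDerivAt.fun_sum fun j _ =>
      ((K.path.hasDerivAt_rate (K.mem_times ht) j).fun_mul
        ((K.hasDerivAt_inner_sub_center (K.basis j) x t).fun_pow 2)).congr_deriv (by
          rw [← coord]
          ring)
  refine ((((K.hasDerivAt_inner_sub_center K.velocity x t).add
    ((hasDerivAt_id t).const_mul (1 / 2 * ‖K.velocity‖ ^ 2))).add (hsum.const_mul (1 / 2))).sub
    ((K.path.hasDerivAt_impulse (K.mem_times ht)).const_mul (1 / 2))).congr_deriv ?_
  rw [norm_velocityField_sq, pressure, norm_normalized_sq, real_inner_self_eq_norm_sq]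
  simp only [Finset.sum_sub_distrib, ← Finset.mul_sum]
  ring

theorem contDiff_coord (j : ι) : ContDiff ℝ ∞ fun q : E × ℝ => K.coord j q.1 q.2 := by
  unfold coord center
  exact contDiff_const.inner ℝ (by fun_prop)

theorem contDiffOn_comp_snd {f : ℝ → ℝ} (hf : ContDiffOn ℝ ∞ f K.times) :
    ContDiffOn ℝ ∞ (fun q : E × ℝ => f q.2) (univ ×ˢ K.times) :=
  hf.comp contDiff_snd.contDiffOn fun _ hq => hq.2

theorem contDiffOn_potential :
    ContDiffOn ℝ ∞ (fun q : E × ℝ => K.potential q.1 q.2) (univ ×ˢ K.times) := by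
  have htransport : ContDiff ℝ ∞ fun q : E × ℝ =>
      ⟪K.velocity, q.1 - K.center q.2⟫ + 1 / 2 * ‖K.velocity‖ ^ 2 * q.2 := by
    unfold center
    exact (contDiff_const.inner ℝ (by fun_prop)).add (by fun_prop)
  exact (htransport.contDiffOn.add (contDiffOn_const.mul (ContDiffOn.sum fun j _ =>
    (K.contDiffOn_comp_snd (K.path.contDiffOn_rate j)).mul
      ((K.contDiff_coord j).contDiffOn.pow 2)))).sub
    (contDiffOn_const.mul (K.contDiffOn_comp_snd K.path.contDiffOn_impulse))

theorem contDiffOn_pressure :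
    ContDiffOn ℝ ∞ (fun q : E × ℝ => K.pressure q.1 q.2) (univ ×ˢ K.times) := by
  simp only [pressure, norm_normalized_sq]
  exact (contDiffOn_const.mul (K.contDiffOn_comp_snd K.path.contDiffOn_β)).mul
    (contDiffOn_const.sub (ContDiffOn.sum fun j _ => ((K.contDiff_coord j).contDiffOn.div
      (K.contDiffOn_comp_snd (contDiffOn_pi.mp K.path.contDiffOn_a j))
      fun q hq => (K.path.a_pos q.2 hq.2 j).ne').pow 2))

theorem closure_spaceTime_subset {Ω : ℝ → Set E} :
    closure (⋃ t ∈ Icc (0 : ℝ) 1, Ω t ×ˢ ({t} : Set ℝ)) ⊆ univ ×ˢ K.times := by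
  have hslab : closure (⋃ t ∈ Icc (0 : ℝ) 1, Ω t ×ˢ ({t} : Set ℝ)) ⊆ univ ×ˢ Icc (0 : ℝ) 1 := by
    refine closure_minimal ?_ (isClosed_univ.prod isClosed_Icc)
    exact iUnion₂_subset fun t ht => prod_mono (subset_univ _) (singleton_subset_iff.mpr ht)
  exact hslab.trans (prod_mono le_rfl fun t ht => K.mem_times ht)

end MovingEllipsoid

/-- The Euler droplet swept out by a moving ellipsoid. -/
noncomputable def MovingEllipsoid.toEulerDroplet {ι : Type*} [Fintype ι] {d : ℕ}
    (K : MovingEllipsoid ι (EuclideanSpace ℝ (Fin d))) : EulerDroplet d where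
  Ω := K.domain
  X := K.flow
  φ := K.potential
  p := K.pressure
  isOpen_Ω t _ := K.isOpen_domain t
  isBounded_Ω _ ht := K.isBounded_domain ht
  smooth := ⟨univ ×ˢ K.times, isOpen_univ.prod isOpen_Ioo, K.closure_spaceTime_subset,
    K.contDiffOn_potential, K.contDiffOn_pressure⟩
  flow_init z _ := K.flow_zero z
  flow_deriv z _ t ht := by
    rw [K.gradient_potential]
    exact K.hasDerivAt_flow z ht
  flow_image _ ht := K.image_flow_domain ht
  harmonic t ht x _ := by
    simpa using K.laplacian_potential (EuclideanSpace.basisFun (Fin d) ℝ) x ht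
  bernoulli t ht x _ := by
    rw [(K.hasDerivAt_potential x ht).deriv, K.gradient_potential]
    ring
  pressure_bc t _ x hx := by
    have hnorm : ‖K.normalized t x‖ = 1 :=
      frontier_lt_subset_eq (K.continuous_normalized t).norm continuous_const hx
    rw [MovingEllipsoid.pressure, hnorm, one_pow, sub_self, mul_zero]

/-- The droplet without fluid, which pads a finite spray to an infinite sequence. -/
noncomputable def emptyDroplet (d : ℕ) : EulerDroplet d where
  Ω _ := ∅
  X z _ := z
  φ _ _ := 0
  p _ _ := 0
  isOpen_Ω _ _ := isOpen_empty
  isBounded_Ω _ _ := Bornology.isBounded_empty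
  smooth := ⟨univ, isOpen_univ, subset_univ _, contDiffOn_const, contDiffOn_const⟩
  flow_init _ h := h.elim
  flow_deriv _ h := h.elim
  flow_image _ _ := image_empty _
  harmonic _ _ _ h := h.elim
  bernoulli _ _ _ h := h.elim
  pressure_bc _ _ _ h := by simp at h

end MovingEllipsoid

namespace EllipsoidPath

theorem exists_bounds {ι : Type*} [Fintype ι] (P : EllipsoidPath ι) :
    ∃ m M, 0 < m ∧ 0 < M ∧ ∀ t ∈ Icc (0 : ℝ) 1, ∀ j,
      m ≤ P.a t j ∧ P.a t j ≤ M ∧ |P.a' t j| ≤ M := by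
  have hsub : Icc (0 : ℝ) 1 ⊆ Ioo (-P.τ) (1 + P.τ) := fun t => Ioo_mem_of_mem_Icc P.τ_pos
  have ha := P.contDiffOn_a.continuousOn.mono hsub
  obtain ⟨M, hM⟩ := isCompact_Icc.exists_bound_of_continuousOn ha
  obtain ⟨M', hM'⟩ :=
    isCompact_Icc.exists_bound_of_continuousOn (P.contDiffOn_a'.continuousOn.mono hsub)
  obtain ⟨N, hN⟩ := isCompact_Icc.exists_bound_of_continuousOn <| continuousOn_pi.mpr fun j =>
    (continuousOn_pi.mp ha j).inv₀ fun t ht => (P.a_pos t (hsub ht) j).ne'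
  refine ⟨(max N 1)⁻¹, max (max M M') 1, by positivity, by positivity, fun t ht j => ⟨?_, ?_, ?_⟩⟩
  · refine inv_le_of_inv_le₀ (P.a_pos t (hsub ht) j) ?_
    exact (le_abs_self _).trans ((norm_le_pi_norm _ j).trans ((hN t ht).trans (le_max_left N 1)))
  · exact (le_abs_self _).trans ((norm_le_pi_norm (P.a t) j).trans ((hM t ht).trans (by simp)))
  · exact (norm_le_pi_norm (P.a' t) j).trans ((hM' t ht).trans (by simp))

end EllipsoidPath

namespace MovingEllipsoid

variable {ι E : Type*} [Fintype ι] [NormedAddCommGroup E] [InnerProductSpace ℝ E]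
variable (K : MovingEllipsoid ι E)

theorem convex_domain {t : ℝ} (ht : t ∈ Icc (0 : ℝ) 1) : Convex ℝ (K.domain t) := by
  rw [K.domain_eq_image ht, ← image_image (K.center t + ·)]
  exact ((convex_ball 0 1).linear_image (diagonal K.basis (K.path.a t)).toLinearMap).translate _

theorem volume_domain [FiniteDimensional ℝ E] [MeasurableSpace E] [BorelSpace E] {t : ℝ}
    (ht : t ∈ Icc (0 : ℝ) 1) : volume (K.domain t) = volume (K.domain 0) := by
  have hvol (s : ℝ) (hs : s ∈ Icc (0 : ℝ) 1) : volume (K.domain s) =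
      ENNReal.ofReal |∏ j, K.path.a 0 j| * volume (ball (0 : E) 1) := by
    rw [K.domain_eq_image hs, ← image_image (K.center s + ·), image_add_left,
      measure_preimage_add, Measure.addHaar_image_continuousLinearMap,
      ← ContinuousLinearMap.det, det_diagonal,
      K.path.prod_eq s (K.mem_times hs)]
  rw [hvol t ht, hvol 0 (left_mem_Icc.mpr zero_le_one)]

theorem ball_subset_domain {t m : ℝ} (hm : 0 < m) (h : ∀ j, m ≤ K.path.a t j) :
    ball (K.center t) m ⊆ K.domain t := fun x hx => by
  rw [mem_ball_iff_norm] at hx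
  have hinv (j : ι) : |(K.path.a t)⁻¹ j| ≤ m⁻¹ := by
    rw [Pi.inv_apply, abs_inv, abs_of_pos (hm.trans_le (h j))]
    exact inv_anti₀ hm (h j)
  calc ‖K.normalized t x‖ ≤ m⁻¹ * ‖x - K.center t‖ :=
        norm_diagonal_le _ (inv_nonneg.mpr hm.le) hinv _
    _ < 1 := (inv_mul_lt_one₀ hm).mpr hx

theorem norm_velocityField_le {t r : ℝ} (hr : 0 ≤ r) (har : ∀ j, |K.path.a' t j| ≤ r)
    {x : E} (hx : x ∈ K.domain t) : ‖K.velocityField x t‖ ≤ ‖K.velocity‖ + r := by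
  have hdiag : diagonal K.basis (K.path.rate t) (x - K.center t) =
      diagonal K.basis (K.path.a' t) (K.normalized t x) := by
    rw [diagonal_normalized]
    rfl
  refine (norm_add_le _ _).trans (add_le_add_right ?_ _)
  rw [hdiag]
  exact (norm_diagonal_le _ hr har _).trans (mul_le_of_le_one_right hr (le_of_lt hx))

theorem norm_normalized_zero_le {D : ι → ℝ} {t θ Q : ℝ} {x z err : E} (ht : t ∈ Icc (0 : ℝ) 1)
    (hD : ∀ j, 0 < D j) (hθ : 0 ≤ θ) (hQ : 0 ≤ Q)
    (haθ : ∀ j, K.path.a t j ≤ θ * (K.path.a 0 j * D j))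
    (haQ : ∀ j, (K.path.a 0 j * D j)⁻¹ ≤ Q)
    (hz : z - K.center t = diagonal K.basis D (x - K.base) + err) :
    ‖K.normalized 0 x‖ ≤ θ * ‖K.normalized t z‖ + Q * ‖err‖ := by
  have haD (j : ι) : 0 < K.path.a 0 j * D j := mul_pos (K.a_zero_pos j) (hD j)
  have hsplit : K.normalized 0 x =
      diagonal K.basis (K.path.a t / (K.path.a 0 * D)) (K.normalized t z)
        - diagonal K.basis (K.path.a 0 * D)⁻¹ err := by
    refine eq_of_inner_eq K.basis fun j => ?_
    have := (K.a_pos ht j).ne'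
    have := (K.a_zero_pos j).ne'
    have := (hD j).ne'
    rw [diagonal_normalized, hz, normalized, center_zero]
    simp only [inner_sub_right, inner_add_right, inner_diagonal, Pi.inv_apply, Pi.div_apply,
      Pi.mul_apply]
    field_simp
    ring
  rw [hsplit]
  refine (norm_sub_le _ _).trans (add_le_add (norm_diagonal_le _ hθ (fun j => ?_) _)
    (norm_diagonal_le _ hQ (fun j => ?_) _))
  · rw [Pi.div_apply, Pi.mul_apply, abs_of_pos (div_pos (K.a_pos ht j) (haD j)),
      div_le_iff₀ (haD j)]
    exact haθ j
  · rw [Pi.inv_apply, Pi.mul_apply, abs_of_pos (inv_pos.mpr (haD j))]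
    exact haQ j

/-- The homothetic ellipsoid with semi-axes multiplied by `ρ`. -/
noncomputable def scale {ρ : ℝ} (hρ : 0 < ρ) : MovingEllipsoid ι E :=
  { K with path := K.path.scale hρ }

end MovingEllipsoid

/-! ### Moving ellipsoids osculating a potential -/

theorem eventually_forall_norm_sub_le {F : Type*} [SeminormedAddCommGroup F] {x : F}
    {p : F → Prop} (h : ∀ᶠ x' in 𝓝 x, p x') (r : ℝ) :
    ∀ᶠ ρ in 𝓝[>] (0 : ℝ), ∀ x', ‖x' - x‖ ≤ ρ * r → p x' := by
  obtain ⟨δ, hδ, hball⟩ := Metric.eventually_nhds_iff.mp h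
  have hr : Tendsto (fun ρ => ρ * r) (𝓝[>] (0 : ℝ)) (𝓝 0) := by
    have hcont : Continuous fun ρ => ρ * r := by fun_prop
    simpa using (hcont.tendsto (0 : ℝ)).mono_left nhdsWithin_le_nhds
  filter_upwards [hr.eventually (gt_mem_nhds hδ)] with ρ hρ x' hx'
  exact hball (dist_eq_norm x' x ▸ hx'.trans_lt hρ)

section Osculation

variable {E : Type*} [NormedAddCommGroup E] [InnerProductSpace ℝ E]

theorem HasHessianAt.eventually_norm_sub_lt {ψ : E → ℝ} {A : E →L[ℝ] E} {x y : E}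
    (h : HasHessianAt ψ A x y) {δ : ℝ} (hδ : 0 < δ) :
    ∀ᶠ x' in 𝓝 x, ∀ y', IsSubgradient ψ x' y' → ‖y' - y‖ < δ := by
  have hA : Tendsto (fun x' => ‖A (x' - x)‖ + 1 * ‖x' - x‖) (𝓝 x) (𝓝 0) := by
    have hcont : Continuous fun x' => ‖A (x' - x)‖ + 1 * ‖x' - x‖ := by fun_prop
    simpa using hcont.tendsto x
  filter_upwards [h 1 one_pos, hA.eventually (gt_mem_nhds hδ)] with x' hx' hlt y' hy'
  calc ‖y' - y‖ = ‖A (x' - x) + (y' - y - A (x' - x))‖ := by rw [add_sub_cancel]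
    _ ≤ ‖A (x' - x)‖ + 1 * ‖x' - x‖ :=
        (norm_add_le _ _).trans (add_le_add_right (hx' y' hy') _)
    _ < δ := hlt

theorem stretching_half_le {l s κ t : ℝ} (hl : 0 ≤ l) (hls : l ≤ s) (hκ : 0 < κ) (hκ₁ : κ ≤ 1)
    (ht : t ∈ Icc (0 : ℝ) 1) :
    1 - t + t * (l + κ / 2) ≤ (1 - t * (κ / (2 * (2 + s)))) * (1 - t + t * (l + κ)) := by
  have hD : 1 - t + t * (l + κ) ≤ 2 + s := by nlinarith [ht.1, ht.2]
  have hC : κ / (2 * (2 + s)) * (1 - t + t * (l + κ)) ≤ κ / 2 := by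
    have hs : 0 < 2 + s := by linarith
    calc κ / (2 * (2 + s)) * (1 - t + t * (l + κ)) ≤ κ / (2 * (2 + s)) * (2 + s) := by gcongr
      _ = κ / 2 := by field_simp
  nlinarith [mul_le_mul_of_nonneg_left hC ht.1]

namespace MovingEllipsoid

variable {ι : Type*} [Fintype ι]

/-- The semi-axes of the moving ellipsoid follow closely enough the flow of the interpolation maps
`(1 - t + tκ) x + t ∇ψ x` near its center, where `ψ` has the Hessian `diagonal K.basis l`. The
gap between the semi-axes and the stretching factors `1 - t + t (l j + κ)` of these maps is what
leaves room for the second-order error of `ψ`. -/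
structure Osculates (K : MovingEllipsoid ι E) (ψ : E → ℝ) (κ : ℝ) (y : E) (l : ι → ℝ) : Prop where
  isSubgradient : IsSubgradient ψ K.base y
  velocity_eq : K.velocity = y + κ • K.base - K.base
  hasHessianAt : HasHessianAt ψ (diagonal K.basis l) K.base y
  l_pos : ∀ j, 0 < l j
  a_le : ∀ t ∈ Icc (0 : ℝ) 1, ∀ j, K.path.a t j ≤ K.path.a 0 j * (1 - t + t * (l j + κ / 2))

theorem exists_osculates [FiniteDimensional ℝ E] {d : ℕ} (hd : finrank ℝ E = d) {ψ : E → ℝ}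
    {x : E} (h : HasExpansiveHessianAt ψ x) {κ : ℝ} (hκ : 0 < κ) :
    ∃ (K : MovingEllipsoid (Fin d) E) (y : E) (l : Fin d → ℝ),
      K.base = x ∧ K.Osculates ψ κ y l := by
  obtain ⟨y, A, hy, hpos, hdet, hA⟩ := h
  obtain ⟨b, l, hl, hprod, rfl⟩ := exists_eq_diagonal_of_isPositive hd hpos hdet
  obtain ⟨P, hP⟩ := exists_ellipsoidPath hl hprod (half_pos hκ)
  exact ⟨⟨b, P, x, y + κ • x - x⟩, y, l, rfl, hy, rfl, hA, hl, hP⟩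

namespace Osculates

variable {K : MovingEllipsoid ι E} {ψ : E → ℝ} {κ : ℝ} {y : E} {l : ι → ℝ}

theorem scale (h : K.Osculates ψ κ y l) {ρ : ℝ} (hρ : 0 < ρ) :
    (K.scale hρ).Osculates ψ κ y l where
  isSubgradient := h.isSubgradient
  velocity_eq := h.velocity_eq
  hasHessianAt := h.hasHessianAt
  l_pos := h.l_pos
  a_le t ht j := (mul_le_mul_of_nonneg_left (h.a_le t ht j) hρ.le).trans_eq (mul_assoc _ _ _).symm

theorem center_eq (h : K.Osculates ψ κ y l) (t : ℝ) :
    K.center t = (1 - t + t * κ) • K.base + t • y := by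
  rw [center, h.velocity_eq]
  module

theorem norm_sub_base_le (h : K.Osculates ψ κ y l) (hκ₁ : κ ≤ 1) {t M : ℝ}
    (ht : t ∈ Icc (0 : ℝ) 1) (hM : 0 ≤ M) (haM : ∀ j, K.path.a t j ≤ M) {x y' : E}
    (hy' : IsSubgradient ψ x y') (hz : (1 - t + t * κ) • x + t • y' ∈ K.domain t) :
    κ * ‖x - K.base‖ ≤ M := by
  have hκt : κ ≤ 1 - t + t * κ := by nlinarith [ht.2]
  refine (mul_le_mul_of_nonneg_right hκt (norm_nonneg _)).trans ?_
  refine (IsSubgradient.mul_norm_sub_le ht.1 hy' h.isSubgradient).trans ?_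
  rw [← h.center_eq, ← mem_closedBall_iff_norm]
  exact K.domain_subset_closedBall ht hM haM hz

theorem mem_domain_zero (h : K.Osculates ψ κ y l) (hκ : 0 < κ) (hκ₁ : κ ≤ 1) {s m : ℝ}
    (hs : 0 ≤ s) (hls : ∀ j, l j ≤ s) (hm : 0 < m) (hma : ∀ j, m ≤ K.path.a 0 j) {t : ℝ}
    (ht : t ∈ Icc (0 : ℝ) 1) {x y' : E}
    (herr : ‖y' - y - diagonal K.basis l (x - K.base)‖ ≤ κ / (2 * (2 + s)) * (m * κ))
    (hz : (1 - t + t * κ) • x + t • y' ∈ K.domain t) : x ∈ K.domain 0 := by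
  set err := y' - y - diagonal K.basis l (x - K.base)
  set z := (1 - t + t * κ) • x + t • y'
  set θ := 1 - t * (κ / (2 * (2 + s)))
  let D : ι → ℝ := fun j => 1 - t + t * (l j + κ)
  have hκD (j : ι) : κ ≤ D j := by
    have := mul_nonneg (sub_nonneg.mpr hκ₁) (sub_nonneg.mpr ht.2)
    linarith [mul_nonneg ht.1 (h.l_pos j).le]
  have hθ : 0 < θ := by
    have hC : κ / (2 * (2 + s)) ≤ 1 / 2 := by
      rw [div_le_iff₀ (by positivity)]
      linarith
    have htC := mul_le_mul ht.2 hC (by positivity) zero_le_one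
    linarith
  have haθ (j : ι) : K.path.a t j ≤ θ * (K.path.a 0 j * D j) := by
    rw [mul_left_comm]
    exact (h.a_le t ht j).trans <| mul_le_mul_of_nonneg_left
      (stretching_half_le (h.l_pos j).le (hls j) hκ hκ₁ ht) (K.a_zero_pos j).le
  have haQ (j : ι) : (K.path.a 0 j * D j)⁻¹ ≤ (m * κ)⁻¹ :=
    inv_anti₀ (by positivity) (mul_le_mul (hma j) (hκD j) hκ.le (K.a_zero_pos j).le)
  have hsplit : z - K.center t = diagonal K.basis D (x - K.base) + t • err := by
    refine eq_of_inner_eq K.basis fun j => ?_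
    simp only [z, err, D, h.center_eq, inner_sub_right, inner_add_right, inner_smul_right,
      inner_diagonal]
    ring
  calc ‖K.normalized 0 x‖ ≤ θ * ‖K.normalized t z‖ + (m * κ)⁻¹ * ‖t • err‖ :=
        K.norm_normalized_zero_le ht (fun j => hκ.trans_le (hκD j)) hθ.le (by positivity) haθ haQ
          hsplit
    _ < θ * 1 + (m * κ)⁻¹ * (t * (κ / (2 * (2 + s)) * (m * κ))) := by
        rw [norm_smul, Real.norm_of_nonneg ht.1]
        have := ht.1
        exact add_lt_add_of_lt_of_le (mul_lt_mul_of_pos_left hz hθ) (by gcongr)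
    _ = 1 := by
        simp only [θ]
        field_simp
        ring

theorem eventually_mem_domain_zero (h : K.Osculates ψ κ y l) (hκ : 0 < κ) (hκ₁ : κ ≤ 1) {m M : ℝ}
    (hm : 0 < m) (hM : 0 < M) (hma : ∀ j, m ≤ K.path.a 0 j)
    (haM : ∀ t ∈ Icc (0 : ℝ) 1, ∀ j, K.path.a t j ≤ M) :
    ∀ᶠ ρ in 𝓝[>] (0 : ℝ), ∀ hρ : 0 < ρ, ∀ t ∈ Icc (0 : ℝ) 1, ∀ x y', IsSubgradient ψ x y' →
      (1 - t + t * κ) • x + t • y' ∈ (K.scale hρ).domain t → x ∈ (K.scale hρ).domain 0 := by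
  set C := κ / (2 * (2 + ‖l‖))
  have herr := h.hasHessianAt (C * m * κ ^ 2 / M) (by positivity)
  filter_upwards [eventually_forall_norm_sub_le herr (M / κ)] with ρ herr hρ t ht x y' hy' hz
  have hx : κ * ‖x - K.base‖ ≤ ρ * M := (h.scale hρ).norm_sub_base_le hκ₁ ht (by positivity)
    (fun j => mul_le_mul_of_nonneg_left (haM t ht j) hρ.le) hy' hz
  refine (h.scale hρ).mem_domain_zero hκ hκ₁ (norm_nonneg l)
    (fun j => (le_abs_self _).trans (norm_le_pi_norm l j)) (mul_pos hρ hm)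
    (fun j => mul_le_mul_of_nonneg_left (hma j) hρ.le) ht ?_ hz
  refine (herr x ?_ y' hy').trans ?_
  · rwa [← mul_div_assoc, le_div_iff₀' hκ]
  · calc C * m * κ ^ 2 / M * ‖x - K.base‖ = C * m * κ / M * (κ * ‖x - K.base‖) := by ring
      _ ≤ C * m * κ / M * (ρ * M) := by gcongr
      _ = C * (ρ * m * κ) := by field_simp

end Osculates

end MovingEllipsoid

end Osculation

/-! ### Droplets adapted to a potential -/

section Adapted

variable {d : ℕ} {ψ : EuclideanSpace ℝ (Fin d) → ℝ} {κ σ : ℝ}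

/-- The droplet `D` stays inside the image of its initial domain under the interpolation maps
`(1 - t + tκ) x + t ∇ψ x`, conserves volume, moves almost with the velocity `∇ψ x - x` and ends
close to `∇ψ x`. The multivalued subdifferential replaces the gradient of `ψ`. -/
structure IsAdapted (ψ : EuclideanSpace ℝ (Fin d) → ℝ) (κ σ : ℝ) (D : EulerDroplet d) : Prop where
  mem_of_interpolation : ∀ t ∈ Icc (0 : ℝ) 1, ∀ x y, IsSubgradient ψ x y →
    (1 - t + t * κ) • x + t • y ∈ D.Ω t → x ∈ D.Ω 0
  volume_eq : ∀ t ∈ Icc (0 : ℝ) 1, volume (D.Ω t) = volume (D.Ω 0)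
  norm_gradient_le : ∀ t ∈ Icc (0 : ℝ) 1, ∀ x y, IsSubgradient ψ x y → x ∈ D.Ω 0 → ∀ z ∈ D.Ω t,
    ‖gradient (fun w => D.φ w t) z‖ ≤ ‖x - y‖ + σ
  dist_lt : ∀ x y, IsSubgradient ψ x y → x ∈ D.Ω 0 → ∀ z ∈ D.Ω 1, dist y z < σ

theorem isAdapted_emptyDroplet : IsAdapted ψ κ σ (emptyDroplet d) where
  mem_of_interpolation _ _ _ _ _ h := h
  volume_eq _ _ := rfl
  norm_gradient_le _ _ _ _ _ h := h.elim
  dist_lt _ _ _ h := h.elim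

namespace MovingEllipsoid.Osculates

variable {K : MovingEllipsoid (Fin d) (EuclideanSpace ℝ (Fin d))}
  {y : EuclideanSpace ℝ (Fin d)} {l : Fin d → ℝ}

theorem isAdapted (h : K.Osculates ψ κ y l) {δ : ℝ} (hδ : 0 < δ) (hκ : 0 < κ)
    (hbase : κ * ‖K.base‖ ≤ δ)
    (ha : ∀ t ∈ Icc (0 : ℝ) 1, ∀ j, K.path.a t j ≤ δ ∧ |K.path.a' t j| ≤ δ)
    (hsub : ∀ x ∈ K.domain 0, ∀ y', IsSubgradient ψ x y' → ‖y' - y‖ < δ)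
    (hmem : ∀ t ∈ Icc (0 : ℝ) 1, ∀ x y', IsSubgradient ψ x y' →
      (1 - t + t * κ) • x + t • y' ∈ K.domain t → x ∈ K.domain 0) :
    IsAdapted ψ κ (4 * δ) K.toEulerDroplet where
  mem_of_interpolation := hmem
  volume_eq _ ht := K.volume_domain ht
  norm_gradient_le t ht x y' hy' hx z hz := by
    have hx₀ := K.domain_subset_closedBall (left_mem_Icc.mpr zero_le_one) hδ.le
      (fun j => (ha 0 (left_mem_Icc.mpr zero_le_one) j).1) hx
    rw [center_zero, mem_closedBall_iff_norm] at hx₀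
    have hκx : ‖κ • K.base‖ ≤ δ := by rwa [norm_smul, Real.norm_of_nonneg hκ.le]
    have hvel : K.velocity = (y' - x) + κ • K.base + (x - K.base) - (y' - y) := by
      rw [h.velocity_eq]
      abel
    calc ‖gradient (fun w => K.potential w t) z‖ ≤ ‖K.velocity‖ + δ := by
          rw [K.gradient_potential]
          exact K.norm_velocityField_le hδ.le (fun j => (ha t ht j).2) hz
      _ ≤ ‖y' - x‖ + ‖κ • K.base‖ + ‖x - K.base‖ + ‖y' - y‖ + δ := by
          rw [hvel]
          gcongr
          exact (norm_sub_le _ _).trans (add_le_add_left (norm_add₃_le) _)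
      _ ≤ ‖x - y'‖ + 4 * δ := by
          rw [norm_sub_rev y' x]
          linarith only [hx₀, hκx, hsub x hx y' hy']
  dist_lt x y' hy' hx z hz := by
    have hz₁ := K.domain_subset_closedBall (right_mem_Icc.mpr zero_le_one) hδ.le
      (fun j => (ha 1 (right_mem_Icc.mpr zero_le_one) j).1) hz
    rw [mem_closedBall_iff_norm] at hz₁
    have hκx : ‖κ • K.base‖ ≤ δ := by rwa [norm_smul, Real.norm_of_nonneg hκ.le]
    have hsplit : y' - z = (y' - y) - κ • K.base - (z - K.center 1) := by
      rw [h.center_eq]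
      module
    calc dist y' z = ‖(y' - y) - κ • K.base - (z - K.center 1)‖ := by rw [dist_eq_norm, hsplit]
      _ ≤ ‖y' - y‖ + ‖κ • K.base‖ + ‖z - K.center 1‖ :=
          (norm_sub_le _ _).trans (add_le_add_left (norm_sub_le _ _) _)
      _ < 4 * δ := by linarith only [hsub x hx y' hy', hκx, hz₁, hδ]

end MovingEllipsoid.Osculates

theorem exists_isAdapted {x : EuclideanSpace ℝ (Fin d)} (h : HasExpansiveHessianAt ψ x)
    (hκ : 0 < κ) (hκ₁ : κ ≤ 1) (hσ : 0 < σ) (hκσ : κ * ‖x‖ ≤ σ / 4) :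
    ∃ m M, 0 < m ∧ 0 < M ∧ ∀ᶠ ρ in 𝓝[>] (0 : ℝ), ∃ D : EulerDroplet d, IsAdapted ψ κ σ D ∧
      Convex ℝ (D.Ω 0) ∧ ball x (ρ * m) ⊆ D.Ω 0 ∧ D.Ω 0 ⊆ closedBall x (ρ * M) := by
  obtain ⟨K, y, l, rfl, hK⟩ :=
    MovingEllipsoid.exists_osculates (finrank_euclideanSpace_fin (𝕜 := ℝ)) h hκ
  obtain ⟨m, M, hm, hM, hbound⟩ := K.path.exists_bounds
  have hδ : 0 < σ / 4 := by positivity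
  have h₀ := left_mem_Icc.mpr (zero_le_one' ℝ)
  have hcapture := hK.eventually_mem_domain_zero hκ hκ₁ hm hM (fun j => (hbound 0 h₀ j).1)
    fun t ht j => (hbound t ht j).2.1
  have hρM : Tendsto (fun ρ => ρ * M) (𝓝[>] (0 : ℝ)) (𝓝 0) := by
    have hcont : Continuous fun ρ => ρ * M := by fun_prop
    simpa using (hcont.tendsto (0 : ℝ)).mono_left nhdsWithin_le_nhds
  refine ⟨m, M, hm, hM, ?_⟩
  filter_upwards [self_mem_nhdsWithin, hcapture, hρM.eventually (ge_mem_nhds hδ),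
    eventually_forall_norm_sub_le (hK.hasHessianAt.eventually_norm_sub_lt hδ) M]
    with ρ hρ hmem hρδ hsub
  have hρ : 0 < ρ := hρ
  have hball : (K.scale hρ).domain 0 ⊆ closedBall K.base (ρ * M) := by
    have hdom := (K.scale hρ).domain_subset_closedBall h₀ (by positivity)
      fun j => mul_le_mul_of_nonneg_left (hbound 0 h₀ j).2.1 hρ.le
    rwa [MovingEllipsoid.center_zero] at hdom
  refine ⟨(K.scale hρ).toEulerDroplet, ?_, (K.scale hρ).convex_domain h₀, ?_, hball⟩
  · rw [show σ = 4 * (σ / 4) by ring]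
    refine (hK.scale hρ).isAdapted hδ hκ hκσ (fun t ht j => ⟨?_, ?_⟩)
      (fun x hx => hsub x (mem_closedBall_iff_norm.mp (hball hx))) (hmem hρ)
    · exact (mul_le_mul_of_nonneg_left (hbound t ht j).2.1 hρ.le).trans hρδ
    · refine (abs_mul ρ _).trans_le ?_
      rw [abs_of_pos hρ]
      exact (mul_le_mul_of_nonneg_left (hbound t ht j).2.2 hρ.le).trans hρδ
  · have hdom := (K.scale hρ).ball_subset_domain (mul_pos hρ hm)
      fun j => mul_le_mul_of_nonneg_left (hbound 0 h₀ j).1 hρ.le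
    rwa [MovingEllipsoid.center_zero] at hdom

end Adapted

/-! ### Exhaustion of an open set by droplets -/

section Exhaustion

theorem exists_finite_lt_measure_biUnion {α ι : Type*} [MeasurableSpace α] {μ : Measure α}
    {B : ι → Set α} {u : Set ι} (hu : u.Countable) {b : ℝ≥0∞} (hb : b < μ (⋃ a ∈ u, B a)) :
    ∃ w ⊆ u, w.Finite ∧ b < μ (⋃ a ∈ w, B a) := by
  have : Countable u := hu.to_subtype
  have hmono : Monotone fun w : Finset u => ⋃ a ∈ w, B a :=
    fun _ _ h => biUnion_subset_biUnion_left h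
  rw [biUnion_eq_iUnion, iUnion_eq_iUnion_finset, hmono.directed_le.measure_iUnion,
    lt_iSup_iff] at hb
  obtain ⟨w, hw⟩ := hb
  refine ⟨Subtype.val '' (w : Set u), Subtype.coe_image_subset u _, w.finite_toSet.image _, ?_⟩
  rwa [biUnion_image]

theorem exists_seq_remainder {α ι : Type*} [TopologicalSpace α] [MeasurableSpace α]
    {μ : Measure α} {U : Set α} (hU : IsOpen U) {B : ι → Set α} (hB : ∀ a, IsClosed (B a))
    (hhalf : ∀ V ⊆ U, IsOpen V → ∃ w : Set ι, w.Finite ∧ w.PairwiseDisjoint B ∧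
      (∀ a ∈ w, B a ⊆ V) ∧ μ (V \ ⋃ a ∈ w, B a) ≤ μ V / 2) :
    ∃ (V : ℕ → Set α) (w : ℕ → Set ι), V 0 = U ∧ ∀ n, V (n + 1) = V n \ ⋃ a ∈ w n, B a ∧
      (w n).Finite ∧ (w n).PairwiseDisjoint B ∧ (∀ a ∈ w n, B a ⊆ V n) ∧
      μ (V (n + 1)) ≤ μ (V n) / 2 := by
  choose! w hwfin hwdisj hwsub hwhalf using hhalf
  let V : ℕ → Set α := fun n => (fun V => V \ ⋃ a ∈ w V, B a)^[n] U
  have hVsucc (n : ℕ) : V (n + 1) = V n \ ⋃ a ∈ w (V n), B a := Function.iterate_succ_apply' ..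
  have hV (n : ℕ) : V n ⊆ U ∧ IsOpen (V n) := by
    induction n with
    | zero => exact ⟨le_rfl, hU⟩
    | succ n ih =>
      rw [hVsucc]
      exact ⟨sdiff_subset.trans ih.1,
        ih.2.sdiff ((hwfin _ ih.1 ih.2).isClosed_biUnion fun a _ => hB a)⟩
  refine ⟨V, fun n => w (V n), rfl, fun n => ⟨hVsucc n, ?_⟩⟩
  obtain ⟨hVU, hVopen⟩ := hV n
  rw [hVsucc]
  exact ⟨hwfin _ hVU hVopen, hwdisj _ hVU hVopen, hwsub _ hVU hVopen, hwhalf _ hVU hVopen⟩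

theorem exists_disjoint_exhaustion {α ι : Type*} [TopologicalSpace α] [MeasurableSpace α]
    {μ : Measure α} {U : Set α} (hU : IsOpen U) (hfin : μ U ≠ ⊤) {B : ι → Set α}
    (hB : ∀ a, IsClosed (B a))
    (hhalf : ∀ V ⊆ U, IsOpen V → ∃ w : Set ι, w.Finite ∧ w.PairwiseDisjoint B ∧
      (∀ a ∈ w, B a ⊆ V) ∧ μ (V \ ⋃ a ∈ w, B a) ≤ μ V / 2) :
    ∃ u : Set ι, u.Countable ∧ u.PairwiseDisjoint B ∧ (∀ a ∈ u, B a ⊆ U) ∧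
      μ (U \ ⋃ a ∈ u, B a) = 0 := by
  obtain ⟨V, w, rfl, h⟩ := exists_seq_remainder hU hB hhalf
  choose hVsucc hwfin hwdisj hwsub hwhalf using h
  have hVanti : Antitone V := antitone_nat_of_succ_le fun n => hVsucc n ▸ sdiff_subset
  have hdisj {k n : ℕ} (hkn : k < n) {a b : ι} (ha : a ∈ w k) (hb : b ∈ w n) :
      Disjoint (B a) (B b) := by
    have hsub : B b ⊆ V k \ ⋃ a ∈ w k, B a := hVsucc k ▸ (hwsub n b hb).trans (hVanti hkn)
    exact (disjoint_sdiff_left.mono hsub (subset_biUnion_of_mem ha)).symm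
  have hremainder (n : ℕ) : V 0 \ ⋃ a ∈ ⋃ n, w n, B a ⊆ V n := by
    induction n with
    | zero => exact sdiff_subset
    | succ n ih =>
      rw [hVsucc]
      exact fun x hx => ⟨ih hx, fun h => hx.2 <|
        biUnion_mono (subset_iUnion w n) (fun _ _ => le_rfl) h⟩
  have hmeas (n : ℕ) : μ (V n) ≤ μ (V 0) * 2⁻¹ ^ n := by
    induction n with
    | zero => rw [pow_zero, mul_one]
    | succ n ih =>
      rw [pow_succ, ← mul_assoc]
      exact (hwhalf n).trans (mul_le_mul_left ih _)
  have hlim : Tendsto (fun n : ℕ => μ (V 0) * 2⁻¹ ^ n) atTop (𝓝 0) := by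
    simpa using ENNReal.Tendsto.const_mul (ENNReal.tendsto_pow_atTop_nhds_zero_of_lt_one
      (ENNReal.inv_lt_one.mpr ENNReal.one_lt_two)) (.inr hfin)
  refine ⟨⋃ n, w n, countable_iUnion fun n => (hwfin n).countable, fun a ha b hb hab => ?_,
    fun a ha => ?_, le_antisymm (ge_of_tendsto' hlim fun n =>
      (measure_mono (hremainder n)).trans (hmeas n)) zero_le⟩
  · obtain ⟨k, hk⟩ := mem_iUnion.mp ha
    obtain ⟨n, hn⟩ := mem_iUnion.mp hb
    rcases lt_trichotomy k n with hkn | rfl | hkn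
    · exact hdisj hkn hk hn
    · exact hwdisj k hk hn hab
    · exact (hdisj hkn hn hk).symm
  · obtain ⟨n, hn⟩ := mem_iUnion.mp ha
    exact (hwsub n a hn).trans (hVanti (Nat.zero_le n))

variable {α ι : Type*} [MetricSpace α] [MeasurableSpace α] [OpensMeasurableSpace α]
  [SecondCountableTopology α] {μ : Measure α} [IsLocallyFiniteMeasure μ] {c : ι → α} {r : ι → ℝ}
  {B : ι → Set α} {C : α → ℝ≥0}

theorem exists_finite_measure_sdiff_le_half {U : Set α} (hU : IsOpen U) (hfin : μ U ≠ ⊤)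
    (hBr : ∀ a, B a ⊆ closedBall (c a) (r a))
    (hBC : ∀ a, μ (closedBall (c a) (3 * r a)) ≤ C (c a) * μ (B a))
    (hBint : ∀ a, (interior (B a)).Nonempty) (hB : ∀ a, IsClosed (B a))
    (hfine : ∀ᵐ x ∂μ, x ∈ U → ∀ ε > 0, ∃ a, r a ≤ ε ∧ c a = x) :
    ∃ w : Set ι, w.Finite ∧ w.PairwiseDisjoint B ∧ (∀ a ∈ w, B a ⊆ U) ∧
      μ (U \ ⋃ a ∈ w, B a) ≤ μ U / 2 := by
  rcases eq_or_ne (μ U) 0 with hzero | hzero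
  · exact ⟨∅, finite_empty, pairwiseDisjoint_empty, by simp, by simp [hzero]⟩
  let G : Set α := {x | ∀ ε > 0, ∃ a, r a ≤ ε ∧ c a = x}
  let S : ℕ → Set α := fun n => {x | x ∈ U ∧ x ∈ G ∧ C x ≤ n}
  have hSmono : Monotone S := fun k n hkn x hx =>
    ⟨hx.1, hx.2.1, hx.2.2.trans (Nat.cast_le.mpr hkn)⟩
  have hSU : U ≤ᵐ[μ] ⋃ n, S n := by
    filter_upwards [hfine] with x hx hxU
    exact mem_iUnion.mpr ((exists_nat_ge (C x)).imp fun n hn => ⟨hxU, hx hxU, hn⟩)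
  have hlt : μ U / 2 < ⨆ n, μ (S n) := by
    rw [← hSmono.measure_iUnion]
    exact (ENNReal.half_lt_self hzero hfin).trans_le (measure_mono_ae hSU)
  obtain ⟨n, hn⟩ := lt_iSup_iff.mp hlt
  obtain ⟨u, hut, hu, hudisj, hunull⟩ := Vitali.exists_disjoint_covering_ae μ (S n)
    {a | C (c a) ≤ n ∧ B a ⊆ U} n r c B (fun a _ => hBr a)
    (fun a ha => (hBC a).trans (mul_le_mul_left (ENNReal.coe_le_coe.mpr ha.1) _))
    (fun a _ => hBint a) (fun a _ => hB a) <| by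
      rintro x ⟨hxU, hxG, hxn⟩ ε hε
      obtain ⟨δ, hδ, hball⟩ := nhds_basis_closedBall.mem_iff.mp (hU.mem_nhds hxU)
      obtain ⟨a, ha, rfl⟩ := hxG (min ε δ) (lt_min hε hδ)
      exact ⟨a, ⟨hxn, (hBr a).trans ((closedBall_subset_closedBall
        (ha.trans (min_le_right _ _))).trans hball)⟩, ha.trans (min_le_left _ _), rfl⟩
  have hSu : μ (S n) ≤ μ (⋃ a ∈ u, B a) := measure_mono_ae (ae_le_set.mpr hunull)
  obtain ⟨w, hwu, hw, hwlt⟩ := exists_finite_lt_measure_biUnion hu (hn.trans_le hSu)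
  have hwU (a : ι) (ha : a ∈ w) : B a ⊆ U := (hut (hwu ha)).2
  refine ⟨w, hw, hudisj.subset hwu, hwU, ?_⟩
  have hwsub : ⋃ a ∈ w, B a ⊆ U := iUnion₂_subset hwU
  rw [measure_sdiff hwsub (hw.isClosed_biUnion fun a _ => hB a).nullMeasurableSet
    (measure_ne_top_of_subset hwsub hfin), tsub_le_iff_right]
  exact (ENNReal.add_halves (μ U)).symm.trans_le (add_le_add_right hwlt.le _)

theorem exists_disjoint_covering_ae_of_pointwise_bound {U : Set α} (hU : IsOpen U)
    (hfin : μ U ≠ ⊤) (hBr : ∀ a, B a ⊆ closedBall (c a) (r a))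
    (hBC : ∀ a, μ (closedBall (c a) (3 * r a)) ≤ C (c a) * μ (B a))
    (hBint : ∀ a, (interior (B a)).Nonempty) (hB : ∀ a, IsClosed (B a))
    (hfine : ∀ᵐ x ∂μ, x ∈ U → ∀ ε > 0, ∃ a, r a ≤ ε ∧ c a = x) :
    ∃ u : Set ι, u.Countable ∧ u.PairwiseDisjoint B ∧ (∀ a ∈ u, B a ⊆ U) ∧
      μ (U \ ⋃ a ∈ u, B a) = 0 :=
  exists_disjoint_exhaustion hU hfin hB fun _ hVU hV =>
    exists_finite_measure_sdiff_le_half hV (measure_ne_top_of_subset hVU hfin) hBr hBC hBint hB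
      (hfine.mono fun _ hx hxV => hx (hVU hxV))

end Exhaustion

section Spray

theorem addHaar_closedBall_eq_mul_addHaar_ball {E : Type*} [NormedAddCommGroup E]
    [NormedSpace ℝ E] [FiniteDimensional ℝ E] [MeasurableSpace E] [BorelSpace E] (μ : Measure E)
    [μ.IsAddHaarMeasure] (x : E) {r s : ℝ} (hr : 0 < r) (hs : 0 ≤ s) :
    μ (closedBall x s) = (Real.toNNReal ((s / r) ^ finrank ℝ E) : ℝ≥0∞) * μ (ball x r) := by
  rw [Measure.addHaar_closedBall μ x hs, Measure.addHaar_ball_of_pos μ x hr, ← mul_assoc]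
  congr 1
  change _ = ENNReal.ofReal _ * _
  rw [← ENNReal.ofReal_mul (by positivity), ← mul_pow, div_mul_cancel₀ s hr.ne']

variable {d : ℕ} {U : Set (EuclideanSpace ℝ (Fin d))}

theorem exists_seq_eulerDroplet {ι : Type*} {u : Set ι} (hu : u.Countable)
    {F : ι → EulerDroplet d} {P : EulerDroplet d → Prop} (hP : P (emptyDroplet d))
    (hF : ∀ a, P (F a)) (hdisj : u.PairwiseDisjoint fun a => (F a).Ω 0) :
    ∃ D : ℕ → EulerDroplet d, (∀ n, P (D n)) ∧
      (Pairwise fun m n => Disjoint ((D m).Ω 0) ((D n).Ω 0)) ∧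
      ⋃ n, (D n).Ω 0 = ⋃ a ∈ u, (F a).Ω 0 := by
  have : Countable u := hu.to_subtype
  obtain ⟨e, he⟩ := exists_injective_nat u
  let D : ℕ → EulerDroplet d := Function.extend e (fun a => F a) fun _ => emptyDroplet d
  have hD : (fun n => (D n).Ω 0) = Function.extend e (fun a : u => (F a).Ω 0) ⊥ :=
    funext fun _ => Function.apply_extend (fun G : EulerDroplet d => G.Ω 0) ..
  refine ⟨D, fun n => ?_, ?_, ?_⟩
  · by_cases hn : ∃ a, e a = n
    · obtain ⟨a, rfl⟩ := hn
      rw [show D (e a) = F a from he.extend_apply _ _ a]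
      exact hF a
    · rw [show D n = emptyDroplet d from Function.extend_apply' _ _ n hn]
      exact hP
  · change Pairwise (Function.onFun Disjoint fun n => (D n).Ω 0)
    rw [hD]
    exact (pairwise_subtype_iff_pairwise_set u _).mpr hdisj |>.disjoint_extend_bot
      (he.factorsThrough _)
  · rw [hD, biUnion_eq_iUnion]
    exact iSup_extend_bot he _

/-- A droplet adapted to `ψ` whose initial domain is comparable to the ball of radius `ρ` around
`center`, with comparison constants `m` and `M` depending on the center only. -/
structure AdaptedCell (ψ : EuclideanSpace ℝ (Fin d) → ℝ) (κ σ : ℝ)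
    (m M : EuclideanSpace ℝ (Fin d) → ℝ) where
  droplet : EulerDroplet d
  center : EuclideanSpace ℝ (Fin d)
  ρ : ℝ
  ρ_pos : 0 < ρ
  isAdapted : IsAdapted ψ κ σ droplet
  convex : Convex ℝ (droplet.Ω 0)
  ball_subset : ball center (ρ * m center) ⊆ droplet.Ω 0
  subset_closedBall : droplet.Ω 0 ⊆ closedBall center (ρ * M center)

variable {ψ : EuclideanSpace ℝ (Fin d) → ℝ} {κ σ : ℝ}

theorem exists_adaptedCell (hκ : 0 < κ) (hκ₁ : κ ≤ 1) (hσ : 0 < σ)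
    (hκσ : ∀ x ∈ U, κ * ‖x‖ ≤ σ / 4) :
    ∃ m M : EuclideanSpace ℝ (Fin d) → ℝ, (∀ x, 0 < m x) ∧ (∀ x, 0 < M x) ∧
      ∀ x ∈ U, HasExpansiveHessianAt ψ x → ∀ ε > 0,
        ∃ q : AdaptedCell ψ κ σ m M, q.ρ * M q.center ≤ ε ∧ q.center = x := by
  have hex (x : EuclideanSpace ℝ (Fin d)) : ∃ m M, 0 < m ∧ 0 < M ∧
      (x ∈ U → HasExpansiveHessianAt ψ x → ∀ᶠ ρ in 𝓝[>] (0 : ℝ), ∃ D : EulerDroplet d,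
        IsAdapted ψ κ σ D ∧ Convex ℝ (D.Ω 0) ∧ ball x (ρ * m) ⊆ D.Ω 0 ∧
          D.Ω 0 ⊆ closedBall x (ρ * M)) := by
    by_cases hx : x ∈ U ∧ HasExpansiveHessianAt ψ x
    · obtain ⟨m, M, hm, hM, h⟩ := exists_isAdapted hx.2 hκ hκ₁ hσ (hκσ x hx.1)
      exact ⟨m, M, hm, hM, fun _ _ => h⟩
    · exact ⟨1, 1, one_pos, one_pos, fun hxU hxψ => (hx ⟨hxU, hxψ⟩).elim⟩
  choose m M hm hM h using hex
  refine ⟨m, M, hm, hM, fun x hxU hxψ ε hε => ?_⟩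
  have hsmall : ∀ᶠ ρ in 𝓝[>] (0 : ℝ), ρ ≤ ε / M x :=
    nhdsWithin_le_nhds (ge_mem_nhds (div_pos hε (hM x)))
  obtain ⟨ρ, ⟨D, hD, hconvex, hball, hclosedBall⟩, hρε, hρ⟩ :=
    ((h x hxU hxψ).and (hsmall.and self_mem_nhdsWithin)).exists
  exact ⟨⟨D, x, ρ, hρ, hD, hconvex, hball, hclosedBall⟩, (le_div_iff₀ (hM x)).mp hρε, rfl⟩

/-- A family of droplets adapted to `ψ` whose initial domains fill `U` disjointly up to a null
set. -/
structure IsAdaptedSpray (ψ : EuclideanSpace ℝ (Fin d) → ℝ) (κ σ : ℝ)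
    (U : Set (EuclideanSpace ℝ (Fin d))) (D : ℕ → EulerDroplet d) : Prop where
  isAdapted : ∀ n, IsAdapted ψ κ σ (D n)
  pairwise_disjoint : Pairwise fun m n => Disjoint ((D m).Ω 0) ((D n).Ω 0)
  iUnion_subset : ⋃ n, (D n).Ω 0 ⊆ U
  volume_sdiff : volume (U \ ⋃ n, (D n).Ω 0) = 0

theorem exists_isAdaptedSpray (hU : IsOpen U) (hfin : volume U ≠ ⊤)
    (hψ : ∀ᵐ x, x ∈ U → HasExpansiveHessianAt ψ x) (hκ : 0 < κ) (hκ₁ : κ ≤ 1) (hσ : 0 < σ)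
    (hκσ : ∀ x ∈ U, κ * ‖x‖ ≤ σ / 4) :
    ∃ D : ℕ → EulerDroplet d, IsAdaptedSpray ψ κ σ U D := by
  obtain ⟨m, M, hm, hM, hcell⟩ := exists_adaptedCell (ψ := ψ) hκ hκ₁ hσ hκσ
  let B : AdaptedCell ψ κ σ m M → Set (EuclideanSpace ℝ (Fin d)) := fun q => closure (q.droplet.Ω 0)
  have hball (q : AdaptedCell ψ κ σ m M) : ball q.center (q.ρ * m q.center) ⊆ B q :=
    q.ball_subset.trans subset_closure
  have hpos (q : AdaptedCell ψ κ σ m M) : 0 < q.ρ * m q.center := mul_pos q.ρ_pos (hm q.center)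
  have hvol (q : AdaptedCell ψ κ σ m M) : volume (closedBall q.center (3 * (q.ρ * M q.center))) ≤
      (Real.toNNReal ((3 * M q.center / m q.center) ^ finrank ℝ (EuclideanSpace ℝ (Fin d))) :
        ℝ≥0∞) * volume (B q) := by
    have := q.ρ_pos
    have := hM q.center
    rw [addHaar_closedBall_eq_mul_addHaar_ball volume q.center (hpos q) (by positivity),
      mul_left_comm 3, mul_div_mul_left _ _ q.ρ_pos.ne']
    exact mul_le_mul_right (measure_mono (hball q)) _
  obtain ⟨u, hu, hudisj, huU, hunull⟩ := exists_disjoint_covering_ae_of_pointwise_bound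
    (C := fun x => Real.toNNReal ((3 * M x / m x) ^ finrank ℝ (EuclideanSpace ℝ (Fin d)))) hU hfin
    (fun q => closure_minimal q.subset_closedBall isClosed_closedBall) hvol
    (fun q => ⟨q.center, mem_interior.mpr ⟨_, hball q, isOpen_ball, mem_ball_self (hpos q)⟩⟩)
    (fun _ => isClosed_closure) (hψ.mono fun x hx hxU => hcell x hxU (hx hxU))
  obtain ⟨D, hD, hdisj, hunion⟩ := exists_seq_eulerDroplet hu isAdapted_emptyDroplet
    (fun q => q.isAdapted) (hudisj.mono fun q => subset_closure)
  refine ⟨D, hD, hdisj, ?_, ?_⟩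
  · rw [hunion]
    exact iUnion₂_subset fun q hq => subset_closure.trans (huU q hq)
  · have hfrontier : volume (⋃ q ∈ u, frontier (q.droplet.Ω 0)) = 0 :=
      (measure_biUnion_null_iff hu).mpr fun q _ => q.convex.addHaar_frontier volume
    rw [hunion]
    refine measure_mono_null (fun x hx => ?_) (measure_union_null hunull hfrontier)
    by_cases hxB : x ∈ ⋃ q ∈ u, B q
    · obtain ⟨q, hq, hxq⟩ := mem_iUnion₂.mp hxB
      refine .inr (mem_iUnion₂.mpr ⟨q, hq, hxq, fun hint => hx.2 ?_⟩)
      exact mem_iUnion₂.mpr ⟨q, hq, interior_subset hint⟩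
    · exact .inl ⟨hx.1, hxB⟩

end Spray

/-! ### Euler sprays -/

section Connection

theorem exists_map_fst_eq_map_snd_eq {α β : Type*} [MeasurableSpace α] [MeasurableSpace β]
    (μ : Measure α) (ν : Measure β) [IsFiniteMeasure μ] [IsFiniteMeasure ν]
    (h : μ univ = ν univ) :
    ∃ π : Measure (α × β), π.map Prod.fst = μ ∧ π.map Prod.snd = ν := by
  by_cases h₀ : μ univ = 0
  · refine ⟨0, ?_, ?_⟩
    · rw [Measure.map_zero, Measure.measure_univ_eq_zero.mp h₀]
    · rw [Measure.map_zero, Measure.measure_univ_eq_zero.mp (h.symm.trans h₀)]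
  · refine ⟨(μ univ)⁻¹ • μ.prod ν, ?_, ?_⟩
    · rw [Measure.map_smul, Measure.map_fst_prod, smul_smul, ← h,
        ENNReal.inv_mul_cancel h₀ (measure_ne_top μ univ), one_smul]
    · rw [Measure.map_smul, Measure.map_snd_prod, smul_smul,
        ENNReal.inv_mul_cancel h₀ (measure_ne_top μ univ), one_smul]

variable {d : ℕ} {ψ : EuclideanSpace ℝ (Fin d) → ℝ} {κ σ : ℝ} {D D' : EulerDroplet d}

theorem disjoint_Q (h : ∀ t ∈ Icc (0 : ℝ) 1, Disjoint (D.Ω t) (D'.Ω t)) : Disjoint D.Q D'.Q := by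
  refine disjoint_left.mpr ?_
  rintro ⟨z, t⟩ hz hz'
  simp only [EulerDroplet.Q, mem_iUnion, mem_prod, mem_singleton_iff] at hz hz'
  obtain ⟨s, hs, hzs, rfl⟩ := hz
  obtain ⟨s', -, hzs', rfl⟩ := hz'
  exact disjoint_left.mp (h _ hs) hzs hzs'

/-- The time integral over `[0, 1]` of twice the kinetic energy of the droplet `D`. -/
noncomputable def action (D : EulerDroplet d) : ℝ≥0∞ :=
  ∫⁻ t in Icc (0 : ℝ) 1, ∫⁻ x in D.Ω t, ENNReal.ofReal (‖gradient (fun y => D.φ y t) x‖ ^ 2)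

theorem action_le_mul_volume (hvol : ∀ t ∈ Icc (0 : ℝ) 1, volume (D.Ω t) = volume (D.Ω 0))
    {C : ℝ≥0∞} (hC : ∀ t ∈ Icc (0 : ℝ) 1, ∀ x ∈ D.Ω t,
      ENNReal.ofReal (‖gradient (fun y => D.φ y t) x‖ ^ 2) ≤ C) :
    action D ≤ C * volume (D.Ω 0) :=
  calc action D ≤ ∫⁻ _ in Icc (0 : ℝ) 1, C * volume (D.Ω 0) := by
        refine setLIntegral_mono' measurableSet_Icc fun t ht => ?_
        rw [← hvol t ht, ← setLIntegral_const]
        exact setLIntegral_mono' (D.isOpen_Ω t ht).measurableSet (hC t ht)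
    _ = C * volume (D.Ω 0) := by
        rw [setLIntegral_const, Real.volume_Icc, sub_zero, ENNReal.ofReal_one, mul_one]

theorem isFiniteMeasure_restrict_Ω (D : EulerDroplet d) {t : ℝ} (ht : t ∈ Icc (0 : ℝ) 1) :
    IsFiniteMeasure (volume.restrict (D.Ω t)) :=
  isFiniteMeasure_restrict.mpr (D.isBounded_Ω t ht).measure_lt_top.ne

namespace IsAdapted

theorem disjoint_Ω (hD : IsAdapted ψ κ σ D) (hD' : IsAdapted ψ κ σ D')
    (hψ : ∀ x, ∃ y, IsSubgradient ψ x y) (hκ : 0 < κ) (h : Disjoint (D.Ω 0) (D'.Ω 0)) {t : ℝ}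
    (ht : t ∈ Icc (0 : ℝ) 1) : Disjoint (D.Ω t) (D'.Ω t) := by
  refine disjoint_left.mpr fun z hz hz' => ?_
  have hc : 0 < 1 - t + t * κ := by
    rcases ht.1.eq_or_lt with rfl | h₀
    · norm_num
    · linarith only [ht.2, mul_pos h₀ hκ]
  obtain ⟨x, y, hxy, rfl⟩ := exists_isSubgradient_smul_add_smul_eq hψ hc ht.1 z
  exact disjoint_left.mp h (hD.mem_of_interpolation t ht x y hxy hz)
    (hD'.mem_of_interpolation t ht x y hxy hz')

variable {T : EuclideanSpace ℝ (Fin d) → EuclideanSpace ℝ (Fin d)}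

theorem action_le (hD : IsAdapted ψ κ σ D) (hσ : 0 ≤ σ) {r : ℝ}
    (hT : ∀ᵐ x ∂volume.restrict (D.Ω 0), IsSubgradient ψ x (T x) ∧ ‖x - T x‖ ≤ r) :
    action D ≤ ∫⁻ x in D.Ω 0,
      (ENNReal.ofReal (‖x - T x‖ ^ 2) + ENNReal.ofReal (σ * (2 * r + σ))) := by
  have h₀ : (0 : ℝ) ∈ Icc (0 : ℝ) 1 := left_mem_Icc.mpr zero_le_one
  by_cases hV : volume (D.Ω 0) = 0
  · have hle := action_le_mul_volume hD.volume_eq (C := ⊤) fun _ _ _ _ => le_top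
    rw [hV, mul_zero] at hle
    exact hle.trans zero_le
  have hV' : volume (D.Ω 0) ≠ ⊤ := (D.isBounded_Ω 0 h₀).measure_lt_top.ne
  have hpoint : ∀ᵐ x ∂volume.restrict (D.Ω 0), action D ≤
      (ENNReal.ofReal (‖x - T x‖ ^ 2) + ENNReal.ofReal (σ * (2 * r + σ))) * volume (D.Ω 0) := by
    filter_upwards [hT, ae_restrict_mem (D.isOpen_Ω 0 h₀).measurableSet] with x ⟨hxT, hr⟩ hx
    have hr₀ : 0 ≤ r := (norm_nonneg _).trans hr
    refine action_le_mul_volume hD.volume_eq fun t ht z hz => ?_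
    rw [← ENNReal.ofReal_add (by positivity) (by positivity)]
    refine ENNReal.ofReal_le_ofReal ?_
    calc ‖gradient (fun y => D.φ y t) z‖ ^ 2 ≤ (‖x - T x‖ + σ) ^ 2 := by
          gcongr
          exact hD.norm_gradient_le t ht x (T x) hxT hx z hz
      _ = ‖x - T x‖ ^ 2 + σ * (2 * ‖x - T x‖ + σ) := by ring
      _ ≤ ‖x - T x‖ ^ 2 + σ * (2 * r + σ) := by gcongr
  rw [← ENNReal.mul_le_mul_iff_left hV hV', ← lintegral_mul_const' _ _ hV', ← setLIntegral_const]
  exact lintegral_mono_ae hpoint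

theorem exists_coupling (hD : IsAdapted ψ κ σ D) (hT : Measurable T)
    (hTψ : ∀ᵐ x, IsSubgradient ψ x (T x)) :
    ∃ π : Measure (EuclideanSpace ℝ (Fin d) × EuclideanSpace ℝ (Fin d)),
      π.map Prod.fst = (volume.restrict (D.Ω 0)).map T ∧
        π.map Prod.snd = volume.restrict (D.Ω 1) ∧ ∀ᵐ q ∂π, dist q.1 q.2 ≤ σ := by
  have h₀ : (0 : ℝ) ∈ Icc (0 : ℝ) 1 := left_mem_Icc.mpr zero_le_one
  have h₁ : (1 : ℝ) ∈ Icc (0 : ℝ) 1 := right_mem_Icc.mpr zero_le_one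
  have := isFiniteMeasure_restrict_Ω D h₀
  have := isFiniteMeasure_restrict_Ω D h₁
  obtain ⟨π, hfst, hsnd⟩ := exists_map_fst_eq_map_snd_eq ((volume.restrict (D.Ω 0)).map T)
    (volume.restrict (D.Ω 1)) (by
      rw [Measure.map_apply hT .univ, preimage_univ, Measure.restrict_apply_univ,
        Measure.restrict_apply_univ, hD.volume_eq 1 h₁])
  refine ⟨π, hfst, hsnd, ?_⟩
  have hclosed : IsClosed {y | ∀ z ∈ D.Ω 1, dist y z ≤ σ} := by
    simp only [Set.ofPred_forall]
    exact isClosed_biInter fun z _ => isClosed_le (by fun_prop) continuous_const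
  have hnear : ∀ᵐ y ∂π.map Prod.fst, ∀ z ∈ D.Ω 1, dist y z ≤ σ := by
    rw [hfst, ae_map_iff hT.aemeasurable hclosed.measurableSet]
    filter_upwards [ae_restrict_of_ae hTψ, ae_restrict_mem (D.isOpen_Ω 0 h₀).measurableSet]
      with x hxT hx z hz
    exact (hD.dist_lt x (T x) hxT hx z hz).le
  have hmem : ∀ᵐ z ∂π.map Prod.snd, z ∈ D.Ω 1 := by
    rw [hsnd]
    exact ae_restrict_mem (D.isOpen_Ω 1 h₁).measurableSet
  filter_upwards [ae_of_ae_map measurable_fst.aemeasurable hnear,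
    ae_of_ae_map measurable_snd.aemeasurable hmem] with q hq₁ hq₂
  exact hq₁ _ hq₂

end IsAdapted

theorem exists_coupling_iUnion {α β γ : Type*} [MeasurableSpace α] [MeasurableSpace β]
    [MeasurableSpace γ] {μ : Measure α} {ν : Measure β} {ι : Type*} [Countable ι] {s : ι → Set α}
    {t : ι → Set β} {T : α → γ} {P : γ × β → Prop} (hs : ∀ i, MeasurableSet (s i))
    (ht : ∀ i, MeasurableSet (t i)) (hsd : Pairwise (Function.onFun Disjoint s))
    (htd : Pairwise (Function.onFun Disjoint t)) (hT : Measurable T)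
    (h : ∀ i, ∃ π : Measure (γ × β), π.map Prod.fst = (μ.restrict (s i)).map T ∧
      π.map Prod.snd = ν.restrict (t i) ∧ ∀ᵐ q ∂π, P q) :
    ∃ π : Measure (γ × β), π.map Prod.fst = (μ.restrict (⋃ i, s i)).map T ∧
      π.map Prod.snd = ν.restrict (⋃ i, t i) ∧ ∀ᵐ q ∂π, P q := by
  choose π hfst hsnd hP using h
  refine ⟨Measure.sum π, ?_, ?_, Measure.ae_sum_iff.mpr hP⟩
  · rw [Measure.map_sum measurable_fst.aemeasurable, Measure.restrict_iUnion hsd hs,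
      Measure.map_sum hT.aemeasurable]
    simp only [hfst]
  · rw [Measure.map_sum measurable_snd.aemeasurable, Measure.restrict_iUnion htd ht]
    simp only [hsnd]

namespace IsAdaptedSpray

variable {U : Set (EuclideanSpace ℝ (Fin d))} {D : ℕ → EulerDroplet d}
  {T : EuclideanSpace ℝ (Fin d) → EuclideanSpace ℝ (Fin d)}

theorem measurableSet_Ω (D : ℕ → EulerDroplet d) {t : ℝ} (ht : t ∈ Icc (0 : ℝ) 1) (n : ℕ) :
    MeasurableSet ((D n).Ω t) :=
  ((D n).isOpen_Ω t ht).measurableSet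

theorem iUnion_ae_eq (h : IsAdaptedSpray ψ κ σ U D) : (⋃ n, (D n).Ω 0 : Set _) =ᵐ[volume] U :=
  ae_eq_set.mpr ⟨by rw [sdiff_eq_empty.mpr h.iUnion_subset, measure_empty], h.volume_sdiff⟩

theorem pairwise_disjoint_Ω (h : IsAdaptedSpray ψ κ σ U D) (hψ : ∀ x, ∃ y, IsSubgradient ψ x y)
    (hκ : 0 < κ) {t : ℝ} (ht : t ∈ Icc (0 : ℝ) 1) :
    Pairwise fun m n => Disjoint ((D m).Ω t) ((D n).Ω t) :=
  fun m n hmn => (h.isAdapted m).disjoint_Ω (h.isAdapted n) hψ hκ (h.pairwise_disjoint hmn) ht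

theorem pairwise_disjoint_Q (h : IsAdaptedSpray ψ κ σ U D) (hψ : ∀ x, ∃ y, IsSubgradient ψ x y)
    (hκ : 0 < κ) : Pairwise fun m n => Disjoint (D m).Q (D n).Q :=
  fun _ _ hmn => disjoint_Q fun _ ht => h.pairwise_disjoint_Ω hψ hκ ht hmn

theorem volume_iUnion_Ω (h : IsAdaptedSpray ψ κ σ U D) (hψ : ∀ x, ∃ y, IsSubgradient ψ x y)
    (hκ : 0 < κ) {t : ℝ} (ht : t ∈ Icc (0 : ℝ) 1) : volume (⋃ n, (D n).Ω t) = volume U := by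
  rw [measure_iUnion (h.pairwise_disjoint_Ω hψ hκ ht) (measurableSet_Ω D ht),
    ← measure_congr h.iUnion_ae_eq, measure_iUnion h.pairwise_disjoint
      (measurableSet_Ω D (left_mem_Icc.mpr zero_le_one))]
  exact tsum_congr fun n => (h.isAdapted n).volume_eq t ht

theorem exists_coupling (h : IsAdaptedSpray ψ κ σ U D) (hψ : ∀ x, ∃ y, IsSubgradient ψ x y)
    (hκ : 0 < κ) (hT : Measurable T) (hTψ : ∀ᵐ x, IsSubgradient ψ x (T x)) :
    ∃ π : Measure (EuclideanSpace ℝ (Fin d) × EuclideanSpace ℝ (Fin d)),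
      π.map Prod.fst = (volume.restrict U).map T ∧
        π.map Prod.snd = volume.restrict (⋃ n, (D n).Ω 1) ∧ ∀ᵐ q ∂π, dist q.1 q.2 ≤ σ := by
  rw [← Measure.restrict_congr_set h.iUnion_ae_eq]
  exact exists_coupling_iUnion (measurableSet_Ω D (left_mem_Icc.mpr zero_le_one))
    (measurableSet_Ω D (right_mem_Icc.mpr zero_le_one)) h.pairwise_disjoint
    (h.pairwise_disjoint_Ω hψ hκ (right_mem_Icc.mpr zero_le_one)) hT
    fun n => (h.isAdapted n).exists_coupling hT hTψ

theorem tsum_action_le (h : IsAdaptedSpray ψ κ σ U D) (hσ : 0 ≤ σ) {r : ℝ}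
    (hT : ∀ᵐ x ∂volume.restrict U, IsSubgradient ψ x (T x) ∧ ‖x - T x‖ ≤ r) :
    ∑' n, action (D n) ≤ (∫⁻ x in U, ENNReal.ofReal (‖x - T x‖ ^ 2)) +
      ENNReal.ofReal (σ * (2 * r + σ)) * volume U :=
  calc ∑' n, action (D n) ≤ ∑' n, ∫⁻ x in (D n).Ω 0,
          (ENNReal.ofReal (‖x - T x‖ ^ 2) + ENNReal.ofReal (σ * (2 * r + σ))) :=
        ENNReal.tsum_le_tsum fun n => (h.isAdapted n).action_le hσ
          (ae_restrict_of_ae_restrict_of_subset ((subset_iUnion _ n).trans h.iUnion_subset) hT)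
    _ = ∫⁻ x in U, (ENNReal.ofReal (‖x - T x‖ ^ 2) + ENNReal.ofReal (σ * (2 * r + σ))) := by
        rw [← lintegral_iUnion (measurableSet_Ω D (left_mem_Icc.mpr zero_le_one))
          h.pairwise_disjoint, Measure.restrict_congr_set h.iUnion_ae_eq]
    _ = (∫⁻ x in U, ENNReal.ofReal (‖x - T x‖ ^ 2)) +
          ENNReal.ofReal (σ * (2 * r + σ)) * volume U := by
        rw [lintegral_add_right _ measurable_const, setLIntegral_const]

end IsAdaptedSpray

theorem exists_pos_tolerance {r V ε : ℝ} (hε : 0 < ε) :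
    ∃ σ > 0, σ < ε ∧ σ * (2 * r + σ) * V ≤ ε := by
  have hcont : Tendsto (fun σ : ℝ => σ * (2 * r + σ) * V) (𝓝[>] 0) (𝓝 0) :=
    ((by fun_prop : Continuous _).tendsto' 0 0 (by ring)).mono_left nhdsWithin_le_nhds
  have hlt : ∀ᶠ σ in 𝓝[>] (0 : ℝ), σ < ε := nhdsWithin_le_nhds (gt_mem_nhds hε)
  obtain ⟨σ, hσ, hσε, hσ₀⟩ :=
    ((hcont.eventually_le_const hε).and (hlt.and self_mem_nhdsWithin)).exists
  exact ⟨σ, hσ₀, hσε, hσ⟩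

/-- The transport data from which a spray is built: a finite convex `ψ`, given through its
subgradients, whose gradient transports `μ` to `ν` optimally and displaces `μ`-almost every point
by at most `r`. -/
structure IsTransportPotential (μ ν : Measure (EuclideanSpace ℝ (Fin d)))
    (ψ : EuclideanSpace ℝ (Fin d) → ℝ) (r : ℝ) : Prop where
  exists_isSubgradient : ∀ x, ∃ y, IsSubgradient ψ x y
  ae_isSubgradient : ∀ᵐ x, IsSubgradient ψ x (gradient ψ x)
  map_gradient : μ.map (gradient ψ) = ν
  lintegral_le_W2sq : ∫⁻ x, ENNReal.ofReal (‖x - gradient ψ x‖ ^ 2) ∂μ ≤ W2sq μ ν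
  ae_norm_sub_le : ∀ᵐ x ∂μ, ‖x - gradient ψ x‖ ≤ r

theorem exists_isTransportPotential {μ ν : Measure (EuclideanSpace ℝ (Fin d))}
    [IsFiniteMeasure μ] [IsFiniteMeasure ν] (hμ : ∃ R, ∀ᵐ x ∂μ, ‖x‖ ≤ R)
    (hν : ∃ R, ∀ᵐ y ∂ν, ‖y‖ ≤ R) (hmass : μ univ = ν univ) (hac : μ ≪ volume) :
    ∃ ψ r, IsTransportPotential μ ν ψ r := by
  obtain ⟨R, hR, hμ, hν⟩ : ∃ R, 0 ≤ R ∧ (∀ᵐ x ∂μ, ‖x‖ ≤ R) ∧ ∀ᵐ y ∂ν, ‖y‖ ≤ R := by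
    obtain ⟨R₀, hμ⟩ := hμ
    obtain ⟨R₁, hν⟩ := hν
    exact ⟨max 0 (max R₀ R₁), le_max_left _ _,
      hμ.mono fun x hx => by simp only [le_max_iff, hx, true_or, or_true],
      hν.mono fun y hy => by simp only [le_max_iff, hy, or_true]⟩
  have : Nonempty (closedBall (0 : EuclideanSpace ℝ (Fin d)) R) :=
    (nonempty_closedBall.mpr hR).to_subtype
  have : CompactSpace (closedBall (0 : EuclideanSpace ℝ (Fin d)) R) :=
    isCompact_iff_compactSpace.mp (isCompact_closedBall 0 R)
  obtain ⟨ψ, hψ, hgrad, hmap, hopt⟩ := exists_brenier_potential (K := closedBall 0 R)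
    (mem_ae_iff.mp (hμ.mono fun _ => mem_closedBall_zero_iff.mpr))
    (mem_ae_iff.mp (hν.mono fun _ => mem_closedBall_zero_iff.mpr)) hmass hac
  refine ⟨ψ, 2 * R, hψ, hgrad, hmap, le_sInf ?_, ?_⟩
  · rintro _ ⟨π, hfst, hsnd, rfl⟩
    exact hopt π hfst hsnd
  · rw [← hmap] at hν
    filter_upwards [hμ, ae_of_ae_map (measurable_gradient ψ).aemeasurable hν] with x hx hy
    linarith only [norm_sub_le x (gradient ψ x), hx, hy]

theorem IsTransportPotential.exists_isAdaptedSpray {U : Set (EuclideanSpace ℝ (Fin d))}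
    {ν : Measure (EuclideanSpace ℝ (Fin d))} {r : ℝ}
    (h : IsTransportPotential (volume.restrict U) ν ψ r) (hU : IsOpen U)
    (hbdd : Bornology.IsBounded U) (hν : ν ≤ volume) (hσ : 0 < σ) :
    ∃ κ > 0, ∃ D : ℕ → EulerDroplet d, IsAdaptedSpray ψ κ σ U D := by
  obtain ⟨R, hR, hUR⟩ := hbdd.exists_pos_norm_le
  have hhess := ae_hasExpansiveHessianAt h.exists_isSubgradient hU
    (measurable_gradient ψ).aemeasurable h.ae_isSubgradient (h.map_gradient.trans_le hν)
  have hκ : 0 < min 1 (σ / 4 / R) := by positivity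
  refine ⟨_, hκ, EulerSpray.exists_isAdaptedSpray hU hbdd.measure_lt_top.ne hhess hκ
    (min_le_left _ _) hσ fun x hx => ?_⟩
  calc min 1 (σ / 4 / R) * ‖x‖ ≤ σ / 4 / R * R := by
        gcongr
        exacts [min_le_right _ _, hUR x hx]
    _ = σ / 4 := div_mul_cancel₀ _ hR.ne'

end Connection

end EulerSpray

theorem euler_spray_approximate_connection_general
    (d : ℕ) (Ω₀ : Set (EuclideanSpace ℝ (Fin d))) (ν : Measure (EuclideanSpace ℝ (Fin d)))
    (hopen : IsOpen Ω₀) (hbdd : Bornology.IsBounded Ω₀) (hν : ν ≤ volume)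
    (hνbdd : ∃ R, ∀ᵐ y ∂ν, ‖y‖ ≤ R) (hmass : volume Ω₀ = ν univ) (ε : ℝ) (hε : 0 < ε) :
    ∃ D : ℕ → EulerDroplet d,
      (Pairwise fun m n => Disjoint (D m).Q (D n).Q) ∧
      (Pairwise fun m n => Disjoint ((D m).Ω 0) ((D n).Ω 0)) ∧
      (⋃ n, (D n).Ω 0) ⊆ Ω₀ ∧
      volume (Ω₀ \ ⋃ n, (D n).Ω 0) = 0 ∧
      volume (⋃ n, (D n).Ω 1) = ν univ ∧
      (∃ π : Measure (EuclideanSpace ℝ (Fin d) × EuclideanSpace ℝ (Fin d)),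
        π.map Prod.fst = ν ∧
        π.map Prod.snd = volume.restrict (⋃ n, (D n).Ω 1) ∧
        ∀ᵐ q ∂π, dist q.1 q.2 < ε) ∧
      (∑' n, ∫⁻ t in Icc (0 : ℝ) 1, ∫⁻ x in (D n).Ω t,
          ENNReal.ofReal (‖gradient (fun y => (D n).φ y t) x‖ ^ 2)) ≤
        W2sq (volume.restrict Ω₀) ν + ENNReal.ofReal ε := by
  have hfin : volume Ω₀ ≠ ⊤ := hbdd.measure_lt_top.ne
  have : IsFiniteMeasure (volume.restrict Ω₀) := isFiniteMeasure_restrict.mpr hfin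
  have : IsFiniteMeasure ν := ⟨hmass ▸ hfin.lt_top⟩
  obtain ⟨R, hR⟩ := hbdd.exists_norm_le
  obtain ⟨ψ, r, hψ⟩ := EulerSpray.exists_isTransportPotential
    ⟨R, ae_restrict_of_forall_mem hopen.measurableSet hR⟩ hνbdd
    (Measure.restrict_apply_univ Ω₀ ▸ hmass) Measure.restrict_le_self.absolutelyContinuous
  obtain ⟨σ, hσ, hσε, hsmall⟩ :=
    EulerSpray.exists_pos_tolerance (r := r) (V := (volume Ω₀).toReal) hε
  obtain ⟨κ, hκ, D, hD⟩ := hψ.exists_isAdaptedSpray hopen hbdd hν hσ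
  obtain ⟨π, hfst, hsnd, hdist⟩ := hD.exists_coupling hψ.exists_isSubgradient hκ
    (EulerSpray.measurable_gradient ψ) hψ.ae_isSubgradient
  refine ⟨D, hD.pairwise_disjoint_Q hψ.exists_isSubgradient hκ, hD.pairwise_disjoint,
    hD.iUnion_subset, hD.volume_sdiff,
    (hD.volume_iUnion_Ω hψ.exists_isSubgradient hκ (right_mem_Icc.mpr zero_le_one)).trans hmass,
    ⟨π, hfst.trans hψ.map_gradient, hsnd, hdist.mono fun q hq => hq.trans_lt hσε⟩, ?_⟩
  refine (hD.tsum_action_le hσ.le ((ae_restrict_of_ae hψ.ae_isSubgradient).and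
    hψ.ae_norm_sub_le)).trans (add_le_add hψ.lintegral_le_W2sq ?_)
  rw [← ENNReal.ofReal_toReal hfin, ← ENNReal.ofReal_mul' ENNReal.toReal_nonneg]
  exact ENNReal.ofReal_le_ofReal hsmall

/-- **Theorem 1.1.** For any bounded open sets `Ω₀, Ω₁ ⊆ ℝ^d` of equal
positive volume and any `ε > 0`, there is an Euler spray — a countable family of smooth
Euler droplet solutions with pairwise disjoint space-time domains — transporting `Ω₀`
(up to a null set) to a target `Ω₁^ε = ⋃ₙ Ωⁿ₁` with `d_∞(1_{Ω₁}, 1_{Ω₁^ε}) < ε`, whose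
total action is at most `d_W(1_{Ω₀} dx, 1_{Ω₁} dx)² + ε`. -/
theorem euler_spray_approximate_connection
    (d : ℕ) (Ω₀ Ω₁ : Set (EuclideanSpace ℝ (Fin d)))
    (h₀open : IsOpen Ω₀) (h₁open : IsOpen Ω₁)
    (h₀bdd : Bornology.IsBounded Ω₀) (h₁bdd : Bornology.IsBounded Ω₁)
    (hvol : volume Ω₀ = volume Ω₁) (hpos : 0 < volume Ω₀)
    (ε : ℝ) (hε : 0 < ε) :
    ∃ D : ℕ → EulerDroplet d,
      -- an Euler spray: the space-time domains are pairwise disjoint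
      (Pairwise fun m n => Disjoint (D m).Q (D n).Q) ∧
      -- (i) the initial droplets decompose Ω₀ up to a null set
      (Pairwise fun m n => Disjoint ((D m).Ω 0) ((D n).Ω 0)) ∧
      (⋃ n, (D n).Ω 0) ⊆ Ω₀ ∧
      volume (Ω₀ \ ⋃ n, (D n).Ω 0) = 0 ∧
      -- (ii) the target Ω₁^ε = ⋃ₙ Ωⁿ₁ has the right volume and is ε-close to Ω₁ in d_∞
      volume (⋃ n, (D n).Ω 1) = volume Ω₁ ∧
      (∃ π : Measure (EuclideanSpace ℝ (Fin d) × EuclideanSpace ℝ (Fin d)),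
        π.map Prod.fst = volume.restrict Ω₁ ∧
        π.map Prod.snd = volume.restrict (⋃ n, (D n).Ω 1) ∧
        ∀ᵐ q ∂π, dist q.1 q.2 < ε) ∧
      -- (iii) total action bound
      (∑' n, ∫⁻ t in Icc (0:ℝ) 1, ∫⁻ x in (D n).Ω t,
          ENNReal.ofReal (‖gradient (fun y => (D n).φ y t) x‖ ^ 2)) ≤
        W2sq (volume.restrict Ω₀) (volume.restrict Ω₁) + ENNReal.ofReal ε :=
  (Measure.restrict_apply_univ Ω₁) ▸ euler_spray_approximate_connection_general d Ω₀
    (volume.restrict Ω₁) h₀open h₀bdd Measure.restrict_le_self (by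
      obtain ⟨R, hR⟩ := h₁bdd.exists_norm_le
      exact ⟨R, ae_restrict_of_forall_mem h₁open.measurableSet hR⟩)
    (by rw [hvol, Measure.restrict_apply_univ]) ε hε
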